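/- For the exponential random graph model with parameter β in the subcritical region, let H be a fixed finite simple graph with v vertices and e ≥ 1 edges, and define W_H = (|Hom(H, G_Y)| − E|Hom(H, G_Y)|)/(2 n^{v−2} e p^{e−1} σ_n). Then there exists a constant C > 0, depending only on β₁,…,β_k, H₁,…,H_k and H, such that for all n ≥ 2, d_Wass(W_H, Z) ≤ C n^{−1/4}, where Z is a standard normal random variable. -/

import Mathlib

open MeasureTheory ProbabilityTheory Real Finset

noncomputable section

/-- The index set `I = {(i,j) : 1 ≤ i < j ≤ n}` of potential edges on `n` labeled vertices. -/
def EdgeIdx (n : ℕ) : Type := {p : Fin n × Fin n // p.1 < p.2}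

instance (n : ℕ) : Fintype (EdgeIdx n) := by unfold EdgeIdx; infer_instance
instance (n : ℕ) : DecidableEq (EdgeIdx n) := by unfold EdgeIdx; infer_instance

/-- Adjacency of the graph `G_y` encoded by the edge-indicator vector `y`. -/
def yAdj {n : ℕ} (y : EdgeIdx n → Bool) (a b : Fin n) : Bool :=
  if h : a < b then y ⟨(a, b), h⟩ else if h' : b < a then y ⟨(b, a), h'⟩ else false

/-- The number of edges of a graph `H`. -/
def eCount {V : Type} [Fintype V] (H : SimpleGraph V) : ℕ :=
  Nat.card H.edgeSet

/-- `|Hom(H, G_y)|`: the number of injective maps from the vertex set of `H` to `Fin n`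
mapping every edge of `H` to an edge of `G_y`. -/
def homCount {V : Type} [Fintype V] {n : ℕ} (H : SimpleGraph V) (y : EdgeIdx n → Bool) : ℕ :=
  Nat.card {φ : V → Fin n //
    Function.Injective φ ∧ ∀ a b, H.Adj a b → yAdj y (φ a) (φ b) = true}

/-- `|Hom(H, G_y, s)|`: the number of pairs `(φ, (u, v))` where `φ` is injective, `(u, v)` is
an ordered pair of adjacent vertices of `H` with `{φ u, φ v} = s`, and every edge of `H` other
than `{u, v}` is mapped by `φ` to an edge of `G_y` (regardless of whether the edge `s` is
present in `G_y`). -/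
def homCountAt {V : Type} [Fintype V] {n : ℕ} (H : SimpleGraph V) (y : EdgeIdx n → Bool)
    (s : EdgeIdx n) : ℕ :=
  Nat.card {t : (V → Fin n) × V × V //
    Function.Injective t.1 ∧ H.Adj t.2.1 t.2.2 ∧
    Sym2.mk (t.1 t.2.1, t.1 t.2.2) = Sym2.mk (s.1.1, s.1.2) ∧
    ∀ a b, H.Adj a b → Sym2.mk (a, b) ≠ Sym2.mk (t.2.1, t.2.2) →
      yAdj y (t.1 a) (t.1 b) = true}

section ERGM

variable {k : ℕ} (β : Fin (k + 1) → ℝ) (v : Fin (k + 1) → ℕ)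
  (H : ∀ j : Fin (k + 1), SimpleGraph (Fin (v j)))

/-- The (unnormalized) ERGM weight `exp (Σ_j β_j n^{2−v_j} |Hom(H_j, G_y)|)`. -/
def ergmWeight (n : ℕ) (y : EdgeIdx n → Bool) : ℝ :=
  Real.exp (∑ j, β j * (n : ℝ) ^ ((2 : ℤ) - (v j : ℤ)) * (homCount (H j) y : ℝ))

/-- The ERGM normalizing constant. -/
def ergmZ (n : ℕ) : ℝ := ∑ y : EdgeIdx n → Bool, ergmWeight β v H n y

/-- The ERGM probability of the configuration `y`. -/
def ergmProb (n : ℕ) (y : EdgeIdx n → Bool) : ℝ := ergmWeight β v H n y / ergmZ β v H n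

/-- Expectation of `G(Y)` under the ERGM. -/
def ergmExp (n : ℕ) (G : (EdgeIdx n → Bool) → ℝ) : ℝ :=
  ∑ y : EdgeIdx n → Bool, ergmProb β v H n y * G y

/-- Variance of `G(Y)` under the ERGM. -/
def ergmVar (n : ℕ) (G : (EdgeIdx n → Bool) → ℝ) : ℝ :=
  ergmExp β v H n (fun y => (G y - ergmExp β v H n G) ^ 2)

/-- The total number of edges of `G_y`. -/
def edgeSum {n : ℕ} (y : EdgeIdx n → Bool) : ℝ :=
  ∑ s : EdgeIdx n, (if y s then (1 : ℝ) else 0)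

/-- `Φ_β(a) = Σ_j β_j e_j a^{e_j − 1}`. -/
def PhiFn : ℝ → ℝ := fun a =>
  ∑ j, β j * (eCount (H j) : ℝ) * a ^ (eCount (H j) - 1)

/-- `φ_β(a) = e^{2Φ_β(a)} / (e^{2Φ_β(a)} + 1)`. -/
def phiFn : ℝ → ℝ := fun a =>
  Real.exp (2 * PhiFn β v H a) / (Real.exp (2 * PhiFn β v H a) + 1)

/-- `σ_n² = N p (1−p) / (1 − 2 p (1−p) Φ_β'(p))` with `N = n(n−1)/2`. -/
def sigmaSq (p : ℝ) (n : ℕ) : ℝ :=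
  ((n : ℝ) * ((n : ℝ) - 1) / 2) * p * (1 - p) /
    (1 - 2 * p * (1 - p) * deriv (PhiFn β v H) p)

/-- `μ_n = E Σ_{s ∈ I} Y_s`. -/
def muN (n : ℕ) : ℝ := ergmExp β v H n (edgeSum)

/-- The standardized number of edges `W_n`. -/
def Wn (p : ℝ) (n : ℕ) (y : EdgeIdx n → Bool) : ℝ :=
  (edgeSum y - muN β v H n) / Real.sqrt (sigmaSq β v H p n)

end ERGM

/-!
Let `σ_s(y)` be the conditional probability of the edge `s` given the others, `S` the number of
edges and `ρ = φ_β'(p)`. The ERGM in the subcritical region is close to the product measure with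
edge density `p`: outside an event of small probability each `σ_s` is within `O(n ^ (-1/4))` of
`p`, because the rooted subgraph counts are then close to their mean-field values. On that event
both `∑ s, σ_s` and the rescaled count of `H` are affine in `S`, with slopes `ρ` and
`κ = 2 e p ^ (e - 1)`, up to observables whose discrete derivatives are `O(n ^ (-1/4))`. Since the
`β_j` with `e_j ≥ 2` are nonnegative, the measure is log-supermodular, so the FKG inequality
bounds the variance of such an observable by `O(n ^ (-1/2)) * Var S`, and `Var S = O(n ^ 2)`. It
remains to treat `S`: as `E[Y_s - σ_s | Y_t, t ≠ s] = 0`, the exchange identity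
`E[(S - ∑ s, σ_s) f(S)] = E[(∑ s, (1 - σ_s) Y_s) (f(S) - f(S - 1))]` holds, and with
`∑ s, σ_s ≈ ρ S` it is an approximate Stein equation for `S / σ_n`.
-/

/-! ### Conditionally centred sums on the discrete cube -/

/-- The real-valued indicator of a Boolean. -/
def bval (b : Bool) : ℝ := if b then 1 else 0

@[simp] lemma bval_true : bval true = 1 := rfl

@[simp] lemma bval_false : bval false = 0 := rfl

lemma bval_nonneg (b : Bool) : 0 ≤ bval b := by cases b <;> simp

lemma bval_le_one (b : Bool) : bval b ≤ 1 := by cases b <;> simp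

section Markov

variable {Ω : Type*} [Finite Ω] [MeasurableSpace Ω] [MeasurableSingletonClass Ω]
  {μ : Measure Ω}

lemma sq_integral_le_integral_sq [IsProbabilityMeasure μ] (f : Ω → ℝ) :
    (∫ x, f x ∂μ) ^ 2 ≤ ∫ x, f x ^ 2 ∂μ := by
  have hvar := variance_nonneg f μ
  rw [variance_eq_sub .of_discrete] at hvar
  exact sub_nonneg.1 hvar

lemma integral_abs_le_of_integral_sq_le [IsProbabilityMeasure μ] {f : Ω → ℝ} {a : ℝ}
    (ha : 0 ≤ a) (h : ∫ x, f x ^ 2 ∂μ ≤ a ^ 2) : ∫ x, |f x| ∂μ ≤ a := by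
  refine le_of_sq_le_sq ((sq_integral_le_integral_sq _).trans ?_) ha
  simpa using h

lemma measureReal_lt_abs_le_integral_pow_div [IsFiniteMeasure μ] (f : Ω → ℝ) {a : ℝ} (ha : 0 < a)
    (m : ℕ) : μ.real {x | a < |f x|} ≤ (∫ x, f x ^ (2 * m) ∂μ) / a ^ (2 * m) := by
  rw [le_div_iff₀' (by positivity)]
  have hsub : {x | a < |f x|} ⊆ {x | a ^ (2 * m) ≤ f x ^ (2 * m)} := fun x hx => by
    rw [Set.mem_ofPred_eq, ← (even_two_mul m).pow_abs (f x)]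
    exact pow_le_pow_left₀ ha.le (le_of_lt hx) _
  calc a ^ (2 * m) * μ.real {x | a < |f x|}
      ≤ a ^ (2 * m) * μ.real {x | a ^ (2 * m) ≤ f x ^ (2 * m)} := by gcongr; finiteness
    _ ≤ ∫ x, f x ^ (2 * m) ∂μ := mul_meas_ge_le_integral_of_nonneg
        (.of_forall fun x => (even_two_mul m).pow_nonneg _) .of_finite _

end Markov

section TrueCount

variable {I : Type*} [Fintype I]

/-- The number of coordinates of `y` equal to `true`, as a real number. -/
def trueCount (y : I → Bool) : ℝ := ∑ s, bval (y s)

lemma trueCount_nonneg (y : I → Bool) : 0 ≤ trueCount y := sum_nonneg fun s _ => bval_nonneg (y s)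

lemma trueCount_le_card (y : I → Bool) : trueCount y ≤ Fintype.card I :=
  (sum_le_sum fun s _ => bval_le_one (y s)).trans (by simp)

variable [DecidableEq I]

lemma sum_mul_bval_update_sub (c : I → ℝ) (y : I → Bool) (t : I) :
    ∑ s, c s * bval (Function.update y t true s) - ∑ s, c s * bval (Function.update y t false s)
      = c t := by
  rw [← sum_sub_distrib, sum_eq_single t]
  · simp
  · intro s _ hs
    simp [Function.update_of_ne hs]
  · simp

lemma trueCount_update_sub (y : I → Bool) (t : I) :
    trueCount (Function.update y t true) - trueCount (Function.update y t false) = 1 := by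
  simpa [trueCount] using sum_mul_bval_update_sub 1 y t

lemma trueCount_update_true {y : I → Bool} {t : I} (hyt : y t = false) :
    trueCount (Function.update y t true) = trueCount y + 1 := by
  have := trueCount_update_sub y t
  rw [← hyt, Function.update_eq_self] at this
  linarith

end TrueCount

section Cube

variable {I : Type*} {μ : Measure (I → Bool)} {σ : I → (I → Bool) → ℝ}

/-- `σ t` is the conditional probability under `μ` that the coordinate `t` is `true` given all
the other coordinates; the defining property is tested against functions of these. -/
structure IsCondProb (μ : Measure (I → Bool)) (σ : I → (I → Bool) → ℝ) : Prop where
  mem_Icc : ∀ t y, σ t y ∈ Set.Icc 0 1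
  integral_mul_eq_zero : ∀ t (h : (I → Bool) → ℝ), DependsOn h {t}ᶜ →
    ∫ y, (bval (y t) - σ t y) * h y ∂μ = 0

lemma dependsOn_update [DecidableEq I] (f : (I → Bool) → ℝ) (t : I) (b : Bool) :
    DependsOn (fun y => f (Function.update y t b)) {t}ᶜ := by
  intro y z hyz
  refine congrArg f (funext fun s => ?_)
  rcases eq_or_ne s t with rfl | hs
  · simp
  · simpa [hs] using hyz s hs

namespace IsCondProb

lemma abs_bval_sub_le_one (M : IsCondProb μ σ) (t : I) (y : I → Bool) :
    |bval (y t) - σ t y| ≤ 1 := by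
  obtain ⟨h0, h1⟩ := M.mem_Icc t y
  rw [abs_le]
  constructor <;> linarith [bval_nonneg (y t), bval_le_one (y t)]

variable [Finite I] [DecidableEq I] [IsFiniteMeasure μ]

lemma integral_mul_eq_integral_mul_sub (M : IsCondProb μ σ) (t : I) {w : (I → Bool) → ℝ}
    (hw : DependsOn w {t}ᶜ) (h : (I → Bool) → ℝ) :
    ∫ y, w y * (bval (y t) - σ t y) * h y ∂μ =
      ∫ y, w y * (bval (y t) - σ t y) * (h y - h (Function.update y t false)) ∂μ := by
  have hzero := M.integral_mul_eq_zero t (fun y => w y * h (Function.update y t false))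
    fun y z hyz => congrArg₂ (· * ·) (hw hyz) (dependsOn_update h t false hyz)
  rw [← sub_zero (∫ y, _ ∂μ), ← hzero, ← integral_sub .of_finite .of_finite]
  exact integral_congr_ae (.of_forall fun y => by ring)

lemma integral_sum_mul_le (M : IsCondProb μ σ) {J : Type*} (S : Finset J) (τ : J → I)
    {w : J → (I → Bool) → ℝ} (hw1 : ∀ i ∈ S, ∀ y, |w i y| ≤ 1)
    (hw : ∀ i ∈ S, DependsOn (w i) {τ i}ᶜ) (h : (I → Bool) → ℝ) {A : ℝ}
    (hA : ∀ t, ∫ y, |h y - h (Function.update y t false)| ∂μ ≤ A) :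
    ∫ y, (∑ i ∈ S, w i y * (bval (y (τ i)) - σ (τ i) y)) * h y ∂μ ≤ #S * A := by
  simp only [sum_mul]
  rw [integral_finsetSum _ fun _ _ => .of_finite, ← nsmul_eq_mul]
  refine sum_le_card_nsmul _ _ _ fun i hi => ?_
  rw [M.integral_mul_eq_integral_mul_sub (τ i) (hw i hi)]
  refine le_trans (integral_mono .of_finite .of_finite fun y => ?_) (hA (τ i))
  refine (le_abs_self _).trans ?_
  rw [abs_mul, abs_mul]
  exact mul_le_of_le_one_left (abs_nonneg _)
    (mul_le_one₀ (hw1 i hi y) (abs_nonneg _) (M.abs_bval_sub_le_one (τ i) y))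

end IsCondProb

lemma abs_odd_pow_sub_le {a b D : ℝ} (h : |a - b| ≤ D) (m : ℕ) :
    |a ^ (2 * m + 1) - b ^ (2 * m + 1)| ≤
      (2 * m + 1) * 2 ^ (2 * m) * D * (a ^ (2 * m) + D ^ (2 * m)) := by
  have hD : 0 ≤ D := (abs_nonneg _).trans h
  have hmax : max |a| |b| ≤ |a| + D := by
    have hba := abs_sub_abs_le_abs_sub b a
    rw [abs_sub_comm] at hba
    exact max_le (by linarith) (by linarith)
  have hadd : (|a| + D) ^ (2 * m) ≤ 2 ^ (2 * m) * (a ^ (2 * m) + D ^ (2 * m)) := by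
    have hle := add_pow_le (abs_nonneg a) hD (2 * m)
    rw [(even_two_mul m).pow_abs] at hle
    have := (even_two_mul m).pow_nonneg a
    exact hle.trans (mul_le_mul_of_nonneg_right
      (pow_le_pow_right₀ (by norm_num) (Nat.sub_le _ _)) (by positivity))
  calc |a ^ (2 * m + 1) - b ^ (2 * m + 1)|
      ≤ |a - b| * ((2 * m + 1 : ℕ) : ℝ) * max |a| |b| ^ (2 * m) := by
        simpa using abs_pow_sub_pow_le (a := a) (b := b) (n := 2 * m + 1)
    _ ≤ D * ((2 * m + 1 : ℕ) : ℝ) * (2 ^ (2 * m) * (a ^ (2 * m) + D ^ (2 * m))) := by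
        gcongr
        exact (pow_le_pow_left₀ (by positivity) hmax _).trans hadd
    _ = _ := by push_cast; ring

/-- Constants in the moment bounds for sums of conditionally centred terms. -/
def noiseConst (C : ℝ) : ℕ → ℝ
  | 0 => 1
  | m + 1 => C * ((2 * m + 1) * 2 ^ (2 * m)) * (noiseConst C m + 1)

lemma noiseConst_nonneg {C : ℝ} (hC : 0 ≤ C) (m : ℕ) : 0 ≤ noiseConst C m := by
  induction m with
  | zero => simp [noiseConst]
  | succ m ih => simp only [noiseConst]; positivity

namespace IsCondProb

variable [Finite I] [DecidableEq I] [IsProbabilityMeasure μ] {J : Type*} {S : Finset J}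
  {κ C D : ℝ} {τ : J → I} {w : J → (I → Bool) → ℝ} {G : (I → Bool) → ℝ}

lemma integral_noise_pow_succ_le (M : IsCondProb μ σ) (hκ : 0 ≤ κ) (hD : 0 ≤ D)
    (hC : κ * #S ≤ C) (hw1 : ∀ i ∈ S, ∀ y, |w i y| ≤ 1) (hw : ∀ i ∈ S, DependsOn (w i) {τ i}ᶜ)
    (hG : ∀ y, G y = κ * ∑ i ∈ S, w i y * (bval (y (τ i)) - σ (τ i) y))
    (hGD : ∀ t y, |G y - G (Function.update y t false)| ≤ D) (m : ℕ) :
    ∫ y, G y ^ (2 * (m + 1)) ∂μ ≤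
      C * ((2 * m + 1) * 2 ^ (2 * m) * D * (∫ y, G y ^ (2 * m) ∂μ + D ^ (2 * m))) := by
  set A : ℝ := (2 * m + 1) * 2 ^ (2 * m) * D * (∫ y, G y ^ (2 * m) ∂μ + D ^ (2 * m)) with hA
  have hA0 : 0 ≤ A := by
    have : 0 ≤ ∫ y, G y ^ (2 * m) ∂μ := integral_nonneg fun y => (even_two_mul m).pow_nonneg _
    positivity
  have hinfl : ∀ t, ∫ y, |G y ^ (2 * m + 1) - G (Function.update y t false) ^ (2 * m + 1)| ∂μ
      ≤ A := fun t => by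
    have hAint : A = ∫ y, (2 * m + 1) * 2 ^ (2 * m) * D * (G y ^ (2 * m) + D ^ (2 * m)) ∂μ := by
      rw [integral_const_mul, integral_add .of_finite .of_finite]
      simp [hA]
    rw [hAint]
    exact integral_mono .of_finite .of_finite fun y => abs_odd_pow_sub_le (hGD t y) m
  calc ∫ y, G y ^ (2 * (m + 1)) ∂μ
      = κ * ∫ y, (∑ i ∈ S, w i y * (bval (y (τ i)) - σ (τ i) y)) * G y ^ (2 * m + 1) ∂μ := by
        rw [← integral_const_mul]
        refine integral_congr_ae (.of_forall fun y => ?_)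
        simp only
        rw [← mul_assoc, ← hG]
        ring
    _ ≤ κ * (#S * A) := mul_le_mul_of_nonneg_left (M.integral_sum_mul_le S τ hw1 hw _ hinfl) hκ
    _ = κ * #S * A := by ring
    _ ≤ C * A := mul_le_mul_of_nonneg_right hC hA0

lemma integral_noise_pow_le (M : IsCondProb μ σ) (hκ : 0 ≤ κ) (hD : 0 ≤ D) (hD1 : D ≤ 1)
    (hC : κ * #S ≤ C) (hw1 : ∀ i ∈ S, ∀ y, |w i y| ≤ 1) (hw : ∀ i ∈ S, DependsOn (w i) {τ i}ᶜ)
    (hG : ∀ y, G y = κ * ∑ i ∈ S, w i y * (bval (y (τ i)) - σ (τ i) y))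
    (hGD : ∀ t y, |G y - G (Function.update y t false)| ≤ D) (m : ℕ) :
    ∫ y, G y ^ (2 * m) ∂μ ≤ noiseConst C m * D ^ m := by
  have hC0 : 0 ≤ C := le_trans (by positivity) hC
  induction m with
  | zero => simp [noiseConst]
  | succ m ih =>
    have hDm : D ^ (2 * m) ≤ D ^ m := pow_le_pow_of_le_one hD hD1 (by omega)
    calc ∫ y, G y ^ (2 * (m + 1)) ∂μ
        ≤ C * ((2 * m + 1) * 2 ^ (2 * m) * D * (∫ y, G y ^ (2 * m) ∂μ + D ^ (2 * m))) :=
          M.integral_noise_pow_succ_le hκ hD hC hw1 hw hG hGD m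
      _ ≤ C * ((2 * m + 1) * 2 ^ (2 * m) * D * (noiseConst C m * D ^ m + D ^ m)) := by gcongr
      _ = noiseConst C (m + 1) * D ^ (m + 1) := by simp only [noiseConst]; ring

end IsCondProb

end Cube

/-! ### Positive correlation and comparison of variances -/

lemma abs_integral_sub_integral_le_of_eqOn {Ω : Type*} [Finite Ω] [MeasurableSpace Ω]
    [MeasurableSingletonClass Ω] {μ : Measure Ω} [IsFiniteMeasure μ] {Γ : Set Ω} {f g : Ω → ℝ}
    {B : ℝ} (hf : ∀ x, f x ∈ Set.Icc 0 B) (hg : ∀ x, g x ∈ Set.Icc 0 B) (hfg : Set.EqOn f g Γ) :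
    |∫ x, f x ∂μ - ∫ x, g x ∂μ| ≤ B * μ.real Γᶜ := by
  rw [← integral_sub .of_finite .of_finite, mul_comm, ← smul_eq_mul,
    ← integral_indicator_const _ (Set.toFinite _).measurableSet]
  refine abs_integral_le_integral_abs.trans (integral_mono .of_finite .of_finite fun x => ?_)
  by_cases hx : x ∈ Γ
  · simp [hfg hx, hx]
  · rw [Set.indicator_of_mem (show x ∈ Γᶜ from hx)]
    have hfx := hf x
    have hgx := hg x
    rw [abs_le]
    constructor <;> linarith [hfx.1, hfx.2, hgx.1, hgx.2]

/-- The FKG lattice condition: the log-supermodularity of the point masses of `μ`. -/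
def LogSupermodular {α : Type*} [Lattice α] [MeasurableSpace α] (μ : Measure α) : Prop :=
  ∀ a b, μ.real {a} * μ.real {b} ≤ μ.real {a ⊓ b} * μ.real {a ⊔ b}

lemma exists_monotone_eqOn_of_monotoneOn {α β : Type*} [Preorder α] [CompleteLattice β]
    {f : α → β} {s : Set α} (hf : MonotoneOn f s) : ∃ g : α → β, Monotone g ∧ Set.EqOn g f s :=
  ⟨fun x => sSup (f '' (s ∩ Set.Iic x)),
    fun _ _ hxy => sSup_le_sSup (Set.image_mono (Set.inter_subset_inter_right _
      (Set.Iic_subset_Iic.2 hxy))),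
    fun x hx => IsGreatest.csSup_eq ⟨⟨x, ⟨hx, le_rfl⟩, rfl⟩, by
      rintro _ ⟨z, ⟨hz, hzx⟩, rfl⟩; exact hf hz hx hzx⟩⟩

lemma exists_monotone_mem_Icc_eqOn_of_monotoneOn {α : Type*} [Preorder α] {W : α → ℝ} {B : ℝ}
    {s : Set α} (hB : 0 ≤ B) (hW : ∀ x, W x ∈ Set.Icc 0 B) (hWs : MonotoneOn W s) :
    ∃ W' : α → ℝ, Monotone W' ∧ (∀ x, W' x ∈ Set.Icc 0 B) ∧ Set.EqOn W' W s := by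
  have : Fact (0 ≤ B) := ⟨hB⟩
  obtain ⟨W', hW', heq⟩ := exists_monotone_eqOn_of_monotoneOn
    (f := fun x => (⟨W x, hW x⟩ : Set.Icc 0 B)) hWs
  exact ⟨fun x => W' x, hW', fun x => (W' x).2, fun x hx => congrArg Subtype.val (heq hx)⟩

section FKG

variable {α : Type*} [DistribLattice α] [Finite α] [MeasurableSpace α]
  [MeasurableSingletonClass α] {μ : Measure α} [IsProbabilityMeasure μ]

lemma LogSupermodular.integral_mul_integral_le (hμ : LogSupermodular μ) {f g : α → ℝ}
    (hf₀ : 0 ≤ f) (hg₀ : 0 ≤ g) (hf : Monotone f) (hg : Monotone g) :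
    (∫ x, f x ∂μ) * ∫ x, g x ∂μ ≤ ∫ x, f x * g x ∂μ := by
  have := Fintype.ofFinite α
  classical
  have hfkg := fkg (μ := fun x => μ.real {x}) (f := f) (g := g)
    (fun x => measureReal_nonneg) hf₀ hg₀ hf hg hμ
  have hone : ∑ x, μ.real {x} = 1 := by simp
  simpa [integral_fintype Integrable.of_finite, hone] using hfkg

lemma LogSupermodular.covariance_ge_of_monotoneOn (hμ : LogSupermodular μ) {Γ : Set α}
    {U V : α → ℝ} {B : ℝ} (hU : ∀ x, U x ∈ Set.Icc 0 B) (hV : ∀ x, V x ∈ Set.Icc 0 B)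
    (hUΓ : MonotoneOn U Γ) (hVΓ : MonotoneOn V Γ) :
    -(3 * B ^ 2 * μ.real Γᶜ) ≤ cov[U, V; μ] := by
  obtain ⟨x₀⟩ : Nonempty α := nonempty_of_isProbabilityMeasure μ
  have hB : 0 ≤ B := (hU x₀).1.trans (hU x₀).2
  obtain ⟨U', hU'mono, hU', hUU'⟩ := exists_monotone_mem_Icc_eqOn_of_monotoneOn hB hU hUΓ
  obtain ⟨V', hV'mono, hV', hVV'⟩ := exists_monotone_mem_Icc_eqOn_of_monotoneOn hB hV hVΓ
  have hprod : ∀ f g : α → ℝ, (∀ x, f x ∈ Set.Icc 0 B) → (∀ x, g x ∈ Set.Icc 0 B) →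
      ∀ x, f x * g x ∈ Set.Icc 0 (B ^ 2) := fun f g hf hg x =>
    ⟨mul_nonneg (hf x).1 (hg x).1, by
      rw [sq]; exact mul_le_mul (hf x).2 (hg x).2 (hg x).1 hB⟩
  have hint : ∀ f : α → ℝ, (∀ x, f x ∈ Set.Icc 0 B) → ∫ x, f x ∂μ ∈ Set.Icc 0 B := fun f hf =>
    ⟨integral_nonneg fun x => (hf x).1,
      (integral_mono .of_finite .of_finite fun x => (hf x).2).trans_eq (by simp)⟩
  have hfkg := hμ.integral_mul_integral_le (fun x => (hU' x).1) (fun x => (hV' x).1)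
    hU'mono hV'mono
  have errU := (abs_le.1 (abs_integral_sub_integral_le_of_eqOn (μ := μ) hU' hU hUU')).1
  have errV := (abs_le.1 (abs_integral_sub_integral_le_of_eqOn (μ := μ) hV' hV hVV')).1
  have errUV := (abs_le.1 (abs_integral_sub_integral_le_of_eqOn (μ := μ) (Γ := Γ)
    (hprod U' V' hU' hV') (hprod U V hU hV) fun x hx => by simp only [hUU' hx, hVV' hx])).2
  obtain ⟨hV'0, hV'B⟩ := hint V' hV'
  obtain ⟨hU0, hUB⟩ := hint U hU
  have : 0 ≤ μ.real Γᶜ := measureReal_nonneg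
  have hleft : (∫ x, U x ∂μ - ∫ x, U' x ∂μ) * ∫ x, V' x ∂μ ≤ B * μ.real Γᶜ * B :=
    mul_le_mul (by linarith) hV'B hV'0 (by positivity)
  have hright : (∫ x, U x ∂μ) * (∫ x, V x ∂μ - ∫ x, V' x ∂μ) ≤ B * (B * μ.real Γᶜ) :=
    (mul_le_mul_of_nonneg_left (by linarith) hU0).trans
      (mul_le_mul_of_nonneg_right hUB (by positivity))
  rw [covariance_eq_sub .of_discrete .of_discrete]
  simp only [Pi.mul_apply]
  linarith

end FKG

lemma monotoneOn_of_covBy {α β : Type*} [PartialOrder α] [LocallyFiniteOrder α] [Preorder β]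
    {s : Set α} (hs : s.OrdConnected) {f : α → β}
    (h : ∀ a ∈ s, ∀ b ∈ s, a ⋖ b → f a ≤ f b) : MonotoneOn f s := by
  classical
  suffices Monotone fun x : s => f x from fun a ha b hb hab => @this ⟨a, ha⟩ ⟨b, hb⟩ hab
  refine (monotone_iff_forall_covBy _).2 fun a b hab => h a a.2 b b.2 ?_
  exact (Set.OrdConnected.apply_covBy_apply_iff (OrderEmbedding.subtype (· ∈ s))
    (by simpa using hs)).2 hab

section Cube

variable {I : Type*} [DecidableEq I] {Γ : Set (I → Bool)}

lemma monotoneOn_of_update [Finite I] (hΓ : Γ.OrdConnected) {U : (I → Bool) → ℝ}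
    (h : ∀ t y, y t = false → y ∈ Γ → Function.update y t true ∈ Γ →
      U y ≤ U (Function.update y t true)) : MonotoneOn U Γ := by
  classical
  have := Fintype.ofFinite I
  have : LocallyFiniteOrder (I → Bool) := Fintype.toLocallyFiniteOrder
  refine monotoneOn_of_covBy hΓ fun a ha b hb hab => ?_
  obtain ⟨t, x, hx, rfl⟩ := Pi.covBy_iff_exists_right_eq.1 hab
  obtain ⟨hat, rfl⟩ := Bool.lt_iff.1 hx.lt
  exact h t a hat ha hb

variable [Fintype I] {μ : Measure (I → Bool)} [IsProbabilityMeasure μ]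

/- Both `l * trueCount + F` and `l * trueCount - F` increase on `Γ`, and their covariance is
`l ^ 2 * Var[trueCount] - Var[F]`. -/
lemma LogSupermodular.variance_le_of_update_le (hμ : LogSupermodular μ) (hΓ : Γ.OrdConnected)
    {F : (I → Bool) → ℝ} {B l : ℝ} (hl : 0 ≤ l) (hF : ∀ y, |F y| ≤ B)
    (h : ∀ t y, y t = false → y ∈ Γ → Function.update y t true ∈ Γ →
      |F (Function.update y t true) - F y| ≤ l) :
    Var[F; μ] ≤ l ^ 2 * Var[trueCount; μ] +
      3 * (2 * B + l * Fintype.card I) ^ 2 * μ.real Γᶜ := by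
  have hbound : ∀ y, 0 ≤ l * trueCount y ∧ l * trueCount y ≤ l * Fintype.card I := fun y =>
    ⟨mul_nonneg hl (trueCount_nonneg y), mul_le_mul_of_nonneg_left (trueCount_le_card y) hl⟩
  have hcov := hμ.covariance_ge_of_monotoneOn (U := fun y => (l * trueCount y + F y) + B)
    (V := fun y => (l * trueCount y - F y) + B) (B := 2 * B + l * Fintype.card I) (Γ := Γ)
    (fun y => by constructor <;> linarith [abs_le.1 (hF y), hbound y])
    (fun y => by constructor <;> linarith [abs_le.1 (hF y), hbound y])
    (monotoneOn_of_update hΓ fun t y hy hyΓ hyΓ' => by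
      rw [trueCount_update_true hy]; linarith [abs_le.1 (h t y hy hyΓ hyΓ')])
    (monotoneOn_of_update hΓ fun t y hy hyΓ hyΓ' => by
      rw [trueCount_update_true hy]; linarith [abs_le.1 (h t y hy hyΓ hyΓ')])
  have hlin : cov[fun y => l * trueCount y + F y, fun y => l * trueCount y - F y; μ] =
      l ^ 2 * Var[trueCount; μ] - Var[F; μ] := by
    have hL : MemLp (fun y : I → Bool => l * trueCount y) 2 μ := .of_discrete
    have hFL : MemLp F 2 μ := .of_discrete
    have hadd := covariance_add_left hL hFL (hL.sub hFL)
    rw [covariance_sub_right hL hL hFL, covariance_sub_right hFL hL hFL,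
      covariance_const_mul_left, covariance_const_mul_right, covariance_const_mul_left,
      covariance_const_mul_right, covariance_comm F, covariance_self .of_discrete,
      covariance_self .of_discrete] at hadd
    exact hadd.trans (by ring)
  rw [covariance_add_const_left .of_finite, covariance_add_const_right .of_finite, hlin] at hcov
  linarith

end Cube

/-! ### Maps of potential edges and their counts -/

section EdgeMap

variable {u v n : ℕ}

/-- A potential edge as an unordered pair of vertices. -/
def EdgeIdx.toSym2 (s : EdgeIdx n) : Sym2 (Fin n) := s(s.1.1, s.1.2)

lemma EdgeIdx.toSym2_injective : Function.Injective (EdgeIdx.toSym2 (n := n)) := by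
  rintro ⟨⟨a, b⟩, hab⟩ ⟨⟨c, d⟩, hcd⟩ h
  rcases Sym2.eq_iff.1 h with ⟨rfl, rfl⟩ | ⟨rfl, rfl⟩
  · rfl
  · exact absurd hcd (lt_asymm hab)

lemma EdgeIdx.not_isDiag_toSym2 (s : EdgeIdx n) : ¬s.toSym2.IsDiag := s.2.ne

/-- The potential edge joining two distinct vertices, given in either order. -/
def EdgeIdx.ofNe (a b : Fin n) (h : a ≠ b) : EdgeIdx n := ⟨(min a b, max a b), min_lt_max.2 h⟩

@[simp]
lemma EdgeIdx.toSym2_ofNe {a b : Fin n} (h : a ≠ b) : (EdgeIdx.ofNe a b h).toSym2 = s(a, b) := by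
  rcases le_total a b with hab | hab <;> simp [toSym2, ofNe, hab, Sym2.eq_swap]

lemma EdgeIdx.bijective_toSym2_subtype : Function.Bijective
    (fun s : EdgeIdx n => (⟨s.toSym2, s.not_isDiag_toSym2⟩ : {z : Sym2 (Fin n) // ¬z.IsDiag})) := by
  refine ⟨fun s t h => toSym2_injective (congrArg Subtype.val h), ?_⟩
  rintro ⟨⟨a, b⟩, hz⟩
  exact ⟨ofNe a b hz, Subtype.ext (toSym2_ofNe hz)⟩

lemma EdgeIdx.card_eq_choose (n : ℕ) : Fintype.card (EdgeIdx n) = n.choose 2 := by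
  rw [Fintype.card_of_bijective bijective_toSym2_subtype, Sym2.card_subtype_not_diag,
    Fintype.card_fin]

lemma EdgeIdx.cast_card (n : ℕ) : (Fintype.card (EdgeIdx n) : ℝ) = n * ((n : ℝ) - 1) / 2 := by
  rw [card_eq_choose, Nat.cast_choose_two]

lemma yAdj_eq_ofNe (y : EdgeIdx n → Bool) {a b : Fin n} (h : a ≠ b) :
    yAdj y a b = y (EdgeIdx.ofNe a b h) := by
  rcases lt_or_gt_of_ne h with hab | hab <;>
    simp [yAdj, EdgeIdx.ofNe, hab, hab.not_gt, hab.le]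

/-- The image of the potential edge `e` under an injective map of vertices. -/
def edgeMap (φ : Fin v ↪ Fin n) (e : EdgeIdx v) : EdgeIdx n :=
  EdgeIdx.ofNe (φ e.1.1) (φ e.1.2) (φ.injective.ne e.2.ne)

lemma toSym2_edgeMap (φ : Fin v ↪ Fin n) (e : EdgeIdx v) :
    (edgeMap φ e).toSym2 = e.toSym2.map φ := EdgeIdx.toSym2_ofNe _

lemma edgeMap_injective (φ : Fin v ↪ Fin n) : Function.Injective (edgeMap φ) := by
  intro e e' h
  apply EdgeIdx.toSym2_injective
  apply Sym2.map.injective φ.injective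
  rw [← toSym2_edgeMap, ← toSym2_edgeMap, h]

lemma edgeMap_trans (φ : Fin u ↪ Fin v) (ψ : Fin v ↪ Fin n) (e : EdgeIdx u) :
    edgeMap (φ.trans ψ) e = edgeMap ψ (edgeMap φ e) := by
  apply EdgeIdx.toSym2_injective
  simp_rw [toSym2_edgeMap, Sym2.map_map]
  rfl

lemma edgeMap_ofNe (φ : Fin v ↪ Fin n) {a b : Fin v} (h : a ≠ b) :
    edgeMap φ (EdgeIdx.ofNe a b h) = EdgeIdx.ofNe (φ a) (φ b) (φ.injective.ne h) := by
  apply EdgeIdx.toSym2_injective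
  simp [toSym2_edgeMap]

lemma exists_perm_edgeMap_eq (s t : EdgeIdx n) :
    ∃ ρ : Equiv.Perm (Fin n), edgeMap ρ.toEmbedding s = t := by
  refine ⟨(Equiv.swap s.1.1 t.1.1).trans (Equiv.swap (Equiv.swap s.1.1 t.1.1 s.1.2) t.1.2), ?_⟩
  have hne : t.1.1 ≠ Equiv.swap s.1.1 t.1.1 s.1.2 := by
    simpa using (Equiv.swap s.1.1 t.1.1).injective.ne s.2.ne
  apply EdgeIdx.toSym2_injective
  rw [toSym2_edgeMap]
  simp [EdgeIdx.toSym2, Equiv.swap_apply_of_ne_of_ne hne t.2.ne]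

lemma card_filter_edgeMap_eq (e : EdgeIdx v) (s t : EdgeIdx n) :
    #{φ : Fin v ↪ Fin n | edgeMap φ e = s} = #{φ : Fin v ↪ Fin n | edgeMap φ e = t} := by
  obtain ⟨ρ, rfl⟩ := exists_perm_edgeMap_eq s t
  refine card_equiv (Equiv.embeddingCongr (Equiv.refl _) ρ) fun φ => ?_
  have htrans : Equiv.embeddingCongr (Equiv.refl _) ρ φ = φ.trans ρ.toEmbedding := rfl
  simp [htrans, edgeMap_trans, (edgeMap_injective _).eq_iff]

lemma choose_two_mul_card_filter_edgeMap_eq (e : EdgeIdx v) (s : EdgeIdx n) :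
    n.choose 2 * #{φ : Fin v ↪ Fin n | edgeMap φ e = s} = n.descFactorial v := by
  have h := card_eq_sum_card_fiberwise (f := fun φ : Fin v ↪ Fin n => edgeMap φ e)
    (s := univ) (t := univ) (fun _ _ => mem_coe.2 (mem_univ _))
  rw [card_univ, Fintype.card_embedding_eq, Fintype.card_fin, Fintype.card_fin,
    sum_congr rfl fun t _ => card_filter_edgeMap_eq e t s, sum_const, smul_eq_mul, card_univ,
    EdgeIdx.card_eq_choose] at h
  exact h.symm

end EdgeMap

section Counts

variable {v n : ℕ}

lemma three_le_card_union_toFinset {e e' : EdgeIdx v} (h : e ≠ e') :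
    3 ≤ #(e.toSym2.toFinset ∪ e'.toSym2.toFinset) := by
  have hcard (d : EdgeIdx v) : #d.toSym2.toFinset = 2 :=
    Sym2.card_toFinset_of_not_isDiag _ d.not_isDiag_toSym2
  by_contra hlt
  have h1 := eq_of_subset_of_card_le
    (subset_union_left (s₁ := e.toSym2.toFinset) (s₂ := e'.toSym2.toFinset))
    (by have := hcard e; omega)
  have h2 := eq_of_subset_of_card_le
    (subset_union_right (s₁ := e.toSym2.toFinset) (s₂ := e'.toSym2.toFinset))
    (by have := hcard e'; omega)
  refine h (EdgeIdx.toSym2_injective (Sym2.ext fun x => ?_))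
  rw [← Sym2.mem_toFinset, ← Sym2.mem_toFinset, h1.trans h2.symm]

lemma apply_mem_toSym2 {φ : Fin v ↪ Fin n} {e : EdgeIdx v} {s : EdgeIdx n} (h : edgeMap φ e = s)
    {x : Fin v} (hx : x ∈ e.toSym2) : φ x ∈ s.toSym2.toFinset := by
  rw [Sym2.mem_toFinset, ← h, toSym2_edgeMap, Sym2.mem_map]
  exact ⟨x, hx, rfl⟩

/-- Two distinct edges span at least three vertices, each of which has at most two possible
images. -/
lemma card_filter_edgeMap_eq_and_le (hn : 2 ≤ n) {e e' : EdgeIdx v} (h : e ≠ e')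
    (s t : EdgeIdx n) :
    #{φ : Fin v ↪ Fin n | edgeMap φ e = s ∧ edgeMap φ e' = t} ≤ 8 * n ^ (v - 3) := by
  obtain ⟨U, hU, hU3⟩ := exists_subset_card_eq (three_le_card_union_toFinset h)
  let T (x : Fin v) : Finset (Fin n) :=
    if x ∈ e.toSym2 then s.toSym2.toFinset else if x ∈ e'.toSym2 then t.toSym2.toFinset else univ
  have hcard (s : EdgeIdx n) : #s.toSym2.toFinset = 2 :=
    Sym2.card_toFinset_of_not_isDiag _ s.not_isDiag_toSym2
  have hinj : #{φ : Fin v ↪ Fin n | edgeMap φ e = s ∧ edgeMap φ e' = t} ≤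
      #(Fintype.piFinset T) := by
    refine card_le_card_of_injOn (fun φ => φ) (fun φ hφ => ?_)
      (fun φ _ φ' _ hh => DFunLike.coe_injective hh)
    obtain ⟨hs, ht⟩ : edgeMap φ e = s ∧ edgeMap φ e' = t := by simpa using hφ
    simp only [mem_coe, Fintype.mem_piFinset, T]
    intro x
    split_ifs with h1 h2
    exacts [apply_mem_toSym2 hs h1, apply_mem_toSym2 ht h2, mem_univ _]
  have hT (x : Fin v) : #(T x) ≤ if x ∈ U then 2 else n := by
    have : x ∈ U → x ∈ e.toSym2 ∨ x ∈ e'.toSym2 := fun hx => by simpa using hU hx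
    simp only [T]
    split_ifs <;> simp_all
  calc #{φ : Fin v ↪ Fin n | edgeMap φ e = s ∧ edgeMap φ e' = t} ≤ ∏ x, #(T x) := by
        rwa [← Fintype.card_piFinset]
    _ ≤ ∏ x, if x ∈ U then 2 else n := prod_le_prod' fun x _ => hT x
    _ = 8 * n ^ (v - 3) := by
        rw [prod_ite, prod_const, prod_const, filter_mem_eq_inter, univ_inter, hU3, filter_not,
          filter_mem_eq_inter, univ_inter, ← compl_eq_univ_sdiff, card_compl, hU3,
          Fintype.card_fin]
        norm_num

/-- The normalisation `n^{2 - v}` of the counts of graphs on `v` vertices. -/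
def homScale (v n : ℕ) : ℝ := (n : ℝ) ^ ((2 : ℤ) - (v : ℤ))

lemma homScale_nonneg : 0 ≤ homScale v n := zpow_nonneg (Nat.cast_nonneg _) _

lemma homScale_mul_pow (hn : n ≠ 0) (d : ℕ) :
    homScale v n * (n : ℝ) ^ d = (n : ℝ) ^ ((2 : ℤ) - v + d) := by
  have : (n : ℝ) ≠ 0 := by exact_mod_cast hn
  rw [homScale, ← zpow_natCast, ← zpow_add₀ this]

lemma homScale_mul_card_mul (hn : n ≠ 0) (e : EdgeIdx v) (s : EdgeIdx n) :
    homScale v n * #{φ : Fin v ↪ Fin n | edgeMap φ e = s} * (n * (n - 1) / 2) =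
      n ^ 2 * (n.descFactorial v / (n : ℝ) ^ v) := by
  have hn' : (n : ℝ) ^ v ≠ 0 := by positivity
  have h1 : homScale v n * (n : ℝ) ^ v = (n : ℝ) ^ 2 := by
    rw [homScale_mul_pow hn, sub_add_cancel, zpow_ofNat]
  have h2 := congrArg (Nat.cast (R := ℝ)) (choose_two_mul_card_filter_edgeMap_eq e s)
  rw [Nat.cast_mul, Nat.cast_choose_two] at h2
  rw [← h2, ← h1]
  field_simp

lemma homScale_mul_card_le (hn : 2 ≤ n) (e : EdgeIdx v) (s : EdgeIdx n) :
    homScale v n * #{φ : Fin v ↪ Fin n | edgeMap φ e = s} ≤ 2 + 4 / n := by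
  have hn' : (2 : ℝ) ≤ n := by exact_mod_cast hn
  have hdesc : (n.descFactorial v : ℝ) / (n : ℝ) ^ v ≤ 1 :=
    div_le_one_of_le₀ (by exact_mod_cast Nat.descFactorial_le_pow n v) (by positivity)
  have h := (homScale_mul_card_mul (by omega) e s).trans_le
    (mul_le_of_le_one_right (by positivity) hdesc)
  refine (le_div_iff₀ (by nlinarith)).2 h |>.trans ?_
  rw [show 2 + 4 / (n : ℝ) = (2 * n + 4) / n by field_simp, div_le_div_iff₀ (by nlinarith)
    (by positivity)]
  nlinarith

lemma one_sub_sq_div_le_descFactorial_div (hv : v ≠ 0) (hvn : v ≤ n) :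
    1 - (v : ℝ) * (v - 1) / n ≤ n.descFactorial v / (n : ℝ) ^ v := by
  have hv' : (1 : ℝ) ≤ v := by exact_mod_cast Nat.one_le_iff_ne_zero.2 hv
  have hvn' : (v : ℝ) ≤ n := by exact_mod_cast hvn
  have hn : (0 : ℝ) < n := by linarith
  have hbern := one_add_mul_le_pow (a := -(((v : ℝ) - 1) / n))
    (by have := (div_le_one hn).2 ((sub_le_self _ zero_le_one).trans hvn'); linarith) v
  have hpow : ((n : ℝ) + 1 - v) ^ v ≤ n.descFactorial v := by
    have := Nat.pow_sub_le_descFactorial n v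
    rify [show v ≤ n + 1 by omega] at this
    exact this
  rw [le_div_iff₀ (by positivity)]
  refine (mul_le_mul_of_nonneg_right ?_ (by positivity)).trans
    ((mul_pow (1 + -(((v : ℝ) - 1) / n)) n v).ge.trans (le_of_eq_of_le ?_ hpow))
  · exact le_of_eq_of_le (by ring) hbern
  · congr 1
    field_simp
    ring

lemma le_homScale_mul_card (hn : 2 ≤ n) (e : EdgeIdx v) (s : EdgeIdx n) :
    2 - 2 * (v : ℝ) ^ 2 / n ≤ homScale v n * #{φ : Fin v ↪ Fin n | edgeMap φ e = s} := by
  have hn' : (2 : ℝ) ≤ n := by exact_mod_cast hn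
  rcases lt_or_ge n v with hvn | hvn
  · have : (n : ℝ) < v := by exact_mod_cast hvn
    refine le_trans ?_ (mul_nonneg homScale_nonneg (Nat.cast_nonneg _))
    rw [sub_nonpos, le_div_iff₀ (by linarith)]
    nlinarith
  · have hv := Fin.pos e.1.1
    have h := one_sub_sq_div_le_descFactorial_div (by omega) hvn
    rw [← sub_nonneg] at h
    have heq := homScale_mul_card_mul (by omega) e s
    rw [← sub_nonneg]
    refine nonneg_of_mul_nonneg_left (b := (n : ℝ) * (n - 1) / 2) ?_ (by nlinarith)
    rw [sub_mul, heq, ← sub_add_cancel (_ / _) (1 - (v : ℝ) * (v - 1) / n), mul_add]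
    have hmain : 0 ≤ (n : ℝ) ^ 2 * (1 - v * (v - 1) / n)
        - (2 - 2 * (v : ℝ) ^ 2 / n) * (n * (n - 1) / 2) := by
      have : (n : ℝ) ^ 2 * (1 - v * (v - 1) / n) - (2 - 2 * (v : ℝ) ^ 2 / n) * (n * (n - 1) / 2)
          = n * (v + 1) - v ^ 2 := by field_simp; ring
      have : (v : ℝ) ≤ n := by exact_mod_cast hvn
      nlinarith
    have := mul_nonneg (sq_nonneg (n : ℝ)) h
    linarith

lemma homScale_mul_card_le_four (hn : 2 ≤ n) (e : EdgeIdx v) (s : EdgeIdx n) :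
    homScale v n * #{φ : Fin v ↪ Fin n | edgeMap φ e = s} ≤ 4 := by
  have : 4 / (n : ℝ) ≤ 2 := by rw [div_le_iff₀ (by positivity)]; norm_cast; omega
  linarith [homScale_mul_card_le hn e s]

lemma homScale_mul_card_and_le (hn : 2 ≤ n) {e e' : EdgeIdx v} (h : e ≠ e') (s t : EdgeIdx n) :
    homScale v n * #{φ : Fin v ↪ Fin n | edgeMap φ e = s ∧ edgeMap φ e' = t} ≤ 8 / n := by
  have hv : 3 ≤ v := (three_le_card_union_toFinset h).trans
    ((card_le_univ _).trans_eq (Fintype.card_fin v))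
  have hcard : (#{φ : Fin v ↪ Fin n | edgeMap φ e = s ∧ edgeMap φ e' = t} : ℝ) ≤
      8 * (n : ℝ) ^ (v - 3) := by exact_mod_cast card_filter_edgeMap_eq_and_le hn h s t
  refine (mul_le_mul_of_nonneg_left hcard homScale_nonneg).trans_eq ?_
  rw [mul_left_comm, homScale_mul_pow (by omega), show (2 : ℤ) - v + (v - 3 : ℕ) = -1 by omega,
    zpow_neg_one, div_eq_mul_inv]

end Counts

section EdgeMonomial

variable {v n : ℕ}

/-- The indicator that all edges of `A` are mapped by `φ` to edges of `G_y`. -/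
def edgeMonomial (φ : Fin v ↪ Fin n) (A : Finset (EdgeIdx v)) (y : EdgeIdx n → Bool) : ℝ :=
  ∏ e ∈ A, bval (y (edgeMap φ e))

lemma edgeMonomial_nonneg (φ : Fin v ↪ Fin n) (A : Finset (EdgeIdx v)) (y : EdgeIdx n → Bool) :
    0 ≤ edgeMonomial φ A y := prod_nonneg fun _ _ => bval_nonneg _

lemma edgeMonomial_le_one (φ : Fin v ↪ Fin n) (A : Finset (EdgeIdx v)) (y : EdgeIdx n → Bool) :
    edgeMonomial φ A y ≤ 1 := prod_le_one (fun _ _ => bval_nonneg _) fun _ _ => bval_le_one _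

@[simp]
lemma edgeMonomial_empty (φ : Fin v ↪ Fin n) (y : EdgeIdx n → Bool) : edgeMonomial φ ∅ y = 1 :=
  prod_empty

lemma bval_monotone : Monotone bval := by
  rintro (_ | _) (_ | _) <;> simp

lemma edgeMonomial_monotone (φ : Fin v ↪ Fin n) (A : Finset (EdgeIdx v)) :
    Monotone (edgeMonomial φ A) :=
  fun _ _ h => prod_le_prod (fun _ _ => bval_nonneg _) fun _ _ => bval_monotone (h _)

lemma edgeMonomial_eq_erase_mul (φ : Fin v ↪ Fin n) {A : Finset (EdgeIdx v)} {e : EdgeIdx v}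
    (he : e ∈ A) (y : EdgeIdx n → Bool) :
    edgeMonomial φ A y = edgeMonomial φ (A.erase e) y * bval (y (edgeMap φ e)) :=
  (prod_erase_mul _ _ he).symm

lemma edgeMonomial_eq_ite (φ : Fin v ↪ Fin n) (A : Finset (EdgeIdx v)) (y : EdgeIdx n → Bool) :
    edgeMonomial φ A y = if ∀ e ∈ A, y (edgeMap φ e) = true then 1 else 0 := by
  split_ifs with h
  · exact prod_eq_one fun e he => by simp [h e he]
  · push Not at h
    obtain ⟨e, he, h⟩ := h
    exact prod_eq_zero he (by simp [h])

lemma edgeMonomial_update_of_forall_ne {φ : Fin v ↪ Fin n} {A : Finset (EdgeIdx v)}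
    {t : EdgeIdx n} (h : ∀ e ∈ A, edgeMap φ e ≠ t) (y : EdgeIdx n → Bool) (b : Bool) :
    edgeMonomial φ A (Function.update y t b) = edgeMonomial φ A y :=
  prod_congr rfl fun e he => by rw [Function.update_of_ne (h e he)]

lemma edgeMonomial_update_sub (φ : Fin v ↪ Fin n) (A : Finset (EdgeIdx v)) (t : EdgeIdx n)
    (y : EdgeIdx n → Bool) :
    edgeMonomial φ A (Function.update y t true) - edgeMonomial φ A (Function.update y t false) =
      ∑ e ∈ A, if edgeMap φ e = t then edgeMonomial φ (A.erase e) y else 0 := by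
  by_cases h : ∃ e ∈ A, edgeMap φ e = t
  · obtain ⟨e, he, rfl⟩ := h
    have hne : ∀ e' ∈ A.erase e, edgeMap φ e' ≠ edgeMap φ e := fun e' he' heq =>
      (ne_of_mem_erase he') (edgeMap_injective φ heq)
    rw [edgeMonomial_eq_erase_mul φ he, edgeMonomial_eq_erase_mul φ he,
      edgeMonomial_update_of_forall_ne hne, edgeMonomial_update_of_forall_ne hne,
      ← add_sum_erase A _ he, sum_eq_zero fun e' he' => if_neg (hne e' he')]
    simp
  · push Not at h
    rw [edgeMonomial_update_of_forall_ne h, edgeMonomial_update_of_forall_ne h, sub_self,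
      sum_eq_zero fun e he => if_neg (h e he)]

open Classical in
/-- The edges of `H`, as a set of potential edges. -/
def edgeIdxFinset (H : SimpleGraph (Fin v)) : Finset (EdgeIdx v) := {e | e.toSym2 ∈ H.edgeSet}

lemma mem_edgeIdxFinset {H : SimpleGraph (Fin v)} {e : EdgeIdx v} :
    e ∈ edgeIdxFinset H ↔ e.toSym2 ∈ H.edgeSet := by simp [edgeIdxFinset]

lemma ofNe_mem_edgeIdxFinset {H : SimpleGraph (Fin v)} {a b : Fin v} (hab : H.Adj a b) :
    EdgeIdx.ofNe a b hab.ne ∈ edgeIdxFinset H := by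
  rwa [mem_edgeIdxFinset, EdgeIdx.toSym2_ofNe]

lemma eCount_eq_card (H : SimpleGraph (Fin v)) : eCount H = #(edgeIdxFinset H) := by
  rw [eCount, ← Nat.card_eq_finsetCard]
  refine (Nat.card_eq_of_bijective
    (fun e : edgeIdxFinset H => (⟨e.1.toSym2, mem_edgeIdxFinset.1 e.2⟩ : H.edgeSet))
    ⟨fun e e' h => Subtype.ext (EdgeIdx.toSym2_injective (congrArg Subtype.val h)), ?_⟩).symm
  rintro ⟨⟨a, b⟩, hab : H.Adj a b⟩
  exact ⟨⟨_, ofNe_mem_edgeIdxFinset hab⟩, Subtype.ext (EdgeIdx.toSym2_ofNe hab.ne)⟩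

lemma forall_adj_yAdj_iff (H : SimpleGraph (Fin v)) (φ : Fin v ↪ Fin n) (y : EdgeIdx n → Bool) :
    (∀ a b, H.Adj a b → yAdj y (φ a) (φ b) = true) ↔
      ∀ e ∈ edgeIdxFinset H, y (edgeMap φ e) = true := by
  refine ⟨fun h e he => ?_, fun h a b hab => ?_⟩
  · exact (yAdj_eq_ofNe y _).symm.trans (h _ _ (mem_edgeIdxFinset.1 he))
  · rw [yAdj_eq_ofNe y (φ.injective.ne hab.ne), ← edgeMap_ofNe φ hab.ne]
    exact h _ (ofNe_mem_edgeIdxFinset hab)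

lemma homCount_eq_sum (H : SimpleGraph (Fin v)) (y : EdgeIdx n → Bool) :
    (homCount H y : ℝ) = ∑ φ : Fin v ↪ Fin n, edgeMonomial φ (edgeIdxFinset H) y := by
  classical
  simp_rw [edgeMonomial_eq_ite, ← forall_adj_yAdj_iff]
  rw [← sum_filter, sum_const, nsmul_eq_mul, mul_one, homCount, Nat.cast_inj,
    ← Fintype.card_subtype, ← Nat.card_eq_fintype_card]
  exact Nat.card_congr ⟨fun φ => ⟨⟨φ.1, φ.2.1⟩, φ.2.2⟩, fun φ => ⟨φ.1, φ.1.injective, φ.2⟩,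
    fun _ => rfl, fun _ => rfl⟩

end EdgeMonomial

section RootedCount

variable {v n : ℕ}

/-- The normalised number of copies of `A` in `G_y` in which the potential edge `e` is mapped
to `s`. -/
def rootedCount (e : EdgeIdx v) (s : EdgeIdx n) (A : Finset (EdgeIdx v))
    (y : EdgeIdx n → Bool) : ℝ :=
  homScale v n * ∑ φ : Fin v ↪ Fin n with edgeMap φ e = s, edgeMonomial φ A y

lemma homScale_mul_sum_edgeMonomial_nonneg (S : Finset (Fin v ↪ Fin n)) (A : Finset (EdgeIdx v))
    (y : EdgeIdx n → Bool) : 0 ≤ homScale v n * ∑ φ ∈ S, edgeMonomial φ A y :=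
  mul_nonneg homScale_nonneg (sum_nonneg fun _ _ => edgeMonomial_nonneg _ _ _)

lemma homScale_mul_sum_edgeMonomial_le (S : Finset (Fin v ↪ Fin n)) (A : Finset (EdgeIdx v))
    (y : EdgeIdx n → Bool) : homScale v n * ∑ φ ∈ S, edgeMonomial φ A y ≤ homScale v n * #S := by
  refine mul_le_mul_of_nonneg_left ?_ homScale_nonneg
  simpa using sum_le_card_nsmul S _ 1 fun φ _ => edgeMonomial_le_one φ A y

lemma rootedCount_nonneg (e : EdgeIdx v) (s : EdgeIdx n) (A : Finset (EdgeIdx v))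
    (y : EdgeIdx n → Bool) : 0 ≤ rootedCount e s A y :=
  homScale_mul_sum_edgeMonomial_nonneg _ _ _

lemma rootedCount_le_four (hn : 2 ≤ n) (e : EdgeIdx v) (s : EdgeIdx n) (A : Finset (EdgeIdx v))
    (y : EdgeIdx n → Bool) : rootedCount e s A y ≤ 4 :=
  (homScale_mul_sum_edgeMonomial_le _ A y).trans (homScale_mul_card_le_four hn e s)

lemma rootedCount_monotone (e : EdgeIdx v) (s : EdgeIdx n) (A : Finset (EdgeIdx v)) :
    Monotone (rootedCount e s A) := fun _ _ h =>
  mul_le_mul_of_nonneg_left (sum_le_sum fun φ _ => edgeMonomial_monotone φ A h) homScale_nonneg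

lemma abs_rootedCount_empty_sub_two_le (hn : 2 ≤ n) (e : EdgeIdx v) (s : EdgeIdx n)
    (y : EdgeIdx n → Bool) : |rootedCount e s ∅ y - 2| ≤ (2 * (v : ℝ) ^ 2 + 4) / n := by
  have h : rootedCount e s ∅ y = homScale v n * #{φ : Fin v ↪ Fin n | edgeMap φ e = s} := by
    simp [rootedCount]
  have h₁ : (0 : ℝ) ≤ 4 / n := by positivity
  have h₂ : 0 ≤ 2 * (v : ℝ) ^ 2 / n := by positivity
  rw [h, add_div, abs_le]
  constructor <;> linarith [homScale_mul_card_le hn e s, le_homScale_mul_card hn e s]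

lemma rootedCount_update_sub (e : EdgeIdx v) (A : Finset (EdgeIdx v)) (s t : EdgeIdx n)
    (y : EdgeIdx n → Bool) :
    rootedCount e s A (Function.update y t true) - rootedCount e s A (Function.update y t false) =
      ∑ e' ∈ A, homScale v n *
        ∑ φ : Fin v ↪ Fin n with edgeMap φ e = s ∧ edgeMap φ e' = t,
          edgeMonomial φ (A.erase e') y := by
  unfold rootedCount
  rw [← mul_sub, ← sum_sub_distrib, ← mul_sum]
  simp_rw [edgeMonomial_update_sub]
  rw [sum_comm]
  congr 1
  refine sum_congr rfl fun e' _ => ?_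
  rw [← filter_filter, sum_filter (fun φ => edgeMap φ e' = t)]

lemma rootedCount_update_sub_le {e : EdgeIdx v} {A : Finset (EdgeIdx v)} (hn : 2 ≤ n)
    (he : e ∉ A) (s t : EdgeIdx n) (y : EdgeIdx n → Bool) :
    rootedCount e s A (Function.update y t true) - rootedCount e s A (Function.update y t false) ≤
      8 * #A / n := by
  rw [rootedCount_update_sub]
  refine (sum_le_card_nsmul _ _ (8 / (n : ℝ)) fun e' he' => ?_).trans_eq
    (by rw [nsmul_eq_mul]; ring)
  exact (homScale_mul_sum_edgeMonomial_le _ _ y).trans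
    (homScale_mul_card_and_le hn (ne_of_mem_of_not_mem he' he).symm s t)

lemma update_false_le_update_true {I : Type*} [DecidableEq I] (y : I → Bool) (t : I) :
    Function.update y t false ≤ Function.update y t true :=
  update_le_update_iff'.2 (Bool.false_le _)

lemma abs_rootedCount_update_sub_le {e : EdgeIdx v} {A : Finset (EdgeIdx v)} (hn : 2 ≤ n)
    (he : e ∉ A) (s t : EdgeIdx n) (y : EdgeIdx n → Bool) :
    |rootedCount e s A (Function.update y t true) -
      rootedCount e s A (Function.update y t false)| ≤ 8 * #A / n := by
  rw [abs_of_nonneg (sub_nonneg.2 (rootedCount_monotone e s A (update_false_le_update_true y t)))]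
  exact rootedCount_update_sub_le hn he s t y

lemma sum_rootedCount_update_sub (e : EdgeIdx v) (A : Finset (EdgeIdx v)) (t : EdgeIdx n)
    (y : EdgeIdx n → Bool) :
    ∑ s, (rootedCount e s A (Function.update y t true) -
      rootedCount e s A (Function.update y t false)) =
      ∑ e' ∈ A, rootedCount e' t (A.erase e') y := by
  simp_rw [rootedCount_update_sub]
  rw [sum_comm]
  refine sum_congr rfl fun e' _ => ?_
  rw [rootedCount, ← mul_sum, ← sum_fiberwise _ (fun φ => edgeMap φ e)]
  simp_rw [filter_filter, and_comm]

lemma homCount_update_sub (H : SimpleGraph (Fin v)) (t : EdgeIdx n) (y : EdgeIdx n → Bool) :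
    homScale v n * (homCount H (Function.update y t true) : ℝ) -
      homScale v n * (homCount H (Function.update y t false) : ℝ) =
      ∑ e ∈ edgeIdxFinset H, rootedCount e t ((edgeIdxFinset H).erase e) y := by
  rw [homCount_eq_sum, homCount_eq_sum, ← mul_sub, ← sum_sub_distrib]
  simp_rw [edgeMonomial_update_sub]
  rw [sum_comm, mul_sum]
  exact sum_congr rfl fun e _ => by rw [rootedCount, sum_filter]

lemma edgeMonomial_inf (φ : Fin v ↪ Fin n) (A : Finset (EdgeIdx v)) (a b : EdgeIdx n → Bool) :
    edgeMonomial φ A (a ⊓ b) = edgeMonomial φ A a * edgeMonomial φ A b := by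
  unfold edgeMonomial
  rw [← prod_mul_distrib]
  refine prod_congr rfl fun e _ => ?_
  rw [Pi.inf_apply]
  cases a (edgeMap φ e) <;> cases b (edgeMap φ e) <;> simp

lemma edgeMonomial_add_le (φ : Fin v ↪ Fin n) (A : Finset (EdgeIdx v)) (a b : EdgeIdx n → Bool) :
    edgeMonomial φ A a + edgeMonomial φ A b ≤
      edgeMonomial φ A (a ⊓ b) + edgeMonomial φ A (a ⊔ b) := by
  have ha := edgeMonomial_monotone φ A (le_sup_left : a ≤ a ⊔ b)
  have hb := edgeMonomial_monotone φ A (le_sup_right : b ≤ a ⊔ b)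
  rw [edgeMonomial_inf]
  have h01 (c : EdgeIdx n → Bool) : edgeMonomial φ A c = 0 ∨ edgeMonomial φ A c = 1 := by
    rw [edgeMonomial_eq_ite]
    split_ifs <;> simp
  rcases h01 a with h | h <;> rcases h01 b with h' | h' <;> rw [h, h'] <;> linarith

lemma edgeMonomial_singleton_add (φ : Fin v ↪ Fin n) (e : EdgeIdx v) (a b : EdgeIdx n → Bool) :
    edgeMonomial φ {e} a + edgeMonomial φ {e} b =
      edgeMonomial φ {e} (a ⊓ b) + edgeMonomial φ {e} (a ⊔ b) := by
  simp only [edgeMonomial, prod_singleton, Pi.inf_apply, Pi.sup_apply]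
  cases a (edgeMap φ e) <;> cases b (edgeMap φ e) <;> simp

lemma homCount_add_le (H : SimpleGraph (Fin v)) (a b : EdgeIdx n → Bool) :
    (homCount H a : ℝ) + homCount H b ≤ homCount H (a ⊓ b) + homCount H (a ⊔ b) := by
  simp only [homCount_eq_sum, ← sum_add_distrib]
  exact sum_le_sum fun φ _ => edgeMonomial_add_le φ _ a b

lemma homCount_add_eq {H : SimpleGraph (Fin v)} (hH : eCount H ≤ 1) (a b : EdgeIdx n → Bool) :
    (homCount H a : ℝ) + homCount H b = homCount H (a ⊓ b) + homCount H (a ⊔ b) := by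
  rw [eCount_eq_card] at hH
  simp only [homCount_eq_sum, ← sum_add_distrib]
  refine sum_congr rfl fun φ _ => ?_
  rcases Nat.le_one_iff_eq_zero_or_eq_one.1 hH with hH | hH
  · simp only [card_eq_zero.1 hH, edgeMonomial_empty]
  · obtain ⟨e, he⟩ := card_eq_one.1 hH
    rw [he]
    exact edgeMonomial_singleton_add φ e a b

end RootedCount

/-! ### Gibbs measures on the cube and the ERGM -/

section Tilted

section Finite

variable {α : Type*} [MeasurableSpace α] [MeasurableSingletonClass α]

instance isProbabilityMeasure_tilted_count [Finite α] [Nonempty α] (f : α → ℝ) :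
    IsProbabilityMeasure (Measure.count.tilted f) := isProbabilityMeasure_tilted .of_finite

variable [Fintype α]

lemma integral_tilted_count (f g : α → ℝ) :
    ∫ x, g x ∂Measure.count.tilted f = ∑ x, exp (f x) / (∑ z, exp (f z)) * g x := by
  rw [integral_tilted, integral_count, integral_count]
  rfl

lemma measureReal_tilted_count_singleton (f : α → ℝ) (x : α) :
    (Measure.count.tilted f).real {x} = exp (f x) / ∑ z, exp (f z) := by
  rw [← integral_indicator_one (measurableSet_singleton x), integral_tilted_count,
    sum_eq_single x (fun z _ hz => by simp [hz]) (by simp)]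
  simp

end Finite

lemma logSupermodular_tilted_count {α : Type*} [MeasurableSpace α] [MeasurableSingletonClass α]
    [Finite α] [Lattice α] {f : α → ℝ} (hf : ∀ a b, f a + f b ≤ f (a ⊓ b) + f (a ⊔ b)) :
    LogSupermodular (Measure.count.tilted f) := by
  have := Fintype.ofFinite α
  intro a b
  simp only [measureReal_tilted_count_singleton, div_mul_div_comm, ← exp_add]
  exact div_le_div_of_nonneg_right (exp_le_exp.2 (hf a b)) (by positivity)

lemma exp_mul_sigmoid_sub (a b : ℝ) :
    exp a * (1 - sigmoid (a - b)) = exp b * sigmoid (a - b) := by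
  rw [sigmoid_def, neg_sub, exp_sub]
  have := exp_pos a
  have := exp_pos b
  field_simp
  ring

variable {I : Type*} [Finite I] [DecidableEq I]

/-- Flipping the coordinate `t` cancels the terms in pairs. -/
lemma isCondProb_tilted_count (f : (I → Bool) → ℝ) :
    IsCondProb (Measure.count.tilted f) fun t y =>
      sigmoid (f (Function.update y t true) - f (Function.update y t false)) where
  mem_Icc _ _ := ⟨sigmoid_nonneg _, sigmoid_le_one _⟩
  integral_mul_eq_zero t h hh := by
    have hpair (y : I → Bool) (b : Bool) :
        h (Function.update y t b) = h y := by
      refine hh fun s hs => Function.update_of_ne hs _ _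
    have := Fintype.ofFinite I
    rw [integral_tilted_count]
    refine sum_involution (fun y _ => Function.update y t (!y t)) (fun y _ => ?_)
      (fun y _ _ heq => ?_) (fun y _ => mem_univ _) (fun y _ => by simp)
    · have hcancel := exp_mul_sigmoid_sub (f (Function.update y t true))
        (f (Function.update y t false))
      have hy : Function.update y t (y t) = y := Function.update_eq_self t y
      simp only [hpair, Function.update_idem, Function.update_self]
      set c := sigmoid (f (Function.update y t true) - f (Function.update y t false))
      rw [div_mul_eq_mul_div, div_mul_eq_mul_div, ← add_div]
      convert zero_div _
      cases hyt : y t <;> rw [hyt] at hy <;> rw [hy] at hcancel <;>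
        simp only [Bool.not_true, Bool.not_false, bval_true, bval_false] <;>
        linear_combination h y * hcancel
    · simpa using congrFun heq t

end Tilted

section Model

variable {k : ℕ} (β : Fin (k + 1) → ℝ) (v : Fin (k + 1) → ℕ)
  (H : ∀ j : Fin (k + 1), SimpleGraph (Fin (v j))) (n : ℕ)

/-- The Hamiltonian of the ERGM, the logarithm of its unnormalised weight. -/
def ergmHamiltonian (y : EdgeIdx n → Bool) : ℝ :=
  ∑ j, β j * homScale (v j) n * homCount (H j) y

/-- The ERGM as a measure, a Gibbs measure on the cube of edge-indicator vectors. -/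
def ergmMeasure : Measure (EdgeIdx n → Bool) := Measure.count.tilted (ergmHamiltonian β v H n)

instance : IsProbabilityMeasure (ergmMeasure β v H n) := isProbabilityMeasure_tilted_count _

lemma integral_ergmMeasure (g : (EdgeIdx n → Bool) → ℝ) :
    ∫ y, g y ∂ergmMeasure β v H n = ergmExp β v H n g := integral_tilted_count _ g

/-- The increment of the Hamiltonian when the edge `s` is added. -/
def ergmField (s : EdgeIdx n) (y : EdgeIdx n → Bool) : ℝ :=
  ∑ j, β j * ∑ e ∈ edgeIdxFinset (H j), rootedCount e s ((edgeIdxFinset (H j)).erase e) y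

/-- The conditional probability of the edge `s` given all the others. -/
def ergmCond (s : EdgeIdx n) (y : EdgeIdx n → Bool) : ℝ := sigmoid (ergmField β v H n s y)

lemma ergmHamiltonian_update_sub (s : EdgeIdx n) (y : EdgeIdx n → Bool) :
    ergmHamiltonian β v H n (Function.update y s true) -
      ergmHamiltonian β v H n (Function.update y s false) = ergmField β v H n s y := by
  simp only [ergmHamiltonian, ergmField, ← homCount_update_sub, ← sum_sub_distrib]
  exact sum_congr rfl fun j _ => by ring

lemma isCondProb_ergmCond : IsCondProb (ergmMeasure β v H n) (ergmCond β v H n) := by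
  have h := isCondProb_tilted_count (ergmHamiltonian β v H n)
  simp only [ergmHamiltonian_update_sub] at h
  exact h

lemma logSupermodular_ergmMeasure (hβ : ∀ j, 2 ≤ eCount (H j) → 0 ≤ β j) :
    LogSupermodular (ergmMeasure β v H n) := by
  refine logSupermodular_tilted_count fun a b => ?_
  simp only [ergmHamiltonian, ← sum_add_distrib, ← mul_add]
  refine sum_le_sum fun j _ => ?_
  rcases Nat.lt_or_ge (eCount (H j)) 2 with hj | hj
  · rw [homCount_add_eq (Nat.le_of_lt_succ hj)]
  · exact mul_le_mul_of_nonneg_left (homCount_add_le _ a b)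
      (mul_nonneg (hβ j hj) homScale_nonneg)

/-- A bound for the total variation of the field. -/
def fieldConst : ℝ := ∑ j, |β j| * (#(edgeIdxFinset (H j)) * (8 * #(edgeIdxFinset (H j))))

lemma fieldConst_nonneg : 0 ≤ fieldConst β v H := sum_nonneg fun j _ => by positivity

variable {n}

lemma abs_ergmField_update_sub_le (hn : 2 ≤ n) (s t : EdgeIdx n) (y : EdgeIdx n → Bool) :
    |ergmField β v H n s (Function.update y t true) -
      ergmField β v H n s (Function.update y t false)| ≤ fieldConst β v H / n := by
  unfold ergmField fieldConst
  rw [← sum_sub_distrib, sum_div]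
  refine (abs_sum_le_sum_abs _ _).trans (sum_le_sum fun j _ => ?_)
  rw [← mul_sub, abs_mul, mul_div_assoc, ← sum_sub_distrib, mul_div_assoc, ← nsmul_eq_mul]
  refine mul_le_mul_of_nonneg_left ((abs_sum_le_sum_abs _ _).trans
    (sum_le_card_nsmul _ _ _ fun e _ => ?_)) (abs_nonneg _)
  refine (abs_rootedCount_update_sub_le hn (notMem_erase e _) s t y).trans ?_
  gcongr
  exact erase_subset _ _

lemma sum_ergmField_update_sub (t : EdgeIdx n) (y : EdgeIdx n → Bool) :
    ∑ s, (ergmField β v H n s (Function.update y t true) -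
      ergmField β v H n s (Function.update y t false)) =
      ∑ j, β j * ∑ e ∈ edgeIdxFinset (H j), ∑ e' ∈ (edgeIdxFinset (H j)).erase e,
        rootedCount e' t (((edgeIdxFinset (H j)).erase e).erase e') y := by
  simp only [ergmField, ← sum_sub_distrib, ← mul_sub]
  rw [sum_comm]
  refine sum_congr rfl fun j _ => ?_
  rw [← mul_sum, sum_comm]
  exact congrArg _ (sum_congr rfl fun e _ => sum_rootedCount_update_sub _ _ _ _)

end Model

/-! ### A pointwise law of large numbers for rooted counts -/

lemma abs_update_false_sub_le {I : Type*} [DecidableEq I] (F : (I → Bool) → ℝ) (t : I)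
    (y : I → Bool) : |F y - F (Function.update y t false)| ≤
      |F (Function.update y t true) - F (Function.update y t false)| := by
  cases h : y t
  · rw [show Function.update y t false = y by simp [← h], sub_self, abs_zero]
    exact abs_nonneg _
  · rw [show Function.update y t true = y by simp [← h]]

section RootedNoise

variable {v n : ℕ} {σ : EdgeIdx n → (EdgeIdx n → Bool) → ℝ}

/-- The rooted count of `insert e₁ A` with the indicator of the image of `e₁` replaced by its
conditional probability. -/
def condRootedCount (σ : EdgeIdx n → (EdgeIdx n → Bool) → ℝ) (e e₁ : EdgeIdx v) (s : EdgeIdx n)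
    (A : Finset (EdgeIdx v)) (y : EdgeIdx n → Bool) : ℝ :=
  homScale v n * ∑ φ : Fin v ↪ Fin n with edgeMap φ e = s,
    edgeMonomial φ A y * σ (edgeMap φ e₁) y

/-- The difference between the rooted count of `insert e₁ A` and `condRootedCount`, as a
conditionally centred sum. -/
def rootedNoise (σ : EdgeIdx n → (EdgeIdx n → Bool) → ℝ) (e e₁ : EdgeIdx v) (s : EdgeIdx n)
    (A : Finset (EdgeIdx v)) (y : EdgeIdx n → Bool) : ℝ :=
  homScale v n * ∑ φ : Fin v ↪ Fin n with edgeMap φ e = s,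
    edgeMonomial φ A y * (bval (y (edgeMap φ e₁)) - σ (edgeMap φ e₁) y)

lemma rootedNoise_eq {e₁ : EdgeIdx v} {A : Finset (EdgeIdx v)} (h₁ : e₁ ∉ A) (e : EdgeIdx v)
    (s : EdgeIdx n) (y : EdgeIdx n → Bool) : rootedNoise σ e e₁ s A y =
      rootedCount e s (insert e₁ A) y - condRootedCount σ e e₁ s A y := by
  simp only [rootedNoise, rootedCount, condRootedCount, mul_sub, sum_sub_distrib,
    edgeMonomial_eq_erase_mul _ (mem_insert_self e₁ A), erase_insert h₁]

lemma le_condRootedCount {a : ℝ} {y : EdgeIdx n → Bool} (h : ∀ s, a ≤ σ s y) (e e₁ : EdgeIdx v)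
    (s : EdgeIdx n) (A : Finset (EdgeIdx v)) :
    rootedCount e s A y * a ≤ condRootedCount σ e e₁ s A y := by
  rw [rootedCount, condRootedCount, mul_assoc, sum_mul]
  exact mul_le_mul_of_nonneg_left (sum_le_sum fun φ _ =>
    mul_le_mul_of_nonneg_left (h _) (edgeMonomial_nonneg _ _ _)) homScale_nonneg

lemma condRootedCount_le {b : ℝ} {y : EdgeIdx n → Bool} (h : ∀ s, σ s y ≤ b) (e e₁ : EdgeIdx v)
    (s : EdgeIdx n) (A : Finset (EdgeIdx v)) :
    condRootedCount σ e e₁ s A y ≤ rootedCount e s A y * b := by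
  rw [rootedCount, condRootedCount, mul_assoc, sum_mul]
  exact mul_le_mul_of_nonneg_left (sum_le_sum fun φ _ =>
    mul_le_mul_of_nonneg_left (h _) (edgeMonomial_nonneg _ _ _)) homScale_nonneg

lemma abs_condRootedCount_sub_le (hn : 2 ≤ n) (hσ : ∀ s y, σ s y ∈ Set.Icc 0 1) {D : ℝ}
    {y y' : EdgeIdx n → Bool} (hy : y ≤ y') (hD : ∀ s, |σ s y' - σ s y| ≤ D) (e e₁ : EdgeIdx v)
    (s : EdgeIdx n) (A : Finset (EdgeIdx v)) :
    |condRootedCount σ e e₁ s A y' - condRootedCount σ e e₁ s A y| ≤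
      rootedCount e s A y' - rootedCount e s A y + 4 * D := by
  have hD₀ : 0 ≤ D := (abs_nonneg _).trans (hD s)
  have hterm (φ : Fin v ↪ Fin n) :
      |edgeMonomial φ A y' * σ (edgeMap φ e₁) y' - edgeMonomial φ A y * σ (edgeMap φ e₁) y| ≤
        edgeMonomial φ A y' - edgeMonomial φ A y + D := by
    have hmono := edgeMonomial_monotone φ A hy
    have h₀ := edgeMonomial_nonneg φ A y
    have h₁ := edgeMonomial_le_one φ A y
    obtain ⟨hσ₀, hσ₁⟩ := hσ (edgeMap φ e₁) y'
    obtain ⟨hl, hu⟩ := abs_le.1 (hD (edgeMap φ e₁))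
    rw [abs_le]
    constructor <;> nlinarith
  calc _ ≤ homScale v n * ∑ φ : Fin v ↪ Fin n with edgeMap φ e = s,
          (edgeMonomial φ A y' - edgeMonomial φ A y + D) := by
        rw [condRootedCount, condRootedCount, ← mul_sub, ← sum_sub_distrib, abs_mul,
          abs_of_nonneg homScale_nonneg]
        exact mul_le_mul_of_nonneg_left ((abs_sum_le_sum_abs _ _).trans
          (sum_le_sum fun φ _ => hterm φ)) homScale_nonneg
    _ = rootedCount e s A y' - rootedCount e s A y +
          homScale v n * #{φ : Fin v ↪ Fin n | edgeMap φ e = s} * D := by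
        rw [sum_add_distrib, sum_sub_distrib, sum_const, nsmul_eq_mul, rootedCount, rootedCount]
        ring
    _ ≤ _ := by gcongr; exact homScale_mul_card_le_four hn e s

lemma abs_rootedNoise_update_sub_le (hn : 2 ≤ n) (hσ : ∀ s y, σ s y ∈ Set.Icc 0 1) {L : ℝ}
    {t : EdgeIdx n} {y : EdgeIdx n → Bool}
    (hL : ∀ s, |σ s (Function.update y t true) - σ s (Function.update y t false)| ≤ L / n)
    {e e₁ : EdgeIdx v} {A : Finset (EdgeIdx v)} (he : e ∉ insert e₁ A) (h₁ : e₁ ∉ A)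
    (s : EdgeIdx n) :
    |rootedNoise σ e e₁ s A (Function.update y t true) -
      rootedNoise σ e e₁ s A (Function.update y t false)| ≤ (16 * (#A + 1) + 4 * L) / n := by
  have hcount := abs_rootedCount_update_sub_le hn he s t y
  have hcount' := (le_abs_self _).trans
    (abs_rootedCount_update_sub_le hn (fun h => he (mem_insert_of_mem h)) s t y)
  have hcond := abs_condRootedCount_sub_le hn hσ (update_false_le_update_true y t) hL e e₁ s A
  rw [card_insert_of_notMem h₁, Nat.cast_succ] at hcount
  rw [rootedNoise_eq h₁, rootedNoise_eq h₁, sub_sub_sub_comm]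
  have hn₀ : 0 ≤ 8 / (n : ℝ) := by positivity
  calc _ ≤ 8 * (#A + 1 : ℝ) / n + (8 * #A / n + 4 * (L / n)) :=
        (abs_sub _ _).trans (by linarith)
    _ = (16 * (#A + 1) + 4 * L) / n - 8 / n := by ring
    _ ≤ _ := sub_le_self _ hn₀

variable {μ : Measure (EdgeIdx n → Bool)} [IsProbabilityMeasure μ]

lemma measureReal_lt_abs_rootedNoise_le (M : IsCondProb μ σ) (hn : 2 ≤ n) {L : ℝ}
    (hL : ∀ s t y, |σ s (Function.update y t true) - σ s (Function.update y t false)| ≤ L / n)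
    {e e₁ : EdgeIdx v} {A : Finset (EdgeIdx v)} (he : e ∉ insert e₁ A) (h₁ : e₁ ∉ A)
    (s : EdgeIdx n) {K l : ℝ} (hK₀ : 0 ≤ K) (hK : 16 * (#A + 1) + 4 * L ≤ K) (hKn : K ≤ n)
    (hl : 0 < l) (hln : l ^ 4 = 1 / n) (m : ℕ) :
    μ.real {y | l < |rootedNoise σ e e₁ s A y|} ≤ noiseConst 4 m * K ^ m * l ^ (2 * m) := by
  have hn₀ : (0 : ℝ) < n := by positivity
  have hmoment : ∫ y, rootedNoise σ e e₁ s A y ^ (2 * m) ∂μ ≤ noiseConst 4 m * (K / n) ^ m := by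
    refine M.integral_noise_pow_le (S := {φ : Fin v ↪ Fin n | edgeMap φ e = s})
      homScale_nonneg (by positivity) (by rwa [div_le_one hn₀]) (homScale_mul_card_le_four hn e s)
      (fun φ _ y => ?_) (fun φ _ y y' hy => ?_) (fun y => rfl) (fun t y => ?_) m
    · rw [abs_of_nonneg (edgeMonomial_nonneg _ _ _)]
      exact edgeMonomial_le_one φ A y
    · refine prod_congr rfl fun e' he' => congrArg bval (hy _ fun h => h₁ ?_)
      rwa [← edgeMap_injective φ h]
    · refine (abs_update_false_sub_le _ t y).trans
        ((abs_rootedNoise_update_sub_le hn M.mem_Icc (fun s => hL s t y) he h₁ s).trans ?_)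
      gcongr
  calc _ ≤ _ := measureReal_lt_abs_le_integral_pow_div _ hl m
    _ ≤ noiseConst 4 m * (K / n) ^ m / l ^ (2 * m) := by gcongr
    _ = noiseConst 4 m * (K * l ^ 4) ^ m / l ^ (2 * m) := by rw [hln, mul_one_div]
    _ = _ := by field_simp; ring

/-- All the replacement errors for graphs on `v` vertices are at most `l`. -/
def NoiseLE (v : ℕ) (σ : EdgeIdx n → (EdgeIdx n → Bool) → ℝ) (l : ℝ) (y : EdgeIdx n → Bool) :
    Prop :=
  ∀ (e e₁ : EdgeIdx v) (s : EdgeIdx n) (A : Finset (EdgeIdx v)), e ∉ insert e₁ A → e₁ ∉ A →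
    |rootedNoise σ e e₁ s A y| ≤ l

/-- The number of choices of `(e, e₁, A)` in `NoiseLE`. -/
def noiseCard (v : ℕ) : ℕ := Fintype.card (EdgeIdx v × EdgeIdx v × Finset (EdgeIdx v))

lemma EdgeIdx.cast_card_le_sq (n : ℕ) : (Fintype.card (EdgeIdx n) : ℝ) ≤ (n : ℝ) ^ 2 := by
  rw [cast_card]
  nlinarith [Nat.cast_nonneg (α := ℝ) n]

lemma measureReal_not_noiseLE_le (M : IsCondProb μ σ) (hn : 2 ≤ n) {L : ℝ}
    (hL : ∀ s t y, |σ s (Function.update y t true) - σ s (Function.update y t false)| ≤ L / n)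
    {K l : ℝ} (hK₀ : 0 ≤ K) (hK : 16 * (Fintype.card (EdgeIdx v) + 1 : ℝ) + 4 * L ≤ K)
    (hKn : K ≤ n) (hl : 0 < l) (hln : l ^ 4 = 1 / n) :
    μ.real {y | ¬ NoiseLE v σ l y} ≤ noiseCard v * (noiseConst 4 16 * K ^ 16) * l ^ 24 := by
  set T : Finset ((EdgeIdx v × EdgeIdx v × Finset (EdgeIdx v)) × EdgeIdx n) :=
    {i | i.1.1 ∉ insert i.1.2.1 i.1.2.2 ∧ i.1.2.1 ∉ i.1.2.2}
  have hsub : {y | ¬ NoiseLE v σ l y} ⊆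
      ⋃ i ∈ T, {y | l < |rootedNoise σ i.1.1 i.1.2.1 i.2 i.1.2.2 y|} := fun y hy => by
    simp only [NoiseLE, Set.mem_ofPred_eq] at hy
    push Not at hy
    obtain ⟨e, e₁, s, A, he, h₁, hlt⟩ := hy
    exact Set.mem_iUnion₂.2 ⟨((e, e₁, A), s), mem_filter.2 ⟨mem_univ _, he, h₁⟩, hlt⟩
  have hprob : ∀ i ∈ T, μ.real {y | l < |rootedNoise σ i.1.1 i.1.2.1 i.2 i.1.2.2 y|} ≤
      noiseConst 4 16 * K ^ 16 * l ^ (2 * 16) := fun i hi => by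
    obtain ⟨he, h₁⟩ := (mem_filter.1 hi).2
    refine measureReal_lt_abs_rootedNoise_le M hn hL he h₁ i.2 hK₀ (le_trans ?_ hK) hKn hl hln 16
    gcongr
    exact card_le_univ _
  have hcard : (#T : ℝ) ≤ noiseCard v * (n : ℝ) ^ 2 := by
    calc (#T : ℝ) ≤ noiseCard v * (Fintype.card (EdgeIdx n) : ℝ) := by
          exact_mod_cast (card_le_univ T).trans_eq (Fintype.card_prod _ _)
      _ ≤ _ := by gcongr; exact EdgeIdx.cast_card_le_sq n
  have hscale : (n : ℝ) ^ 2 * l ^ (2 * 16) = l ^ 24 := by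
    have : l ^ (2 * 16) = (l ^ 4) ^ 2 * l ^ 24 := by ring
    rw [this, hln]
    field_simp
  have hc := noiseConst_nonneg (C := 4) (by norm_num) 16
  calc _ ≤ ∑ i ∈ T, μ.real {y | l < |rootedNoise σ i.1.1 i.1.2.1 i.2 i.1.2.2 y|} :=
        (measureReal_mono hsub (measure_ne_top _ _)).trans (measureReal_biUnion_finset_le _ _)
    _ ≤ #T * (noiseConst 4 16 * K ^ 16 * l ^ (2 * 16)) := by
        rw [← nsmul_eq_mul]; exact sum_le_card_nsmul _ _ _ hprob
    _ ≤ noiseCard v * (n : ℝ) ^ 2 * (noiseConst 4 16 * K ^ 16 * l ^ (2 * 16)) := by gcongr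
    _ = noiseCard v * (noiseConst 4 16 * K ^ 16) * ((n : ℝ) ^ 2 * l ^ (2 * 16)) := by ring
    _ = _ := by rw [hscale]

end RootedNoise

section LawOfLargeNumbers

variable {v n : ℕ} {σ : EdgeIdx n → (EdgeIdx n → Bool) → ℝ} {l : ℝ} {y : EdgeIdx n → Bool}

lemma NoiseLE.abs_rootedCount_insert_sub_le (hy : NoiseLE v σ l y) {e e₁ : EdgeIdx v}
    {A : Finset (EdgeIdx v)} (he : e ∉ insert e₁ A) (h₁ : e₁ ∉ A) (s : EdgeIdx n) :
    |rootedCount e s (insert e₁ A) y - condRootedCount σ e e₁ s A y| ≤ l := by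
  rw [← rootedNoise_eq h₁]
  exact hy e e₁ s A he h₁

lemma NoiseLE.rootedCount_mem_Icc (hn : 2 ≤ n) (hl : 0 ≤ l) (hy : NoiseLE v σ l y) {a b : ℝ}
    (ha : 0 ≤ a) (hb : b ≤ 1) (hσ : ∀ s, σ s y ∈ Set.Icc a b) (e : EdgeIdx v) (s : EdgeIdx n)
    {A : Finset (EdgeIdx v)} (he : e ∉ A) :
    rootedCount e s A y ∈ Set.Icc (2 * a ^ #A - (#A * l + (2 * (v : ℝ) ^ 2 + 4) / n))
      (2 * b ^ #A + (#A * l + (2 * (v : ℝ) ^ 2 + 4) / n)) := by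
  induction A using Finset.induction_on with
  | empty =>
    obtain ⟨hlo, hup⟩ := abs_le.1 (abs_rootedCount_empty_sub_two_le hn e s y)
    simp only [card_empty, pow_zero, Nat.cast_zero]
    constructor <;> linarith
  | insert e₁ A h₁ ih =>
    obtain ⟨ihlo, ihup⟩ := ih fun h => he (mem_insert_of_mem h)
    obtain ⟨hlo, hup⟩ := abs_le.1 (hy.abs_rootedCount_insert_sub_le he h₁ s)
    have hcondlo := le_condRootedCount (fun s => (hσ s).1) e e₁ s A
    have hcondup := condRootedCount_le (fun s => (hσ s).2) e e₁ s A
    have hab : a ≤ b := (hσ s).1.trans (hσ s).2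
    set c := #A * l + (2 * (v : ℝ) ^ 2 + 4) / n with hc
    have hc₀ : 0 ≤ c := by positivity
    have hca : c * a ≤ c := mul_le_of_le_one_right hc₀ (hab.trans hb)
    have hcb : c * b ≤ c := mul_le_of_le_one_right hc₀ hb
    have hmullo := mul_le_mul_of_nonneg_right ihlo ha
    have hmulup := mul_le_mul_of_nonneg_right ihup (ha.trans hab)
    rw [card_insert_of_notMem h₁, pow_succ a, pow_succ b, Nat.cast_succ]
    constructor <;> linarith

lemma NoiseLE.abs_rootedCount_sub_le (hn : 2 ≤ n) (hy : NoiseLE v σ l y) {p d : ℝ} (hp₀ : 0 ≤ p)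
    (hp₁ : p ≤ 1) (hσ : ∀ s, |σ s y - p| ≤ d) (e : EdgeIdx v) (s : EdgeIdx n)
    {A : Finset (EdgeIdx v)} (he : e ∉ A) :
    |rootedCount e s A y - 2 * p ^ #A| ≤ #A * (4 * d + l) + (2 * (v : ℝ) ^ 2 + 4) / n := by
  induction A using Finset.induction_on with
  | empty => simpa using abs_rootedCount_empty_sub_two_le hn e s y
  | insert e₁ A h₁ ih =>
    have ih := ih fun h => he (mem_insert_of_mem h)
    obtain ⟨hlo, hup⟩ := abs_le.1 (hy.abs_rootedCount_insert_sub_le he h₁ s)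
    have hcondlo := le_condRootedCount (σ := σ) (y := y) (a := p - d)
      (fun s => by linarith [(abs_le.1 (hσ s)).1]) e e₁ s A
    have hcondup := condRootedCount_le (σ := σ) (y := y) (b := p + d)
      (fun s => by linarith [(abs_le.1 (hσ s)).2]) e e₁ s A
    have hd : 0 ≤ d := (abs_nonneg _).trans (hσ s)
    have hcount := mul_le_mul_of_nonneg_right (rootedCount_le_four hn e s A y) hd
    have hmul : |(rootedCount e s A y - 2 * p ^ #A) * p| ≤
        #A * (4 * d + l) + (2 * (v : ℝ) ^ 2 + 4) / n := by
      rw [abs_mul, abs_of_nonneg hp₀]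
      exact (mul_le_of_le_one_right (abs_nonneg _) hp₁).trans ih
    rw [abs_le] at hmul ⊢
    rw [card_insert_of_notMem h₁, pow_succ p, Nat.cast_succ]
    constructor <;> linarith

end LawOfLargeNumbers

/-! ### The mean-field equation -/

section MeanField

lemma exists_pos_le_of_forall_ne_zero {α : Type*} [TopologicalSpace α] {s : Set α}
    (hs : IsCompact s) (hs' : IsPreconnected s) {g : α → ℝ} (hg : ContinuousOn g s) {p : α}
    (hp : p ∈ s) (hgp : 0 < g p) (hne : ∀ a ∈ s, g a ≠ 0) : ∃ c > 0, ∀ a ∈ s, c ≤ g a := by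
  obtain ⟨b, hb, hmin⟩ := hs.exists_isMinOn ⟨p, hp⟩ hg
  refine ⟨g b, lt_of_not_ge fun hgb => ?_, hmin⟩
  obtain ⟨a, ha, hga⟩ := hs'.intermediate_value hb hp hg ⟨hgb, hgp.le⟩
  exact hne a ha hga

lemma exists_mul_sq_le_mul_sub {f : ℝ → ℝ} (hf : Differentiable ℝ f) {p : ℝ}
    (hp : p ∈ Set.Ioo (0 : ℝ) 1) (hfix : f p = p)
    (huniq : ∀ q ∈ Set.Ioo (0 : ℝ) 1, f q = q → q = p) (hderiv : deriv f p < 1)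
    (hf₀ : 0 < f 0) (hf₁ : f 1 < 1) :
    ∃ c > 0, ∀ a ∈ Set.Icc (0 : ℝ) 1, c * (a - p) ^ 2 ≤ (a - p) * (a - f a) := by
  set F : ℝ → ℝ := fun a => a - f a
  have hF : Differentiable ℝ F := differentiable_id.sub hf
  have hslope (a : ℝ) : (a - p) * dslope F p a = a - f a := by
    simpa [F, hfix] using sub_smul_dslope F p a
  have hcont : Continuous (dslope F p) := by
    rw [← continuousOn_univ, continuousOn_dslope Filter.univ_mem]
    exact ⟨hF.continuous.continuousOn, hF p⟩
  have hpos : 0 < dslope F p p := by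
    rw [dslope_same, deriv_fun_sub differentiableAt_fun_id (hf p), deriv_id'']
    linarith
  have hne : ∀ a ∈ Set.Icc (0 : ℝ) 1, dslope F p a ≠ 0 := fun a ha hzero => by
    have hfa : f a = a := by linarith [hslope a, mul_eq_zero_of_right (a - p) hzero]
    have ha₀ : a ≠ 0 := fun h => by rw [h] at hfa; linarith
    have ha₁ : a ≠ 1 := fun h => by rw [h] at hfa; linarith
    rw [huniq a ⟨ha.1.lt_of_ne' ha₀, ha.2.lt_of_ne ha₁⟩ hfa] at hzero
    exact hpos.ne' hzero
  obtain ⟨c, hc, hcle⟩ := exists_pos_le_of_forall_ne_zero isCompact_Icc isPreconnected_Icc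
    hcont.continuousOn (Set.Ioo_subset_Icc_self hp) hpos hne
  refine ⟨c, hc, fun a ha => ?_⟩
  rw [← hslope a, ← mul_assoc, ← sq, mul_comm]
  exact mul_le_mul_of_nonneg_left (hcle a ha) (sq_nonneg _)

lemma sub_le_div_of_mul_sq_le {c a p x δ : ℝ} (hc : 0 < c) (hδ : 0 ≤ δ)
    (h : c * (a - p) ^ 2 ≤ (a - p) * (a - x)) (hx : a - x ≤ δ) : a - p ≤ δ / c := by
  rcases le_or_gt (a - p) 0 with hap | hap
  · exact hap.trans (by positivity)
  · rw [le_div_iff₀' hc]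
    refine le_of_mul_le_mul_left ?_ hap
    nlinarith

lemma abs_sigmoid_sub_le (a b : ℝ) : |sigmoid a - sigmoid b| ≤ |a - b| := by
  refine (Convex.norm_image_sub_le_of_norm_deriv_le (f := sigmoid) (C := 1) (s := Set.univ)
    (fun x _ => differentiable_sigmoid x) (fun x _ => ?_) convex_univ trivial trivial).trans_eq
    (one_mul _)
  rw [deriv_sigmoid, norm_eq_abs, abs_le]
  constructor <;> nlinarith [sigmoid_pos x, sigmoid_lt_one x]

lemma abs_deriv_sigmoid_sub_le (a b : ℝ) :
    |sigmoid a * (1 - sigmoid a) - sigmoid b * (1 - sigmoid b)| ≤ |a - b| := by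
  have hfactor : |1 - sigmoid a - sigmoid b| ≤ 1 := by
    rw [abs_le]
    constructor <;> linarith [sigmoid_pos a, sigmoid_lt_one a, sigmoid_pos b, sigmoid_lt_one b]
  calc _ = |sigmoid a - sigmoid b| * |1 - sigmoid a - sigmoid b| := by rw [← abs_mul]; ring_nf
    _ ≤ |sigmoid a - sigmoid b| := mul_le_of_le_one_right (abs_nonneg _) hfactor
    _ ≤ _ := abs_sigmoid_sub_le a b

lemma abs_sigmoid_sub_sub_mul_le {x a b d : ℝ} (ha : |a - x| ≤ d) (hb : |b - x| ≤ d) :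
    |sigmoid b - sigmoid a - sigmoid x * (1 - sigmoid x) * (b - a)| ≤ d * |b - a| := by
  have hderiv (z : ℝ) : HasDerivAt (fun z => sigmoid z - sigmoid x * (1 - sigmoid x) * z)
      (sigmoid z * (1 - sigmoid z) - sigmoid x * (1 - sigmoid x)) z := by
    simpa using (hasDerivAt_sigmoid z).fun_sub
      ((hasDerivAt_id z).const_mul (sigmoid x * (1 - sigmoid x)))
  have hmem {z : ℝ} : z ∈ Set.Icc (x - d) (x + d) ↔ |z - x| ≤ d := by
    rw [Set.mem_Icc, abs_le, neg_le_sub_iff_le_add, sub_le_iff_le_add, sub_le_iff_le_add,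
      add_comm d]
  have hmean := Convex.norm_image_sub_le_of_norm_hasDerivWithin_le
    (fun z _ => (hderiv z).hasDerivWithinAt)
    (fun z hz => (abs_deriv_sigmoid_sub_le z x).trans (hmem.1 hz)) (convex_Icc _ _)
    (hmem.2 ha) (hmem.2 hb)
  refine le_trans (le_of_eq ?_) hmean
  rw [norm_eq_abs]
  ring_nf

lemma mul_mem_Icc_of_mem_Icc {b x u w d : ℝ} (hb : 0 ≤ b ∨ u = w)
    (hx : x ∈ Set.Icc (u - d) (w + d)) :
    b * x ∈ Set.Icc (b * u - |b| * d) (b * w + |b| * d) := by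
  obtain ⟨hlo, hup⟩ := hx
  rcases hb with hb | rfl
  · rw [abs_of_nonneg hb]
    constructor <;> nlinarith
  · have habs : |b * (x - u)| ≤ |b| * d := by
      rw [abs_mul]
      exact mul_le_mul_of_nonneg_left (abs_le.2 ⟨by linarith, by linarith⟩) (abs_nonneg b)
    rw [abs_le] at habs
    constructor <;> linarith

variable {k : ℕ} (β : Fin (k + 1) → ℝ) (v : Fin (k + 1) → ℕ)
  (H : ∀ j : Fin (k + 1), SimpleGraph (Fin (v j)))

lemma phiFn_eq_sigmoid (a : ℝ) : phiFn β v H a = sigmoid (2 * PhiFn β v H a) := by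
  rw [phiFn, sigmoid_def, exp_neg]
  field_simp

lemma differentiable_PhiFn : Differentiable ℝ (PhiFn β v H) := by
  unfold PhiFn
  fun_prop

lemma differentiable_phiFn : Differentiable ℝ (phiFn β v H) := by
  rw [funext (phiFn_eq_sigmoid β v H)]
  exact differentiable_sigmoid.comp ((differentiable_PhiFn β v H).const_mul 2)

lemma sum_pow_card_erase {α : Type*} [DecidableEq α] (A : Finset α) (a : ℝ) :
    ∑ e ∈ A, a ^ #(A.erase e) = #A * a ^ (#A - 1) := by
  rw [sum_congr rfl fun e he => by rw [card_erase_of_mem he], sum_const, nsmul_eq_mul]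

lemma PhiFn_eq_sum (a : ℝ) : PhiFn β v H a =
    ∑ j, β j * ∑ e ∈ edgeIdxFinset (H j), a ^ #((edgeIdxFinset (H j)).erase e) := by
  simp only [sum_pow_card_erase, PhiFn, eCount_eq_card, mul_assoc]

lemma deriv_PhiFn (a : ℝ) : deriv (PhiFn β v H) a =
    ∑ j, β j * ∑ e ∈ edgeIdxFinset (H j), ∑ e' ∈ (edgeIdxFinset (H j)).erase e,
      a ^ #(((edgeIdxFinset (H j)).erase e).erase e') := by
  refine HasDerivAt.deriv ?_
  rw [funext (PhiFn_eq_sum β v H)]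
  refine HasDerivAt.fun_sum fun j _ => (HasDerivAt.fun_sum fun e _ => ?_).const_mul _
  rw [sum_pow_card_erase]
  exact hasDerivAt_pow _ a

lemma deriv_phiFn {p : ℝ} (hfix : phiFn β v H p = p) :
    deriv (phiFn β v H) p = p * (1 - p) * (2 * deriv (PhiFn β v H) p) := by
  have hcomp := (hasDerivAt_sigmoid (2 * PhiFn β v H p)).comp p
    ((differentiable_PhiFn β v H p).hasDerivAt.const_mul 2)
  rw [← phiFn_eq_sigmoid, hfix] at hcomp
  rw [funext (phiFn_eq_sigmoid β v H)]
  exact hcomp.deriv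

end MeanField

section LocalLaw

variable {k : ℕ} {β : Fin (k + 1) → ℝ} {v : Fin (k + 1) → ℕ}
  {H : ∀ j : Fin (k + 1), SimpleGraph (Fin (v j))} {n : ℕ}

variable (β v H) in
/-- A bound for the error in the local law for the field. -/
def lawConst : ℝ :=
  ∑ j, |β j| * (#(edgeIdxFinset (H j)) * (#(edgeIdxFinset (H j)) + (2 * (v j : ℝ) ^ 2 + 4)))

variable (β v H) in
lemma lawConst_nonneg : 0 ≤ lawConst β v H := sum_nonneg fun j _ => by positivity

variable {l : ℝ} {y : EdgeIdx n → Bool}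

lemma NoiseLE.sum_rootedCount_mem_Icc {w : ℕ} {σ : EdgeIdx n → (EdgeIdx n → Bool) → ℝ}
    (hn : 2 ≤ n) (hl : 0 ≤ l) (hnl : 1 / (n : ℝ) ≤ l) (hy : NoiseLE w σ l y) {a b : ℝ}
    (ha : 0 ≤ a) (hb : b ≤ 1) (hσ : ∀ s, σ s y ∈ Set.Icc a b) (s : EdgeIdx n)
    (A : Finset (EdgeIdx w)) :
    ∑ e ∈ A, rootedCount e s (A.erase e) y ∈
      Set.Icc (∑ e ∈ A, 2 * a ^ #(A.erase e) - #A * (#A + (2 * (w : ℝ) ^ 2 + 4)) * l)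
        (∑ e ∈ A, 2 * b ^ #(A.erase e) + #A * (#A + (2 * (w : ℝ) ^ 2 + 4)) * l) := by
  have hmem (e : EdgeIdx w) : rootedCount e s (A.erase e) y ∈
      Set.Icc (2 * a ^ #(A.erase e) - (#A + (2 * (w : ℝ) ^ 2 + 4)) * l)
        (2 * b ^ #(A.erase e) + (#A + (2 * (w : ℝ) ^ 2 + 4)) * l) := by
    have hcard : (#(A.erase e) : ℝ) * l ≤ #A * l := by gcongr; exact erase_subset _ _
    have hscale : (2 * (w : ℝ) ^ 2 + 4) / n ≤ (2 * (w : ℝ) ^ 2 + 4) * l := by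
      rw [div_eq_mul_one_div]; gcongr
    refine Set.Icc_subset_Icc ?_ ?_ (hy.rootedCount_mem_Icc hn hl ha hb hσ e s (notMem_erase e A))
      <;> linarith
  rw [mul_assoc, ← nsmul_eq_mul, ← sum_const, ← sum_sub_distrib, ← sum_add_distrib]
  exact ⟨sum_le_sum fun e _ => (hmem e).1, sum_le_sum fun e _ => (hmem e).2⟩

/- A graph with at most one edge contributes a constant to the field. -/
lemma ergmField_mem_Icc (hβ : ∀ j, 2 ≤ eCount (H j) → 0 ≤ β j) (hn : 2 ≤ n)
    (hl : 0 ≤ l) (hnl : 1 / (n : ℝ) ≤ l) (hy : ∀ j, NoiseLE (v j) (ergmCond β v H n) l y)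
    {a b : ℝ} (ha : 0 ≤ a) (hb : b ≤ 1) (hσ : ∀ s, ergmCond β v H n s y ∈ Set.Icc a b)
    (s : EdgeIdx n) :
    ergmField β v H n s y ∈ Set.Icc (2 * PhiFn β v H a - lawConst β v H * l)
      (2 * PhiFn β v H b + lawConst β v H * l) := by
  have hterm (j : Fin (k + 1)) := mul_mem_Icc_of_mem_Icc (b := β j) (by
    rcases Nat.lt_or_ge (eCount (H j)) 2 with hj | hj
    · right
      simp only [← mul_sum, sum_pow_card_erase, ← eCount_eq_card,
        Nat.sub_eq_zero_of_le (Nat.le_of_lt_succ hj), pow_zero]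
    · exact .inl (hβ j hj)) ((hy j).sum_rootedCount_mem_Icc hn hl hnl ha hb hσ s
      (edgeIdxFinset (H j)))
  have hPhi (x : ℝ) : 2 * PhiFn β v H x = ∑ j, β j * ∑ e ∈ edgeIdxFinset (H j),
      2 * x ^ #((edgeIdxFinset (H j)).erase e) := by
    simp only [PhiFn_eq_sum, mul_sum, mul_left_comm]
  rw [hPhi, hPhi, ergmField, lawConst, sum_mul, ← sum_sub_distrib, ← sum_add_distrib]
  simp only [← mul_assoc] at hterm ⊢
  exact ⟨sum_le_sum fun j _ => (hterm j).1, sum_le_sum fun j _ => (hterm j).2⟩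

/-- The largest and the smallest conditional probability nearly satisfy the mean-field equation,
as one-sided inequalities. -/
lemma abs_ergmCond_sub_le_of_noiseLE (hβ : ∀ j, 2 ≤ eCount (H j) → 0 ≤ β j)
    (hn : 2 ≤ n) (hl : 0 ≤ l) (hnl : 1 / (n : ℝ) ≤ l) {p c : ℝ} (hc : 0 < c)
    (hcp : ∀ a ∈ Set.Icc (0 : ℝ) 1, c * (a - p) ^ 2 ≤ (a - p) * (a - phiFn β v H a))
    (hy : ∀ j, NoiseLE (v j) (ergmCond β v H n) l y) (s : EdgeIdx n) :
    |ergmCond β v H n s y - p| ≤ lawConst β v H / c * l := by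
  have : Nonempty (EdgeIdx n) := ⟨s⟩
  obtain ⟨s₀, hmin⟩ := Finite.exists_min fun s => ergmCond β v H n s y
  obtain ⟨s₁, hmax⟩ := Finite.exists_max fun s => ergmCond β v H n s y
  have hI (s) : ergmCond β v H n s y ∈ Set.Icc (0 : ℝ) 1 := ⟨sigmoid_nonneg _, sigmoid_le_one _⟩
  have hfield := ergmField_mem_Icc hβ hn hl hnl hy (hI s₀).1 (hI s₁).2
    fun s => ⟨hmin s, hmax s⟩
  set δ := lawConst β v H * l with hδ
  have hδ₀ : 0 ≤ δ := mul_nonneg (lawConst_nonneg β v H) hl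
  set a := ergmCond β v H n s₀ y
  set b := ergmCond β v H n s₁ y
  have hbσ : b ≤ sigmoid (2 * PhiFn β v H b + δ) := sigmoid_le (hfield s₁).2
  have haσ : sigmoid (2 * PhiFn β v H a - δ) ≤ a := sigmoid_le (hfield s₀).1
  have hb : b - phiFn β v H b ≤ δ := by
    have hle := abs_le.1 (abs_sigmoid_sub_le (2 * PhiFn β v H b + δ) (2 * PhiFn β v H b))
    rw [add_sub_cancel_left, abs_of_nonneg hδ₀] at hle
    rw [phiFn_eq_sigmoid]
    linarith [hle.2]
  have ha : -a - -phiFn β v H a ≤ δ := by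
    have hle := abs_le.1 (abs_sigmoid_sub_le (2 * PhiFn β v H a) (2 * PhiFn β v H a - δ))
    rw [sub_sub_cancel, abs_of_nonneg hδ₀] at hle
    rw [phiFn_eq_sigmoid]
    linarith [hle.2]
  have hbp := sub_le_div_of_mul_sq_le hc hδ₀ (hcp b (hI s₁)) hb
  have hap := sub_le_div_of_mul_sq_le (p := -p) hc hδ₀ (by linarith [hcp a (hI s₀)]) ha
  rw [div_mul_eq_mul_div, ← hδ, abs_le]
  constructor <;> linarith [hmin s, hmax s]

end LocalLaw

/-! ### The local set -/

section LocalSet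

/-- The configurations in which all rooted counts of graphs whose numbers of vertices lie in `W`
are within `d` of their mean-field values. -/
def localSet (W : Finset ℕ) (n : ℕ) (p d : ℝ) : Set (EdgeIdx n → Bool) :=
  {y | ∀ w ∈ W, ∀ (e : EdgeIdx w) (s : EdgeIdx n) (A : Finset (EdgeIdx w)), e ∉ A →
    |rootedCount e s A y - 2 * p ^ #A| ≤ d}

lemma ordConnected_localSet (W : Finset ℕ) (n : ℕ) (p d : ℝ) :
    (localSet W n p d).OrdConnected := by
  refine ⟨fun a ha b hb y hy w hw e s A he => ?_⟩
  have hlo := abs_le.1 (ha w hw e s A he)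
  have hup := abs_le.1 (hb w hw e s A he)
  rw [abs_le]
  constructor <;> linarith [rootedCount_monotone e s A hy.1, rootedCount_monotone e s A hy.2]

lemma le_one_of_pow_eq_one_div {k n : ℕ} {l : ℝ} (hk : k ≠ 0) (hl : 0 ≤ l)
    (hln : l ^ k = 1 / n) : l ≤ 1 := by
  refine (pow_le_one_iff_of_nonneg hl hk).1 ?_
  rw [hln, one_div]
  exact Nat.cast_inv_le_one n

lemma one_div_le_of_pow_eq_one_div {k n : ℕ} {l : ℝ} (hk : k ≠ 0) (hl : 0 ≤ l)
    (hln : l ^ k = 1 / n) : 1 / (n : ℝ) ≤ l := by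
  rw [← hln]
  exact pow_le_of_le_one hl (le_one_of_pow_eq_one_div hk hl hln) hk

variable {k : ℕ} {β : Fin (k + 1) → ℝ} {v : Fin (k + 1) → ℕ}
  {H : ∀ j : Fin (k + 1), SimpleGraph (Fin (v j))} {n : ℕ} {W : Finset ℕ} {p d : ℝ}

lemma mem_localSet_of_forall_noiseLE (hβ : ∀ j, 2 ≤ eCount (H j) → 0 ≤ β j)
    (hn : 2 ≤ n) {l : ℝ} (hl : 0 ≤ l) (hnl : 1 / (n : ℝ) ≤ l) (hp : p ∈ Set.Icc (0 : ℝ) 1)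
    {c : ℝ} (hc : 0 < c)
    (hcp : ∀ a ∈ Set.Icc (0 : ℝ) 1, c * (a - p) ^ 2 ≤ (a - p) * (a - phiFn β v H a))
    (hW : ∀ j, v j ∈ W) {C : ℝ}
    (hC : ∀ w ∈ W, Fintype.card (EdgeIdx w) * (4 * (lawConst β v H / c) + 1) +
      (2 * (w : ℝ) ^ 2 + 4) ≤ C)
    {y : EdgeIdx n → Bool} (hy : ∀ w ∈ W, NoiseLE w (ergmCond β v H n) l y) :
    y ∈ localSet W n p (C * l) := fun w hw e s A heA => by
  have hlaw : 0 ≤ lawConst β v H / c := div_nonneg (lawConst_nonneg β v H) hc.le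
  calc _ ≤ #A * (4 * (lawConst β v H / c * l) + l) + (2 * (w : ℝ) ^ 2 + 4) * (1 / n) := by
        rw [mul_one_div]
        exact (hy w hw).abs_rootedCount_sub_le hn hp.1 hp.2
          (abs_ergmCond_sub_le_of_noiseLE hβ hn hl hnl hc hcp fun j => hy _ (hW j)) e s heA
    _ ≤ Fintype.card (EdgeIdx w) * (4 * (lawConst β v H / c * l) + l) +
        (2 * (w : ℝ) ^ 2 + 4) * l := by gcongr; exact card_le_univ A
    _ = (Fintype.card (EdgeIdx w) * (4 * (lawConst β v H / c) + 1) +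
        (2 * (w : ℝ) ^ 2 + 4)) * l := by ring
    _ ≤ C * l := mul_le_mul_of_nonneg_right (hC w hw) hl

variable (β v H) in
lemma exists_measureReal_not_noiseLE_le (W : Finset ℕ) :
    ∃ C, 0 ≤ C ∧ ∃ n₀ : ℕ, ∀ n, 2 ≤ n → n₀ ≤ n → ∀ l : ℝ, 0 < l → l ^ 4 = 1 / n →
      (ergmMeasure β v H n).real (⋃ w ∈ W, {y | ¬NoiseLE w (ergmCond β v H n) l y}) ≤
        C * l ^ 24 := by
  set K : ℕ → ℝ := fun w => 16 * (Fintype.card (EdgeIdx w) + 1) + 4 * fieldConst β v H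
  have hK (w : ℕ) : 0 ≤ K w := by have := fieldConst_nonneg β v H; positivity
  obtain ⟨x, hx⟩ := (W.image K).exists_le
  obtain ⟨n₀, hn₀⟩ := exists_nat_ge x
  refine ⟨∑ w ∈ W, noiseCard w * (noiseConst 4 16 * K w ^ 16), sum_nonneg fun w _ => ?_, n₀,
    fun n hn hnn l hl hln => ?_⟩
  · have := noiseConst_nonneg (C := 4) (by norm_num) 16
    have := hK w
    positivity
  · rw [sum_mul]
    refine (measureReal_biUnion_finset_le _ _).trans (sum_le_sum fun w hw => ?_)
    have hKn : K w ≤ n :=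
      (hx _ (mem_image_of_mem K hw)).trans (hn₀.trans (Nat.cast_le.2 hnn))
    exact measureReal_not_noiseLE_le (isCondProb_ergmCond β v H n) hn
      (fun s t y => (abs_sigmoid_sub_le _ _).trans (abs_ergmField_update_sub_le β v H hn s t y))
      (hK w) le_rfl hKn hl hln

lemma exists_measureReal_compl_localSet_le (hβ : ∀ j, 2 ≤ eCount (H j) → 0 ≤ β j)
    (hp : p ∈ Set.Ioo (0 : ℝ) 1) (hfix : phiFn β v H p = p)
    (huniq : ∀ q ∈ Set.Ioo (0 : ℝ) 1, phiFn β v H q = q → q = p)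
    (hsub : deriv (phiFn β v H) p < 1) (hW : ∀ j, v j ∈ W) :
    ∃ C, 0 ≤ C ∧ ∃ n₀ : ℕ, ∀ n, 2 ≤ n → n₀ ≤ n → ∀ l : ℝ, 0 < l → l ^ 4 = 1 / n →
      (ergmMeasure β v H n).real (localSet W n p (C * l))ᶜ ≤ C * l ^ 24 := by
  obtain ⟨c, hc, hcp⟩ := exists_mul_sq_le_mul_sub (differentiable_phiFn β v H) hp hfix huniq hsub
    (by rw [phiFn_eq_sigmoid]; exact sigmoid_pos _)
    (by rw [phiFn_eq_sigmoid]; exact sigmoid_lt_one _)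
  obtain ⟨x, hx⟩ := (W.image fun w => Fintype.card (EdgeIdx w) * (4 * (lawConst β v H / c) + 1) +
    (2 * (w : ℝ) ^ 2 + 4)).exists_le
  obtain ⟨C, hC, n₀, hn₀⟩ := exists_measureReal_not_noiseLE_le β v H W
  refine ⟨max x C, le_max_of_le_right hC, n₀, fun n hn hnn l hl hln => ?_⟩
  have hsubset : (localSet W n p (max x C * l))ᶜ ⊆
      ⋃ w ∈ W, {y | ¬NoiseLE w (ergmCond β v H n) l y} := fun y hy => by
    contrapose! hy
    simp only [Set.mem_iUnion, Set.mem_ofPred_eq, not_exists, not_not] at hy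
    rw [Set.notMem_compl_iff]
    exact mem_localSet_of_forall_noiseLE hβ hn hl.le
      (one_div_le_of_pow_eq_one_div four_ne_zero hl.le hln) (Set.Ioo_subset_Icc_self hp) hc hcp hW
      (fun w hw => (hx _ (mem_image_of_mem _ hw)).trans (le_max_left _ _)) hy
  calc _ ≤ _ := measureReal_mono hsubset (measure_ne_top _ _)
    _ ≤ C * l ^ 24 := hn₀ n hn hnn l hl hln
    _ ≤ max x C * l ^ 24 := by gcongr; exact le_max_right _ _

end LocalSet

/-! ### Approximate affinity on the local set -/

section Affine

variable {k : ℕ} {β : Fin (k + 1) → ℝ} {v : Fin (k + 1) → ℕ}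
  {H : ∀ j : Fin (k + 1), SimpleGraph (Fin (v j))} {n : ℕ}

variable (β v H) in
/-- A bound for the error of the mean-field approximation of the field and of its increments. -/
def coeffSum : ℝ := ∑ j, |β j| * (#(edgeIdxFinset (H j)) * #(edgeIdxFinset (H j)))

variable (β v H) in
lemma coeffSum_nonneg : 0 ≤ coeffSum β v H := sum_nonneg fun j _ => by positivity

lemma ergmField_update_sub_nonneg (hβ : ∀ j, 2 ≤ eCount (H j) → 0 ≤ β j)
    (s t : EdgeIdx n) (y : EdgeIdx n → Bool) :
    0 ≤ ergmField β v H n s (Function.update y t true) -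
      ergmField β v H n s (Function.update y t false) := by
  rw [ergmField, ergmField, ← sum_sub_distrib]
  refine sum_nonneg fun j _ => ?_
  rw [← mul_sub, ← sum_sub_distrib]
  rcases Nat.lt_or_ge (eCount (H j)) 2 with hj | hj
  · rw [eCount_eq_card] at hj
    refine (mul_eq_zero_of_right _ (sum_eq_zero fun e he => ?_)).ge
    have hempty : (edgeIdxFinset (H j)).erase e = ∅ := by
      rw [← card_eq_zero, card_erase_of_mem he]
      omega
    rw [hempty, rootedCount_update_sub, sum_empty]
  · exact mul_nonneg (hβ j hj) (sum_nonneg fun e _ => sub_nonneg.2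
      (rootedCount_monotone e s _ (update_false_le_update_true y t)))

variable (β v H) in
lemma sum_ergmField_update_sub_le (hn : 2 ≤ n) (t : EdgeIdx n) (y : EdgeIdx n → Bool) :
    ∑ s, (ergmField β v H n s (Function.update y t true) -
      ergmField β v H n s (Function.update y t false)) ≤ coeffSum β v H * 4 := by
  rw [sum_ergmField_update_sub, coeffSum, sum_mul]
  refine sum_le_sum fun j _ => ?_
  rw [mul_assoc, mul_assoc]
  refine mul_le_mul (le_abs_self _) ?_
    (sum_nonneg fun e _ => sum_nonneg fun e' _ => rootedCount_nonneg _ _ _ _) (abs_nonneg _)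
  rw [← nsmul_eq_mul]
  refine sum_le_card_nsmul _ _ _ fun e _ => ?_
  refine (sum_le_card_nsmul _ _ 4 fun e' _ => rootedCount_le_four hn e' t _ y).trans ?_
  rw [nsmul_eq_mul]
  gcongr
  exact erase_subset _ _

lemma sum_abs_ergmCond_update_sub_le (hβ : ∀ j, 2 ≤ eCount (H j) → 0 ≤ β j)
    (hn : 2 ≤ n) (t : EdgeIdx n) (y : EdgeIdx n → Bool) :
    ∑ s, |ergmCond β v H n s (Function.update y t true) -
      ergmCond β v H n s (Function.update y t false)| ≤ coeffSum β v H * 4 :=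
  (sum_le_sum fun s _ => (abs_sigmoid_sub_le _ _).trans_eq
    (abs_of_nonneg (ergmField_update_sub_nonneg hβ s t y))).trans
    (sum_ergmField_update_sub_le β v H hn t y)

lemma abs_sum_sub_sum_le_card_mul {α : Type*} {S : Finset α} {f g : α → ℝ} {d : ℝ}
    (h : ∀ a ∈ S, |f a - g a| ≤ d) : |∑ a ∈ S, f a - ∑ a ∈ S, g a| ≤ #S * d := by
  rw [← sum_sub_distrib, ← nsmul_eq_mul]
  exact (abs_sum_le_sum_abs _ _).trans (sum_le_card_nsmul _ _ d h)

variable {W : Finset ℕ} {p d : ℝ} {y : EdgeIdx n → Bool}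

lemma abs_ergmField_sub_le (hW : ∀ j, v j ∈ W) (hd : 0 ≤ d) (hy : y ∈ localSet W n p d)
    (s : EdgeIdx n) : |ergmField β v H n s y - 2 * PhiFn β v H p| ≤ coeffSum β v H * d := by
  simp only [PhiFn_eq_sum, ergmField, coeffSum, sum_mul, mul_sum (a := (2 : ℝ)),
    ← sum_sub_distrib, mul_left_comm (2 : ℝ)]
  refine (abs_sum_le_sum_abs _ _).trans (sum_le_sum fun j _ => ?_)
  rw [← mul_sub, abs_mul, mul_assoc]
  refine mul_le_mul_of_nonneg_left ((abs_sum_sub_sum_le_card_mul fun e _ =>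
    hy _ (hW j) e s _ (notMem_erase e _)).trans ?_) (abs_nonneg _)
  exact mul_le_mul_of_nonneg_right (by exact_mod_cast Nat.le_mul_self _) hd

lemma abs_sum_ergmField_update_sub_le (hW : ∀ j, v j ∈ W) (hd : 0 ≤ d)
    (hy : y ∈ localSet W n p d) (t : EdgeIdx n) :
    |∑ s, (ergmField β v H n s (Function.update y t true) -
      ergmField β v H n s (Function.update y t false)) - 2 * deriv (PhiFn β v H) p| ≤
      coeffSum β v H * d := by
  simp only [sum_ergmField_update_sub, deriv_PhiFn, coeffSum, sum_mul, mul_sum (a := (2 : ℝ)),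
    ← sum_sub_distrib, mul_left_comm (2 : ℝ)]
  refine (abs_sum_le_sum_abs _ _).trans (sum_le_sum fun j _ => ?_)
  rw [← mul_sub, abs_mul, mul_assoc, mul_assoc]
  refine mul_le_mul_of_nonneg_left (abs_sum_sub_sum_le_card_mul fun e _ =>
    (abs_sum_sub_sum_le_card_mul fun e' _ => hy _ (hW j) e' t _ (notMem_erase e' _)).trans ?_)
    (abs_nonneg _)
  gcongr
  exact erase_subset _ _

lemma abs_ergmCond_sub_le (hfix : phiFn β v H p = p) (hW : ∀ j, v j ∈ W) (hd : 0 ≤ d)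
    (hy : y ∈ localSet W n p d) (s : EdgeIdx n) :
    |ergmCond β v H n s y - p| ≤ coeffSum β v H * d := by
  have hle := (abs_sigmoid_sub_le _ _).trans (abs_ergmField_sub_le (β := β) (H := H) hW hd hy s)
  rwa [← phiFn_eq_sigmoid, hfix] at hle

lemma abs_sum_ergmCond_update_sub_sub_mul_le (hβ : ∀ j, 2 ≤ eCount (H j) → 0 ≤ β j)
    (hn : 2 ≤ n) (hfix : phiFn β v H p = p) (hW : ∀ j, v j ∈ W)
    (hd : 0 ≤ d) {t : EdgeIdx n} (hyt : y t = false) (hy : y ∈ localSet W n p d)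
    (hyt' : Function.update y t true ∈ localSet W n p d) :
    |∑ s, (ergmCond β v H n s (Function.update y t true) - ergmCond β v H n s y) - p * (1 - p) *
      ∑ s, (ergmField β v H n s (Function.update y t true) - ergmField β v H n s y)| ≤
      coeffSum β v H * d * (coeffSum β v H * 4) := by
  have hyf : Function.update y t false = y := by rw [← hyt, Function.update_eq_self]
  have hmono (s : EdgeIdx n) := ergmField_update_sub_nonneg hβ s t y
  have hsum := sum_ergmField_update_sub_le β v H hn t y
  rw [hyf] at hsum
  simp only [hyf] at hmono
  have hp : sigmoid (2 * PhiFn β v H p) = p := by rw [← phiFn_eq_sigmoid, hfix]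
  refine le_trans ?_ (mul_le_mul_of_nonneg_left hsum (mul_nonneg (coeffSum_nonneg β v H) hd))
  rw [mul_sum, mul_sum, ← sum_sub_distrib]
  refine (abs_sum_le_sum_abs _ _).trans (sum_le_sum fun s _ => ?_)
  have hle := abs_sigmoid_sub_sub_mul_le (abs_ergmField_sub_le hW hd hy s)
    (abs_ergmField_sub_le (β := β) (H := H) hW hd hyt' s)
  rwa [hp, abs_of_nonneg (hmono s)] at hle

lemma abs_sum_ergmCond_update_sub_le (hβ : ∀ j, 2 ≤ eCount (H j) → 0 ≤ β j)
    (hn : 2 ≤ n) (hfix : phiFn β v H p = p) (hp : p ∈ Set.Ioo (0 : ℝ) 1) (hW : ∀ j, v j ∈ W)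
    (hd : 0 ≤ d) {t : EdgeIdx n} (hyt : y t = false) (hy : y ∈ localSet W n p d)
    (hyt' : Function.update y t true ∈ localSet W n p d) :
    |∑ s, (ergmCond β v H n s (Function.update y t true) - ergmCond β v H n s y) -
      deriv (phiFn β v H) p| ≤
      (coeffSum β v H * (coeffSum β v H * 4) + coeffSum β v H) * d := by
  have hfield := abs_sum_ergmField_update_sub_le (β := β) (H := H) hW hd hy t
  rw [← hyt, Function.update_eq_self] at hfield
  have hp' : |p * (1 - p)| ≤ 1 := by
    rw [abs_le]
    constructor <;> nlinarith [hp.1, hp.2]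
  rw [deriv_phiFn β v H hfix]
  calc _ ≤ _ := abs_sub_le _ (p * (1 - p) * ∑ s, (ergmField β v H n s (Function.update y t true) -
        ergmField β v H n s y)) _
    _ ≤ coeffSum β v H * d * (coeffSum β v H * 4) + coeffSum β v H * d := by
        refine add_le_add
          (abs_sum_ergmCond_update_sub_sub_mul_le hβ hn hfix hW hd hyt hy hyt') ?_
        rw [← mul_sub, abs_mul]
        exact (mul_le_of_le_one_left (abs_nonneg _) hp').trans hfield
    _ = _ := by ring

lemma abs_homScale_mul_homCount_le {m : ℕ} (G : SimpleGraph (Fin m)) (hn : n ≠ 0)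
    (y : EdgeIdx n → Bool) : |homScale m n * (homCount G y : ℝ)| ≤ (n : ℝ) ^ 2 := by
  have hcount : (homCount G y : ℝ) ≤ (n : ℝ) ^ m := by
    rw [homCount_eq_sum]
    refine (sum_le_card_nsmul _ _ 1 fun φ _ => edgeMonomial_le_one _ _ _).trans ?_
    rw [nsmul_eq_mul, mul_one, card_univ, Fintype.card_embedding_eq, Fintype.card_fin,
      Fintype.card_fin]
    exact_mod_cast Nat.descFactorial_le_pow n m
  rw [abs_of_nonneg (mul_nonneg homScale_nonneg (Nat.cast_nonneg _))]
  refine (mul_le_mul_of_nonneg_left hcount homScale_nonneg).trans_eq ?_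
  rw [homScale_mul_pow hn, sub_add_cancel, zpow_ofNat]

lemma abs_homCount_update_sub_le {m : ℕ} (G : SimpleGraph (Fin m)) (hm : m ∈ W)
    (hy : y ∈ localSet W n p d) {t : EdgeIdx n} (hyt : y t = false) :
    |homScale m n * (homCount G (Function.update y t true) : ℝ) - homScale m n * homCount G y -
      2 * eCount G * p ^ (eCount G - 1)| ≤ eCount G * d := by
  have hinc := homCount_update_sub G t y
  rw [← hyt, Function.update_eq_self] at hinc
  rw [hinc, mul_assoc, eCount_eq_card, ← sum_pow_card_erase, mul_sum]
  exact abs_sum_sub_sum_le_card_mul fun e _ => hy m hm e t _ (notMem_erase e _)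

/-- A random configuration `y` together with a statistic `F` such that, on an order-connected set
`Γ` of overwhelming probability, the conditional probabilities `σ` are within `C * l` of `p`, their
sum has increments within `C * l` of `ρ` and `F` has increments within `C * l` of `κ`. The error
scale is `l = n ^ (-1 / 4)`. -/
structure IsApproxAffine {I : Type*} [Fintype I] [DecidableEq I] (p ρ κ C l : ℝ) (n : ℕ)
    (μ : Measure (I → Bool)) (σ : I → (I → Bool) → ℝ) (Γ : Set (I → Bool))
    (F : (I → Bool) → ℝ) : Prop where
  isCondProb : IsCondProb μ σ
  logSupermodular : LogSupermodular μ
  two_le : 2 ≤ n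
  scale_pos : 0 < l
  scale_pow : l ^ 4 = 1 / n
  le_card : (n : ℝ) ^ 2 / 4 ≤ Fintype.card I
  card_le : (Fintype.card I : ℝ) ≤ (n : ℝ) ^ 2
  ordConnected : Γ.OrdConnected
  measureReal_compl_le : μ.real Γᶜ ≤ C * l ^ 24
  sum_abs_update_sub_le : ∀ t y,
    ∑ s, |σ s (Function.update y t true) - σ s (Function.update y t false)| ≤ C
  abs_sub_le : ∀ s, ∀ y ∈ Γ, |σ s y - p| ≤ C * l
  abs_sum_update_sub_sub_le : ∀ t y, y t = false → y ∈ Γ → Function.update y t true ∈ Γ →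
    |∑ s, (σ s (Function.update y t true) - σ s y) - ρ| ≤ C * l
  abs_le : ∀ y, |F y| ≤ C * (n : ℝ) ^ 2
  abs_update_sub_sub_le : ∀ t y, y t = false → y ∈ Γ → Function.update y t true ∈ Γ →
    |F (Function.update y t true) - F y - κ| ≤ C * l

lemma sq_div_four_le_cast_card (hn : 2 ≤ n) :
    (n : ℝ) ^ 2 / 4 ≤ Fintype.card (EdgeIdx n) := by
  have : (2 : ℝ) ≤ n := by exact_mod_cast hn
  rw [EdgeIdx.cast_card]
  nlinarith

variable {m : ℕ} (G : SimpleGraph (Fin m))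

lemma isApproxAffine_of_subset_localSet (hβ : ∀ j, 2 ≤ eCount (H j) → 0 ≤ β j)
    (hp : p ∈ Set.Ioo (0 : ℝ) 1) (hfix : phiFn β v H p = p) (hW : ∀ j, v j ∈ W) (hm : m ∈ W)
    (hn : 2 ≤ n) {l : ℝ} (hl : 0 < l) (hln : l ^ 4 = 1 / n) (hd : 0 ≤ d)
    {Γ : Set (EdgeIdx n → Bool)} (hΓ : Γ.OrdConnected) (hsub : Γ ⊆ localSet W n p d) {C : ℝ}
    (hC : coeffSum β v H * 4 + 1 ≤ C)
    (hdC : (coeffSum β v H * (coeffSum β v H * 4) + coeffSum β v H + eCount G) * d ≤ C * l)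
    (hΓC : (ergmMeasure β v H n).real Γᶜ ≤ C * l ^ 24) :
    IsApproxAffine p (deriv (phiFn β v H) p) (2 * eCount G * p ^ (eCount G - 1)) C l n
      (ergmMeasure β v H n) (ergmCond β v H n) Γ fun y => homScale m n * homCount G y := by
  have hb := coeffSum_nonneg β v H
  have hG : 0 ≤ (eCount G : ℝ) * d := by positivity
  have hbd : 0 ≤ coeffSum β v H * d := by positivity
  have hbbd : 0 ≤ coeffSum β v H * (coeffSum β v H * 4) * d := by positivity
  exact
    { isCondProb := isCondProb_ergmCond β v H n
      logSupermodular := logSupermodular_ergmMeasure β v H n hβ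
      two_le := hn
      scale_pos := hl
      scale_pow := hln
      le_card := sq_div_four_le_cast_card hn
      card_le := EdgeIdx.cast_card_le_sq n
      ordConnected := hΓ
      measureReal_compl_le := hΓC
      sum_abs_update_sub_le := fun t y =>
        (sum_abs_ergmCond_update_sub_le hβ hn t y).trans (by linarith)
      abs_sub_le := fun s y hy =>
        (abs_ergmCond_sub_le hfix hW hd (hsub hy) s).trans (by linarith)
      abs_sum_update_sub_sub_le := fun t y hyt hy hy' =>
        (abs_sum_ergmCond_update_sub_le hβ hn hfix hp hW hd hyt (hsub hy) (hsub hy')).trans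
          (by linarith)
      abs_le := fun y => (abs_homScale_mul_homCount_le G (by omega) y).trans
        (le_mul_of_one_le_left (by positivity) (by linarith))
      abs_update_sub_sub_le := fun t y hyt hy _ =>
        (abs_homCount_update_sub_le G hm (hsub hy) hyt).trans (by linarith) }

/-- For small `n` the empty set is an admissible local set, at the price of a larger constant. -/
theorem exists_isApproxAffine (hβ : ∀ j, 2 ≤ eCount (H j) → 0 ≤ β j)
    (hp : p ∈ Set.Ioo (0 : ℝ) 1) (hfix : phiFn β v H p = p)
    (huniq : ∀ q ∈ Set.Ioo (0 : ℝ) 1, phiFn β v H q = q → q = p)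
    (hsub : deriv (phiFn β v H) p < 1) :
    ∃ C, ∀ n : ℕ, 2 ≤ n → ∀ l : ℝ, 0 < l → l ^ 4 = 1 / n → ∃ Γ,
      IsApproxAffine p (deriv (phiFn β v H) p) (2 * eCount G * p ^ (eCount G - 1)) C l n
        (ergmMeasure β v H n) (ergmCond β v H n) Γ fun y => homScale m n * homCount G y := by
  set W : Finset ℕ := insert m (univ.image v)
  have hW (j) : v j ∈ W := mem_insert_of_mem (mem_image_of_mem v (mem_univ j))
  have hm : m ∈ W := mem_insert_self _ _
  obtain ⟨c, hc, n₀, hn₀⟩ := exists_measureReal_compl_localSet_le hβ hp hfix huniq hsub hW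
  have hb := coeffSum_nonneg β v H
  set M := coeffSum β v H * (coeffSum β v H * 4) + coeffSum β v H + eCount G
  have hM : 0 ≤ M * c := by positivity
  have hn₀' : (0 : ℝ) ≤ n₀ ^ 6 := by positivity
  refine ⟨coeffSum β v H * 4 + 1 + M * c + c + n₀ ^ 6, fun n hn l hl hln => ?_⟩
  rcases le_or_gt n₀ n with hnn | hnn
  · refine ⟨localSet W n p (c * l), isApproxAffine_of_subset_localSet G hβ hp hfix hW hm hn hl
      hln (by positivity) (ordConnected_localSet W n p _) le_rfl (by linarith) ?_
      ((hn₀ n hn hnn l hl hln).trans ?_)⟩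
    · rw [← mul_assoc]
      gcongr
      linarith
    · gcongr
      linarith
  · refine ⟨∅, isApproxAffine_of_subset_localSet G hβ hp hfix hW hm hn hl hln le_rfl
      Set.ordConnected_empty (Set.empty_subset _) (by linarith) (by rw [mul_zero]; positivity) ?_⟩
    rw [Set.compl_empty, probReal_univ, show l ^ 24 = (l ^ 4) ^ 6 by ring, hln, div_pow, one_pow,
      mul_one_div, le_div_iff₀ (by positivity), one_mul]
    have : (n : ℝ) ^ 6 ≤ n₀ ^ 6 := by gcongr
    linarith

end Affine

/-! ### Second moments under approximate affinity -/

section Moments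

lemma variance_add_le {Ω : Type*} {_ : MeasurableSpace Ω} {μ : Measure Ω} [IsFiniteMeasure μ]
    {f g : Ω → ℝ} (hf : MemLp f 2 μ) (hg : MemLp g 2 μ) :
    Var[f + g; μ] ≤ 2 * Var[f; μ] + 2 * Var[g; μ] := by
  have hsub := variance_nonneg (f - g) μ
  rw [variance_sub hf hg] at hsub
  rw [variance_add hf hg]
  linarith

variable {I : Type*} [Fintype I] {p ρ κ C l : ℝ} {n : ℕ} {μ : Measure (I → Bool)}
  {σ : I → (I → Bool) → ℝ} {Γ : Set (I → Bool)} {F : (I → Bool) → ℝ}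

/-- The constant in the bound for the variance of `trueCount`. -/
def varConst (ρ C : ℝ) : ℝ :=
  4 / (1 - ρ) ^ 2 * (3 * (2 * (1 + |ρ|) + C) ^ 2 * C + (1 + C)) + (2 * C / (1 - ρ)) ^ 8

lemma abs_sum_cond_sub_mul_trueCount_le (M : IsCondProb μ σ) (y : I → Bool) :
    |∑ s, σ s y - ρ * trueCount y| ≤ (1 + |ρ|) * Fintype.card I := by
  have hsum : ∑ s, σ s y ≤ Fintype.card I :=
    (sum_le_sum fun s _ => (M.mem_Icc s y).2).trans (by simp)
  refine (abs_sub _ _).trans ?_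
  rw [abs_mul, abs_of_nonneg (sum_nonneg fun s _ => (M.mem_Icc s y).1),
    abs_of_nonneg (trueCount_nonneg y), add_mul, one_mul]
  gcongr
  exact trueCount_le_card y

lemma sq_sum_one_sub_cond_mul_sub_le (hp : p ∈ Set.Icc (0 : ℝ) 1) (y : I → Bool) :
    (∑ s, (1 - σ s y) * bval (y s) - p * (1 - p) * Fintype.card I) ^ 2 ≤
      2 * (∑ s, (σ s y - p) * bval (y s)) ^ 2 + 4 * (∑ s, (σ s y - p) * 1) ^ 2 +
        4 * (trueCount y - ∑ s, σ s y) ^ 2 := by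
  set a := ∑ s, (σ s y - p) * bval (y s) with ha
  set b := trueCount y - ∑ s, σ s y with hb
  set c := ∑ s, (σ s y - p) * 1 with hc
  have hsplit : ∑ s, (1 - σ s y) * bval (y s) - p * (1 - p) * Fintype.card I =
      (1 - p) * (b + c) + -a := by
    have hca : c = ∑ s, σ s y - p * Fintype.card I := by
      simp [hc, sum_sub_distrib, mul_comm]
    have hsum : ∑ s, (1 - σ s y) * bval (y s) = (1 - p) * trueCount y - a := by
      rw [ha, trueCount, mul_sum, ← sum_sub_distrib]
      exact sum_congr rfl fun s _ => by ring
    rw [hsum, hb, hca]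
    ring
  have hp1 : ((1 - p) * (b + c)) ^ 2 ≤ (b + c) ^ 2 := by
    rw [mul_pow]
    exact mul_le_of_le_one_left (sq_nonneg _)
      (pow_le_one₀ (sub_nonneg.2 hp.2) (sub_le_self _ hp.1))
  rw [hsplit]
  linarith [add_sq_le (a := (1 - p) * (b + c)) (b := -a), add_sq_le (a := b) (b := c),
    neg_sq a]

namespace IsApproxAffine

variable [DecidableEq I] (A : IsApproxAffine p ρ κ C l n μ σ Γ F)
include A

lemma n_pos : (0 : ℝ) < n := by exact_mod_cast zero_lt_two.trans_le A.two_le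

lemma C_nonneg : 0 ≤ C :=
  nonneg_of_mul_nonneg_left ((abs_nonneg _).trans (A.abs_le fun _ => false))
    (pow_pos A.n_pos 2)

lemma scale_le_one : l ≤ 1 :=
  le_one_of_pow_eq_one_div four_ne_zero A.scale_pos.le A.scale_pow

lemma mul_scale_pow : (n : ℝ) * l ^ 4 = 1 := by
  rw [A.scale_pow, mul_one_div_cancel A.n_pos.ne']

lemma one_le_scale_mul : 1 ≤ l * n := by
  rw [← A.mul_scale_pow, mul_comm]
  gcongr
  exact pow_le_of_le_one A.scale_pos.le A.scale_le_one four_ne_zero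

lemma abs_trueCount_sub_sum_cond_update_le (t : I) (y : I → Bool) :
    |(trueCount y - ∑ s, σ s y) - (trueCount (Function.update y t false) -
      ∑ s, σ s (Function.update y t false))| ≤ 1 + C := by
  refine (abs_update_false_sub_le (fun y => trueCount y - ∑ s, σ s y) t y).trans ?_
  rw [sub_sub_sub_comm, trueCount_update_sub, ← sum_sub_distrib]
  refine (abs_sub _ _).trans ?_
  rw [abs_one]
  gcongr
  exact (abs_sum_le_sum_abs _ _).trans (A.sum_abs_update_sub_le t y)

lemma cast_le_pow_of_lt (hρ : ρ < 1) (hl : 1 - ρ < 2 * C * l) :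
    (n : ℝ) ≤ (2 * C / (1 - ρ)) ^ 4 := by
  have h1 : 1 ≤ 2 * C / (1 - ρ) * l := by
    rw [div_mul_eq_mul_div, one_le_div (sub_pos.2 hρ)]
    exact hl.le
  calc (n : ℝ) ≤ n * (2 * C / (1 - ρ) * l) ^ 4 :=
        le_mul_of_one_le_right A.n_pos.le (one_le_pow₀ h1)
    _ = (2 * C / (1 - ρ)) ^ 4 * (n * l ^ 4) := by ring
    _ = _ := by rw [A.mul_scale_pow, mul_one]

variable [IsProbabilityMeasure μ]

lemma integral_sq_trueCount_sub_le :
    ∫ y, (trueCount y - ∑ s, σ s y) ^ 2 ∂μ ≤ (1 + C) * (n : ℝ) ^ 2 := by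
  have hC := A.C_nonneg
  calc ∫ y, (trueCount y - ∑ s, σ s y) ^ 2 ∂μ
      = ∫ y, (∑ s, (1 : ℝ) * (bval (y s) - σ s y)) * (trueCount y - ∑ s, σ s y) ∂μ := by
        simp only [one_mul, sum_sub_distrib, sq, trueCount]
    _ ≤ Fintype.card I * (1 + C) := by
        refine A.isCondProb.integral_sum_mul_le univ id (w := fun _ _ => 1) (by simp)
          (fun _ _ _ _ _ => rfl) _ fun t => ?_
        simpa using integral_mono (μ := μ) .of_finite .of_finite
          (A.abs_trueCount_sub_sum_cond_update_le t)
    _ ≤ (1 + C) * (n : ℝ) ^ 2 := by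
        rw [mul_comm]
        gcongr
        exact A.card_le

lemma variance_le {f : (I → Bool) → ℝ} {a b : ℝ} (ha : 0 ≤ a) (hb : 0 ≤ b)
    (hf : ∀ y, |f y| ≤ b * (n : ℝ) ^ 2)
    (h : ∀ t y, y t = false → y ∈ Γ → Function.update y t true ∈ Γ →
      |f (Function.update y t true) - f y| ≤ a * l) :
    Var[f; μ] ≤ a ^ 2 * l ^ 2 * Var[trueCount; μ] + 3 * (2 * b + a) ^ 2 * C * l ^ 2 := by
  have hl := A.scale_pos
  have hC := A.C_nonneg
  have hcard : a * l * Fintype.card I ≤ a * (n : ℝ) ^ 2 :=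
    mul_le_mul (mul_le_of_le_one_right ha A.scale_le_one) A.card_le (by positivity) ha
  have hvar := A.logSupermodular.variance_le_of_update_le A.ordConnected (mul_nonneg ha hl.le)
    hf h
  rw [mul_pow] at hvar
  refine hvar.trans (add_le_add le_rfl ?_)
  calc 3 * (2 * (b * (n : ℝ) ^ 2) + a * l * Fintype.card I) ^ 2 * μ.real Γᶜ
      ≤ 3 * (2 * (b * (n : ℝ) ^ 2) + a * (n : ℝ) ^ 2) ^ 2 * (C * l ^ 24) := by
        gcongr
        exact A.measureReal_compl_le
    _ = 3 * (2 * b + a) ^ 2 * C * ((n * l ^ 4) ^ 4 * l ^ 8) := by ring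
    _ ≤ 3 * (2 * b + a) ^ 2 * C * l ^ 2 := by
        rw [A.mul_scale_pow, one_pow, one_mul]
        gcongr ?_ * ?_
        exact pow_le_pow_of_le_one hl.le A.scale_le_one (by norm_num)

lemma variance_sum_cond_sub_le :
    Var[fun y => ∑ s, σ s y - ρ * trueCount y; μ] ≤
      C ^ 2 * l ^ 2 * Var[trueCount; μ] + 3 * (2 * (1 + |ρ|) + C) ^ 2 * C * l ^ 2 := by
  refine A.variance_le A.C_nonneg (by positivity) (fun y =>
    (abs_sum_cond_sub_mul_trueCount_le A.isCondProb y).trans ?_) fun t y hyt hy hy' => ?_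
  · gcongr
    exact A.card_le
  · have hinc := A.abs_sum_update_sub_sub_le t y hyt hy hy'
    rw [sum_sub_distrib] at hinc
    rw [trueCount_update_true hyt]
    convert hinc using 2
    ring

lemma variance_sub_mul_trueCount_le :
    Var[fun y => F y - κ * trueCount y; μ] ≤
      C ^ 2 * l ^ 2 * Var[trueCount; μ] + 3 * (2 * (C + |κ|) + C) ^ 2 * C * l ^ 2 := by
  refine A.variance_le A.C_nonneg (add_nonneg A.C_nonneg (abs_nonneg _)) (fun y => ?_)
    fun t y hyt hy hy' => ?_
  · refine (abs_sub _ _).trans ?_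
    rw [abs_mul, abs_of_nonneg (trueCount_nonneg y), add_mul]
    gcongr
    exacts [A.abs_le y, (trueCount_le_card y).trans A.card_le]
  · rw [trueCount_update_true hyt]
    convert A.abs_update_sub_sub_le t y hyt hy hy' using 2
    ring

/- `(1 - ρ) * trueCount` is the sum of `∑ s, σ s - ρ * trueCount` and
`trueCount - ∑ s, σ s`. -/
lemma sq_one_sub_mul_variance_trueCount_le :
    (1 - ρ) ^ 2 * Var[trueCount; μ] ≤
      2 * (C ^ 2 * l ^ 2 * Var[trueCount; μ] + 3 * (2 * (1 + |ρ|) + C) ^ 2 * C * l ^ 2) +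
        2 * ((1 + C) * (n : ℝ) ^ 2) := by
  have hsplit : (fun y : I → Bool => (1 - ρ) * trueCount y) =
      (fun y => ∑ s, σ s y - ρ * trueCount y) + fun y => trueCount y - ∑ s, σ s y := by
    funext y
    simp only [Pi.add_apply]
    ring
  rw [← variance_const_mul, hsplit]
  refine (variance_add_le .of_discrete .of_discrete).trans ?_
  gcongr
  · exact A.variance_sum_cond_sub_le
  · exact (variance_le_expectation_sq .of_discrete).trans A.integral_sq_trueCount_sub_le

lemma variance_trueCount_le_of_le (hρ : ρ < 1) (hl : 2 * C * l ≤ 1 - ρ) :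
    Var[trueCount; μ] ≤
      4 / (1 - ρ) ^ 2 * (3 * (2 * (1 + |ρ|) + C) ^ 2 * C + (1 + C)) * (n : ℝ) ^ 2 := by
  have hl0 := A.scale_pos
  have hC := A.C_nonneg
  have := sub_pos.2 hρ
  have hn : (1 : ℝ) ≤ n := by exact_mod_cast one_le_two.trans A.two_le
  have habsorb : (2 * C * l) ^ 2 * Var[trueCount; μ] ≤ (1 - ρ) ^ 2 * Var[trueCount; μ] := by
    gcongr
    exact variance_nonneg _ _
  have hrest : 3 * (2 * (1 + |ρ|) + C) ^ 2 * C * l ^ 2 ≤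
      3 * (2 * (1 + |ρ|) + C) ^ 2 * C * (n : ℝ) ^ 2 := by
    gcongr
    exact A.scale_le_one.trans hn
  rw [div_mul_eq_mul_div, div_mul_eq_mul_div, le_div_iff₀ (by positivity)]
  linarith [A.sq_one_sub_mul_variance_trueCount_le]

lemma variance_trueCount_le (hρ : ρ < 1) :
    Var[trueCount; μ] ≤ varConst ρ C * (n : ℝ) ^ 2 := by
  have hC := A.C_nonneg
  rw [varConst, add_mul]
  rcases le_or_gt (2 * C * l) (1 - ρ) with hl | hl
  · exact (A.variance_trueCount_le_of_le hρ hl).trans (le_add_of_nonneg_right (by positivity))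
  · refine le_trans ?_ (le_add_of_nonneg_left (by positivity))
    calc Var[trueCount; μ] ≤ ∫ y, trueCount y ^ 2 ∂μ := variance_le_expectation_sq .of_discrete
      _ ≤ ∫ _, ((n : ℝ) ^ 2) ^ 2 ∂μ := integral_mono .of_finite .of_finite fun y =>
          pow_le_pow_left₀ (trueCount_nonneg y) ((trueCount_le_card y).trans A.card_le) 2
      _ = (n : ℝ) ^ 2 * (n : ℝ) ^ 2 := by simp [sq]
      _ ≤ ((2 * C / (1 - ρ)) ^ 4) ^ 2 * (n : ℝ) ^ 2 := by
          gcongr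
          exact A.cast_le_pow_of_lt hρ hl
      _ = (2 * C / (1 - ρ)) ^ 8 * (n : ℝ) ^ 2 := by ring

lemma integral_sq_le {f : (I → Bool) → ℝ} {a b : ℝ} (hf : ∀ y, |f y| ≤ b * (n : ℝ) ^ 2)
    (h : ∀ y ∈ Γ, |f y| ≤ a * l * (n : ℝ) ^ 2) :
    ∫ y, f y ^ 2 ∂μ ≤ (a ^ 2 + b ^ 2 * C) * (l * (n : ℝ) ^ 2) ^ 2 := by
  have hpt : ∀ y, f y ^ 2 ≤ (a * l * (n : ℝ) ^ 2) ^ 2 +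
      Γᶜ.indicator (fun _ => (b * (n : ℝ) ^ 2) ^ 2) y := fun y => by
    by_cases hy : y ∈ Γ
    · rw [Set.indicator_of_notMem (by simpa using hy), add_zero, ← sq_abs]
      exact pow_le_pow_left₀ (abs_nonneg _) (h y hy) 2
    · rw [Set.indicator_of_mem (by simpa using hy), ← sq_abs (f y)]
      exact (pow_le_pow_left₀ (abs_nonneg _) (hf y) 2).trans
        (le_add_of_nonneg_left (by positivity))
  calc ∫ y, f y ^ 2 ∂μ
      ≤ (a * l * (n : ℝ) ^ 2) ^ 2 + (b * (n : ℝ) ^ 2) ^ 2 * μ.real Γᶜ := by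
        refine (integral_mono .of_finite .of_finite hpt).trans (le_of_eq ?_)
        rw [integral_add .of_finite .of_finite, integral_indicator_const _ .of_discrete]
        simp [mul_comm]
    _ ≤ (a * l * (n : ℝ) ^ 2) ^ 2 + (b * (n : ℝ) ^ 2) ^ 2 * (C * l ^ 2) := by
        gcongr
        refine A.measureReal_compl_le.trans (mul_le_mul_of_nonneg_left ?_ A.C_nonneg)
        exact pow_le_pow_of_le_one A.scale_pos.le A.scale_le_one (by norm_num)
    _ = _ := by ring

lemma integral_sq_sum_sub_mul_le (hp : p ∈ Set.Icc (0 : ℝ) 1) {w : I → (I → Bool) → ℝ}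
    (hw : ∀ s y, |w s y| ≤ 1) :
    ∫ y, (∑ s, (σ s y - p) * w s y) ^ 2 ∂μ ≤ (C ^ 2 + C) * (l * (n : ℝ) ^ 2) ^ 2 := by
  have hsum : ∀ y d, 0 ≤ d → (∀ s, |σ s y - p| ≤ d) →
      |∑ s, (σ s y - p) * w s y| ≤ d * (n : ℝ) ^ 2 := fun y d hd h =>
    calc |∑ s, (σ s y - p) * w s y|
        ≤ ∑ _s : I, d := (abs_sum_le_sum_abs _ _).trans (sum_le_sum fun s _ => by
          rw [abs_mul]
          exact (mul_le_of_le_one_right (abs_nonneg _) (hw s y)).trans (h s))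
      _ = d * Fintype.card I := by simp [mul_comm]
      _ ≤ d * (n : ℝ) ^ 2 := by
          gcongr
          exact A.card_le
  refine (A.integral_sq_le (a := C) (b := 1) (fun y => hsum y 1 zero_le_one fun s => ?_)
    fun y hy => hsum y _ (mul_nonneg A.C_nonneg A.scale_pos.le) fun s => A.abs_sub_le s y hy).trans
    (le_of_eq (by ring))
  obtain ⟨h0, h1⟩ := A.isCondProb.mem_Icc s y
  rw [_root_.abs_le]
  constructor <;> linarith [hp.1, hp.2]

lemma integral_sq_sum_one_sub_cond_mul_le (hp : p ∈ Set.Icc (0 : ℝ) 1) :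
    ∫ y, (∑ s, (1 - σ s y) * bval (y s) - p * (1 - p) * Fintype.card I) ^ 2 ∂μ ≤
      (6 * (C ^ 2 + C) + 4 * (1 + C)) * (l * (n : ℝ) ^ 2) ^ 2 := by
  have hC := A.C_nonneg
  have hbval := A.integral_sq_sum_sub_mul_le hp (w := fun s y => bval (y s)) fun s y => by
    rw [abs_of_nonneg (bval_nonneg _)]
    exact bval_le_one _
  have hone := A.integral_sq_sum_sub_mul_le hp (w := fun _ _ => 1) (by simp)
  have hcount : ∫ y, (trueCount y - ∑ s, σ s y) ^ 2 ∂μ ≤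
      (1 + C) * (l * (n : ℝ) ^ 2) ^ 2 := by
    refine A.integral_sq_trueCount_sub_le.trans (mul_le_mul_of_nonneg_left ?_ (by positivity))
    calc (n : ℝ) ^ 2 ≤ (l * n) ^ 2 * (n : ℝ) ^ 2 :=
          le_mul_of_one_le_left (by positivity) (one_le_pow₀ A.one_le_scale_mul)
      _ = _ := by ring
  refine (integral_mono .of_finite .of_finite fun y =>
    sq_sum_one_sub_cond_mul_sub_le hp y).trans ?_
  rw [integral_add .of_finite .of_finite, integral_add .of_finite .of_finite,
    integral_const_mul, integral_const_mul, integral_const_mul]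
  linarith

end IsApproxAffine

end Moments

/-! ### Stein's equation -/

section SteinSolution

lemma hasDerivAt_integral_Iic {E : Type*} [NormedAddCommGroup E] [NormedSpace ℝ E]
    [CompleteSpace E] {f : ℝ → E} (hf : Continuous f) (hint : Integrable f) (a : ℝ) :
    HasDerivAt (fun x => ∫ t in Set.Iic x, f t) (f a) a := by
  have hsplit : (fun x => ∫ t in Set.Iic x, f t) =
      fun x => (∫ t in (0 : ℝ)..x, f t) + ∫ t in Set.Iic 0, f t := by
    funext x
    rw [← intervalIntegral.integral_Iic_sub_Iic hint.integrableOn hint.integrableOn,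
      sub_add_cancel]
  rw [hsplit]
  exact (hf.integral_hasStrictDerivAt 0 a).hasDerivAt.add_const _

lemma hasDerivAt_sq_div_two (x : ℝ) : HasDerivAt (fun x : ℝ => x ^ 2 / 2) x x :=
  ((hasDerivAt_pow 2 x).div_const 2).congr_deriv (by norm_num)

lemma exp_sq_div_two_mul_exp_neg (x : ℝ) : exp (x ^ 2 / 2) * exp (-x ^ 2 / 2) = 1 := by
  rw [← exp_add, neg_div, add_neg_cancel, exp_zero]

lemma integrable_exp_neg_sq_div_two : Integrable fun x : ℝ => exp (-x ^ 2 / 2) := by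
  convert integrable_exp_neg_mul_sq (b := 1 / 2) (by norm_num) using 3
  ring

lemma integrable_mul_exp_neg_sq_div_two : Integrable fun x : ℝ => x * exp (-x ^ 2 / 2) := by
  convert integrable_mul_exp_neg_mul_sq (b := 1 / 2) (by norm_num) using 4
  ring

lemma integrable_abs_add_mul_exp (m : ℝ) :
    Integrable fun x : ℝ => (|x| + m) * exp (-x ^ 2 / 2) := by
  have habs : Integrable fun x : ℝ => |x| * exp (-x ^ 2 / 2) := by
    simpa only [abs_mul, abs_exp] using integrable_mul_exp_neg_sq_div_two.abs
  simp_rw [add_mul]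
  exact habs.add (integrable_exp_neg_sq_div_two.const_mul m)

lemma integral_Ioi_mul_exp_neg_sq_div_two (w : ℝ) :
    ∫ x in Set.Ioi w, x * exp (-x ^ 2 / 2) = exp (-w ^ 2 / 2) := by
  have hderiv : ∀ x ∈ Set.Ici w,
      HasDerivAt (fun x : ℝ => -exp (-x ^ 2 / 2)) (x * exp (-x ^ 2 / 2)) x := fun x _ => by
    simp_rw [neg_div]
    exact (hasDerivAt_sq_div_two x).fun_neg.exp.fun_neg.congr_deriv (by ring)
  have htends : Filter.Tendsto (fun x : ℝ => -exp (-x ^ 2 / 2)) Filter.atTop (nhds (-0)) := by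
    simp_rw [neg_div]
    exact (tendsto_exp_neg_atTop_nhds_zero.comp
      ((Filter.tendsto_pow_atTop two_ne_zero).atTop_div_const two_pos)).neg
  rw [integral_Ioi_of_hasDerivAt_of_tendsto' hderiv
    integrable_mul_exp_neg_sq_div_two.integrableOn htends, neg_zero, zero_sub, neg_neg]

/-- The solution of Stein's equation `g' w - w * g w = f w` that is bounded when `f` is centred
for the standard Gaussian measure. -/
def steinSolution (f : ℝ → ℝ) (w : ℝ) : ℝ :=
  exp (w ^ 2 / 2) * ∫ x in Set.Iic w, f x * exp (-x ^ 2 / 2)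

/-- A bound for `steinSolution f` when `f` is centred and `|f x| ≤ |x| + m`. -/
def steinConst (m : ℝ) : ℝ :=
  1 + m + exp (1 / 2) * ∫ x : ℝ, (|x| + m) * exp (-x ^ 2 / 2)

variable {f : ℝ → ℝ} {m w : ℝ}

lemma integral_abs_add_mul_exp_nonneg (hm : 0 ≤ m) :
    0 ≤ ∫ x : ℝ, (|x| + m) * exp (-x ^ 2 / 2) :=
  integral_nonneg fun x => by positivity

lemma abs_mul_exp_le (hfm : ∀ x, |f x| ≤ |x| + m) (x : ℝ) :
    |f x * exp (-x ^ 2 / 2)| ≤ (|x| + m) * exp (-x ^ 2 / 2) := by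
  rw [abs_mul, abs_exp]
  gcongr
  exact hfm x

lemma integrable_mul_exp_of_abs_le (hf : Continuous f) (hfm : ∀ x, |f x| ≤ |x| + m) :
    Integrable fun x => f x * exp (-x ^ 2 / 2) :=
  (integrable_abs_add_mul_exp m).mono'
    (by fun_prop : Continuous fun x => f x * exp (-x ^ 2 / 2)).aestronglyMeasurable
    (ae_of_all _ (abs_mul_exp_le hfm))

lemma hasDerivAt_steinSolution (hf : Continuous f) (hfm : ∀ x, |f x| ≤ |x| + m) (w : ℝ) :
    HasDerivAt (steinSolution f) (w * steinSolution f w + f w) w := by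
  have hint := hasDerivAt_integral_Iic (by fun_prop : Continuous fun x => f x * exp (-x ^ 2 / 2))
    (integrable_mul_exp_of_abs_le hf hfm) w
  refine ((hasDerivAt_sq_div_two w).exp.fun_mul hint).congr_deriv ?_
  rw [steinSolution]
  linear_combination f w * exp_sq_div_two_mul_exp_neg w

lemma abs_integral_Ioi_mul_exp_le (hm : 0 ≤ m) (hfm : ∀ x, |f x| ≤ |x| + m) (hw : 1 ≤ w) :
    |∫ x in Set.Ioi w, f x * exp (-x ^ 2 / 2)| ≤ (1 + m) * exp (-w ^ 2 / 2) := by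
  rw [← integral_Ioi_mul_exp_neg_sq_div_two, ← integral_const_mul, ← Real.norm_eq_abs]
  refine norm_integral_le_of_norm_le
    (integrable_mul_exp_neg_sq_div_two.const_mul (1 + m)).integrableOn
    (ae_restrict_of_forall_mem measurableSet_Ioi fun x hx => (abs_mul_exp_le hfm x).trans ?_)
  have hx1 : 1 ≤ x := hw.trans (le_of_lt hx)
  rw [← mul_assoc, abs_of_nonneg (zero_le_one.trans hx1), one_add_mul]
  gcongr
  exact le_mul_of_one_le_right hm hx1

lemma abs_steinSolution_le_of_abs_integral_le (hm : 0 ≤ m)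
    (h : |∫ x in Set.Iic w, f x * exp (-x ^ 2 / 2)| ≤ (1 + m) * exp (-w ^ 2 / 2)) :
    |steinSolution f w| ≤ steinConst m := by
  have := integral_abs_add_mul_exp_nonneg hm
  calc |steinSolution f w|
      = exp (w ^ 2 / 2) * |∫ x in Set.Iic w, f x * exp (-x ^ 2 / 2)| := by
        rw [steinSolution, abs_mul, abs_exp]
    _ ≤ exp (w ^ 2 / 2) * ((1 + m) * exp (-w ^ 2 / 2)) := by gcongr
    _ = 1 + m := by rw [mul_left_comm, exp_sq_div_two_mul_exp_neg, mul_one]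
    _ ≤ steinConst m := le_add_of_nonneg_right (by positivity)

lemma abs_steinSolution_le_of_one_le (hf : Continuous f) (hm : 0 ≤ m)
    (hfm : ∀ x, |f x| ≤ |x| + m) (hf0 : ∫ x, f x * exp (-x ^ 2 / 2) = 0) (hw : 1 ≤ w) :
    |steinSolution f w| ≤ steinConst m := by
  have hint := integrable_mul_exp_of_abs_le hf hfm
  have htail := intervalIntegral.integral_Iic_add_Ioi (b := w) hint.integrableOn hint.integrableOn
  rw [hf0] at htail
  refine abs_steinSolution_le_of_abs_integral_le hm ?_
  rw [eq_neg_of_add_eq_zero_left htail, abs_neg]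
  exact abs_integral_Ioi_mul_exp_le hm hfm hw

lemma abs_steinSolution_le_of_le_neg_one (hm : 0 ≤ m) (hfm : ∀ x, |f x| ≤ |x| + m)
    (hw : w ≤ -1) : |steinSolution f w| ≤ steinConst m := by
  have hreflect : ∫ x in Set.Iic w, f x * exp (-x ^ 2 / 2) =
      ∫ x in Set.Ioi (-w), f (-x) * exp (-x ^ 2 / 2) := by
    rw [← integral_comp_neg_Iic]
    simp
  refine abs_steinSolution_le_of_abs_integral_le hm ?_
  rw [hreflect, ← neg_sq w]
  exact abs_integral_Ioi_mul_exp_le hm (fun x => by simpa using hfm (-x)) (le_neg_of_le_neg hw)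

lemma abs_steinSolution_le_of_abs_le_one (hm : 0 ≤ m) (hfm : ∀ x, |f x| ≤ |x| + m)
    (hw : |w| ≤ 1) : |steinSolution f w| ≤ steinConst m := by
  have hint : |∫ x in Set.Iic w, f x * exp (-x ^ 2 / 2)| ≤
      ∫ x : ℝ, (|x| + m) * exp (-x ^ 2 / 2) := by
    rw [← Real.norm_eq_abs]
    exact (norm_integral_le_of_norm_le (integrable_abs_add_mul_exp m).integrableOn
      (ae_of_all _ (abs_mul_exp_le hfm))).trans
      (setIntegral_le_integral (integrable_abs_add_mul_exp m)
        (ae_of_all _ fun x => by simp only [Pi.zero_apply]; positivity))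
  rw [steinSolution, abs_mul, abs_exp]
  refine le_trans ?_ (le_add_of_nonneg_left (add_nonneg zero_le_one hm))
  gcongr
  rwa [sq_le_one_iff_abs_le_one]

lemma abs_steinSolution_le (hf : Continuous f) (hm : 0 ≤ m) (hfm : ∀ x, |f x| ≤ |x| + m)
    (hf0 : ∫ x, f x * exp (-x ^ 2 / 2) = 0) (w : ℝ) : |steinSolution f w| ≤ steinConst m := by
  rcases le_total 1 w with hw | hw
  · exact abs_steinSolution_le_of_one_le hf hm hfm hf0 hw
  rcases le_total w (-1) with hw' | hw'
  · exact abs_steinSolution_le_of_le_neg_one hm hfm hw'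
  · exact abs_steinSolution_le_of_abs_le_one hm hfm (abs_le.2 ⟨hw', hw⟩)

end SteinSolution

section GaussianLipschitz

variable {ν : Measure ℝ} [IsProbabilityMeasure ν] {ψ : ℝ → ℝ}

lemma integrable_of_lipschitzWith (hν : Integrable (fun x => |x|) ν) (hψ : LipschitzWith 1 ψ) :
    Integrable ψ ν := by
  refine (hν.add (integrable_const |ψ 0|)).mono' hψ.continuous.aestronglyMeasurable
    (ae_of_all _ fun x => ?_)
  have hdist := hψ.dist_le_mul x 0
  rw [NNReal.coe_one, one_mul, Real.dist_eq, Real.dist_eq, sub_zero] at hdist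
  rw [Real.norm_eq_abs, Pi.add_apply]
  linarith [abs_sub_abs_le_abs_sub (ψ x) (ψ 0)]

lemma abs_sub_integral_le_of_lipschitzWith (hν : Integrable (fun x => |x|) ν)
    (hψ : LipschitzWith 1 ψ) (x : ℝ) : |ψ x - ∫ z, ψ z ∂ν| ≤ |x| + ∫ z, |z| ∂ν := by
  have hleft : ψ x - ∫ z, ψ z ∂ν = ∫ z, (ψ x - ψ z) ∂ν := by
    rw [integral_sub (integrable_const _) (integrable_of_lipschitzWith hν hψ)]
    simp
  have hright : |x| + ∫ z, |z| ∂ν = ∫ z, (|x| + |z|) ∂ν := by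
    rw [integral_add (integrable_const _) hν]
    simp
  rw [hleft, hright, ← Real.norm_eq_abs]
  refine norm_integral_le_of_norm_le ((integrable_const _).add hν) (ae_of_all _ fun z => ?_)
  have hdist := hψ.dist_le_mul x z
  rw [NNReal.coe_one, one_mul, Real.dist_eq, Real.dist_eq] at hdist
  exact hdist.trans (abs_sub x z)

lemma integrable_abs_gaussianReal : Integrable (fun x : ℝ => |x|) (gaussianReal 0 1) :=
  ((memLp_id_gaussianReal (μ := 0) (v := 1) 1).integrable le_rfl).abs

lemma integral_mul_exp_eq_zero_of_integral_gaussianReal {f : ℝ → ℝ}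
    (hf : ∫ x, f x ∂gaussianReal 0 1 = 0) : ∫ x, f x * exp (-x ^ 2 / 2) = 0 := by
  have hdensity : ∀ x : ℝ, gaussianPDFReal 0 1 x • f x =
      (√(2 * π))⁻¹ * (f x * exp (-x ^ 2 / 2)) := fun x => by
    simp only [gaussianPDFReal, NNReal.coe_one, mul_one, sub_zero, smul_eq_mul]
    ring
  simp_rw [integral_gaussianReal_eq_integral_smul one_ne_zero, hdensity,
    integral_const_mul] at hf
  exact (mul_eq_zero.1 hf).resolve_left (by positivity)

end GaussianLipschitz

section SteinBounds

/-- The bounds on `g` and its derivative `g'` that Stein's method uses: `g` is bounded, `g'` grows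
at most linearly, and the first order Taylor remainder of `g` is quadratic in the step. -/
structure IsSteinBounded (K : ℝ) (g g' : ℝ → ℝ) : Prop where
  abs_le : ∀ w, |g w| ≤ K
  abs_deriv_le : ∀ w, |g' w| ≤ K * (1 + |w|)
  abs_sub_sub_le : ∀ w h, 0 ≤ h → |g w - g (w - h) - h * g' w| ≤ K * h ^ 2 * (1 + |w| + h) ^ 2

lemma IsSteinBounded.nonneg {K : ℝ} {g g' : ℝ → ℝ} (hg : IsSteinBounded K g g') : 0 ≤ K :=
  (abs_nonneg _).trans (hg.abs_le 0)

lemma abs_le_of_mem_Icc_sub {x w h : ℝ} (hx : x ∈ Set.Icc (w - h) w) : |x| ≤ |w| + h :=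
  abs_le.2 ⟨by linarith [hx.1, neg_abs_le w], by linarith [hx.1, hx.2, le_abs_self w]⟩

variable {f g : ℝ → ℝ} {B m w h x : ℝ}

lemma abs_mul_add_le (hB : 0 ≤ B) (hm : 0 ≤ m) (hfm : ∀ x, |f x| ≤ |x| + m)
    (hgB : ∀ w, |g w| ≤ B) (w : ℝ) : |w * g w + f w| ≤ (B + 1 + m) * (1 + |w|) := by
  calc |w * g w + f w| ≤ |w| * |g w| + |f w| := by
        rw [← abs_mul]
        exact abs_add_le _ _
    _ ≤ |w| * B + (|w| + m) := by
        gcongr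
        exacts [hgB w, hfm w]
    _ ≤ (B + 1 + m) * (1 + |w|) := by linarith [mul_nonneg hm (abs_nonneg w)]

lemma abs_sub_le_of_hasDerivAt_mul_add (hB : 0 ≤ B) (hm : 0 ≤ m)
    (hfm : ∀ x, |f x| ≤ |x| + m) (hgB : ∀ w, |g w| ≤ B)
    (hg : ∀ w, HasDerivAt g (w * g w + f w) w) (hh : 0 ≤ h) (hx : x ∈ Set.Icc (w - h) w) :
    |g x - g w| ≤ (B + 1 + m) * (1 + |w| + h) * h := by
  have hmv := Convex.norm_image_sub_le_of_norm_hasDerivWithin_le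
    (C := (B + 1 + m) * (1 + |w| + h)) (fun z _ => (hg z).hasDerivWithinAt)
    (fun z hz => (abs_mul_add_le hB hm hfm hgB z).trans ?_) (convex_Icc (w - h) w)
    (Set.right_mem_Icc.2 (sub_le_self w hh)) hx
  · refine hmv.trans ?_
    gcongr
    rw [Real.norm_eq_abs, abs_sub_le_iff]
    constructor <;> linarith [hx.1, hx.2]
  · gcongr (B + 1 + m) * ?_
    linarith [abs_le_of_mem_Icc_sub hz]

lemma abs_mul_add_sub_mul_add_le (hB : 0 ≤ B) (hm : 0 ≤ m) (hf : LipschitzWith 1 f)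
    (hfm : ∀ x, |f x| ≤ |x| + m) (hgB : ∀ w, |g w| ≤ B)
    (hg : ∀ w, HasDerivAt g (w * g w + f w) w) (hh : 0 ≤ h) (hx : x ∈ Set.Icc (w - h) w) :
    |x * g x + f x - (w * g w + f w)| ≤ 2 * (B + 1 + m) * h * (1 + |w| + h) ^ 2 := by
  have hxw : |x - w| ≤ h := abs_sub_le_iff.2 ⟨by linarith [hx.2], by linarith [hx.1]⟩
  have hfx : |f x - f w| ≤ h := by
    simpa [Real.dist_eq] using (hf.dist_le_mul x w).trans (by simpa [Real.dist_eq] using hxw)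
  have hR : 1 ≤ 1 + |w| + h := by linarith [abs_nonneg w]
  calc |x * g x + f x - (w * g w + f w)|
      = |x * (g x - g w) + ((x - w) * g w + (f x - f w))| := by
        congr 1
        ring
    _ ≤ |x| * |g x - g w| + (|x - w| * |g w| + |f x - f w|) := by
        rw [← abs_mul, ← abs_mul]
        exact (abs_add_le _ _).trans (add_le_add_right (abs_add_le _ _) _)
    _ ≤ (1 + |w| + h) * ((B + 1 + m) * (1 + |w| + h) * h) + (h * B + h) := by
        gcongr
        exacts [by linarith [abs_le_of_mem_Icc_sub hx],
          abs_sub_le_of_hasDerivAt_mul_add hB hm hfm hgB hg hh hx, hgB w]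
    _ ≤ (1 + |w| + h) * ((B + 1 + m) * (1 + |w| + h) * h) +
          (B + 1 + m) * h * (1 + |w| + h) ^ 2 := by
        gcongr
        refine le_trans ?_ (le_mul_of_one_le_right (by positivity) (one_le_pow₀ hR))
        linarith [mul_nonneg hm hh]
    _ = 2 * (B + 1 + m) * h * (1 + |w| + h) ^ 2 := by ring

lemma isSteinBounded_of_hasDerivAt (hm : 0 ≤ m) (hf : LipschitzWith 1 f)
    (hfm : ∀ x, |f x| ≤ |x| + m) (hgB : ∀ w, |g w| ≤ B)
    (hg : ∀ w, HasDerivAt g (w * g w + f w) w) :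
    IsSteinBounded (2 * (B + 1 + m)) g fun w => w * g w + f w := by
  have hB : 0 ≤ B := (abs_nonneg _).trans (hgB 0)
  refine ⟨fun w => (hgB w).trans (by linarith), fun w => ?_, fun w h hh => ?_⟩
  · refine (abs_mul_add_le hB hm hfm hgB w).trans ?_
    gcongr
    linarith
  have hmv := Convex.norm_image_sub_le_of_norm_hasDerivWithin_le
    (f := fun x => g x - x * (w * g w + f w))
    (fun z _ => ((hg z).sub ((hasDerivAt_id z).mul_const _)).hasDerivWithinAt)
    (fun z hz => by simpa using abs_mul_add_sub_mul_add_le hB hm hf hfm hgB hg hh hz)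
    (convex_Icc (w - h) w) (Set.left_mem_Icc.2 (sub_le_self w hh))
    (Set.right_mem_Icc.2 (sub_le_self w hh))
  rw [Real.norm_eq_abs, Real.norm_eq_abs, sub_sub_cancel, abs_of_nonneg hh] at hmv
  convert hmv using 1
  · congr 1
    ring
  · ring

theorem exists_stein_bound : ∃ K, 0 ≤ K ∧ ∀ ψ : ℝ → ℝ, LipschitzWith 1 ψ → ∃ g g' : ℝ → ℝ,
    IsSteinBounded K g g' ∧ ∀ w, g' w - w * g w = ψ w - ∫ z, ψ z ∂gaussianReal 0 1 := by
  set m : ℝ := ∫ z, |z| ∂gaussianReal 0 1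
  have hm : 0 ≤ m := integral_nonneg fun z => abs_nonneg z
  refine ⟨2 * (steinConst m + 1 + m), ?_, fun ψ hψ => ?_⟩
  · have := integral_abs_add_mul_exp_nonneg hm
    unfold steinConst
    positivity
  set f : ℝ → ℝ := fun x => ψ x - ∫ z, ψ z ∂gaussianReal 0 1 with hf_def
  have hf : LipschitzWith 1 f := by simpa using hψ.sub (LipschitzWith.const _)
  have hfm : ∀ x, |f x| ≤ |x| + m :=
    abs_sub_integral_le_of_lipschitzWith integrable_abs_gaussianReal hψ
  have hf0 : ∫ x, f x * exp (-x ^ 2 / 2) = 0 := by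
    refine integral_mul_exp_eq_zero_of_integral_gaussianReal ?_
    rw [hf_def, integral_sub (integrable_of_lipschitzWith integrable_abs_gaussianReal hψ)
      (integrable_const _)]
    simp
  exact ⟨steinSolution f, _, isSteinBounded_of_hasDerivAt hm hf hfm
    (abs_steinSolution_le hf.continuous hm hfm hf0)
    (hasDerivAt_steinSolution hf.continuous hfm), fun w => by ring⟩

end SteinBounds

/-! ### The Wasserstein bound -/

section Standardize

/-- The observable `f`, centred at its mean and divided by `s`. -/
def standardize {Ω : Type*} {_ : MeasurableSpace Ω} (μ : Measure Ω) (s : ℝ) (f : Ω → ℝ) (x : Ω) :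
    ℝ :=
  (f x - ∫ z, f z ∂μ) / s

variable {Ω : Type*} [Finite Ω] [MeasurableSpace Ω] [MeasurableSingletonClass Ω]
  {μ : Measure Ω}

lemma integral_abs_sub_integral_le [IsProbabilityMeasure μ] {f : Ω → ℝ} {a : ℝ} (ha : 0 ≤ a)
    (h : Var[f; μ] ≤ a ^ 2) :
    ∫ x, |f x - ∫ z, f z ∂μ| ∂μ ≤ a := by
  rw [variance_eq_integral .of_discrete] at h
  exact integral_abs_le_of_integral_sq_le ha h

lemma abs_integral_mul_le [IsFiniteMeasure μ] {f g : Ω → ℝ} {b : ℝ} (hg : ∀ x, |g x| ≤ b) :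
    |∫ x, f x * g x ∂μ| ≤ b * ∫ x, |f x| ∂μ := by
  rw [← integral_const_mul]
  refine abs_integral_le_integral_abs.trans (integral_mono .of_finite .of_finite fun x => ?_)
  simp only [abs_mul, mul_comm |f x|]
  exact mul_le_mul_of_nonneg_right (hg x) (abs_nonneg _)

lemma integral_one_add_abs_standardize_sq_le [IsProbabilityMeasure μ] (s : ℝ) (f : Ω → ℝ)
    (h : ℝ) :
    ∫ x, (1 + |standardize μ s f x| + h) ^ 2 ∂μ ≤ 2 * (1 + h) ^ 2 + 2 * (Var[f; μ] / s ^ 2) := by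
  calc _ ≤ ∫ x, (2 * (1 + h) ^ 2 + 2 / s ^ 2 * (f x - ∫ z, f z ∂μ) ^ 2) ∂μ :=
        integral_mono .of_finite .of_finite fun x => by
          have hsq := add_sq_le (a := 1 + h) (b := |standardize μ s f x|)
          rw [sq_abs, standardize, div_pow] at hsq
          rw [standardize]
          linear_combination hsq
    _ = _ := by
        rw [integral_add .of_finite .of_finite, integral_const, probReal_univ, one_smul,
          integral_const_mul, ← variance_eq_integral .of_discrete]
        ring

lemma abs_integral_comp_standardize_sub_le [IsFiniteMeasure μ] {ψ : ℝ → ℝ} (hψ : LipschitzWith 1 ψ)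
    {κ s : ℝ} (hκ : 0 < κ) (hs : 0 < s) (f g : Ω → ℝ) :
    |∫ x, ψ (standardize μ (κ * s) f x) ∂μ - ∫ x, ψ (standardize μ s g x) ∂μ| ≤
      (∫ x, |f x - κ * g x - ∫ z, (f z - κ * g z) ∂μ| ∂μ) / (κ * s) := by
  rw [← integral_sub .of_finite .of_finite, ← integral_div]
  refine abs_integral_le_integral_abs.trans (integral_mono .of_finite .of_finite fun x => ?_)
  refine (hψ.dist_le_mul _ _).trans_eq ?_
  rw [NNReal.coe_one, one_mul, Real.dist_eq, ← abs_of_pos (mul_pos hκ hs), ← abs_div,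
    abs_of_pos (mul_pos hκ hs), integral_sub .of_finite .of_finite, integral_const_mul,
    standardize, standardize]
  congr 1
  field_simp
  ring

variable {K U : ℝ} {g g' : ℝ → ℝ} {W : Ω → ℝ}

namespace IsSteinBounded

lemma abs_integral_mul_sub_sub_le [IsFiniteMeasure μ] (hg : IsSteinBounded K g g') {B : Ω → ℝ}
    {b h : ℝ} (hb : 0 ≤ b) (hB : ∀ x, |B x| ≤ b) (hh : 0 ≤ h)
    (hU : ∫ x, (1 + |W x| + h) ^ 2 ∂μ ≤ U) :
    |∫ x, B x * (g (W x) - g (W x - h) - h * g' (W x)) ∂μ| ≤ b * h ^ 2 * (K * U) := by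
  calc _ ≤ ∫ x, b * h ^ 2 * (K * (1 + |W x| + h) ^ 2) ∂μ := by
        refine abs_integral_le_integral_abs.trans
          (integral_mono .of_finite .of_finite fun x => ?_)
        simp only [abs_mul]
        refine (mul_le_mul (hB x) (hg.abs_sub_sub_le (W x) h hh) (abs_nonneg _) hb).trans_eq ?_
        ring
    _ = b * h ^ 2 * (K * ∫ x, (1 + |W x| + h) ^ 2 ∂μ) := by
        rw [integral_const_mul, integral_const_mul]
    _ ≤ _ := by
        have := hg.nonneg
        gcongr

lemma abs_integral_mul_deriv_le [IsFiniteMeasure μ] (hg : IsSteinBounded K g g') {D : Ω → ℝ}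
    {a h V : ℝ} (ha : 0 < a) (hh : 0 ≤ h) (hD : ∫ x, D x ^ 2 ∂μ ≤ V * a ^ 2)
    (hU : ∫ x, (1 + |W x| + h) ^ 2 ∂μ ≤ U) :
    |∫ x, D x * g' (W x) ∂μ| ≤ a * (K * (V + U)) := by
  have hK := hg.nonneg
  calc _ ≤ ∫ x, K * (D x ^ 2 / a + a * (1 + |W x| + h) ^ 2) ∂μ := by
        refine abs_integral_le_integral_abs.trans
          (integral_mono .of_finite .of_finite fun x => ?_)
        have hAMGM : |D x| * (1 + |W x| + h) ≤ D x ^ 2 / a + a * (1 + |W x| + h) ^ 2 := by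
          set u := 1 + |W x| + h
          have hsq : 0 ≤ (|D x| - a * u) ^ 2 / a := by positivity
          have hcross : 0 ≤ |D x| * u := by positivity
          have hexpand : (|D x| - a * u) ^ 2 / a = D x ^ 2 / a + a * u ^ 2 - 2 * (|D x| * u) := by
            rw [← sq_abs (D x)]
            field_simp
            ring
          linarith
        calc |D x * g' (W x)| ≤ |D x| * (K * (1 + |W x| + h)) := by
              rw [abs_mul]
              gcongr
              exact (hg.abs_deriv_le _).trans
                (mul_le_mul_of_nonneg_left (le_add_of_nonneg_right hh) hK)
          _ = K * (|D x| * (1 + |W x| + h)) := mul_left_comm _ _ _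
          _ ≤ _ := by gcongr
    _ = K * ((∫ x, D x ^ 2 ∂μ) / a + a * ∫ x, (1 + |W x| + h) ^ 2 ∂μ) := by
        rw [integral_const_mul, integral_add .of_finite .of_finite, integral_div,
          integral_const_mul]
    _ ≤ K * (V * a ^ 2 / a + a * U) := by gcongr
    _ = _ := by field_simp

end IsSteinBounded

end Standardize

section Exchange

variable {I : Type*} [Fintype I] {μ : Measure (I → Bool)} [IsFiniteMeasure μ]
  {σ : I → (I → Bool) → ℝ}

namespace IsCondProb

lemma integral_trueCount_sub_mul (M : IsCondProb μ σ) (φ : ℝ → ℝ) :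
    ∫ y, (trueCount y - ∑ s, σ s y) * φ (trueCount y) ∂μ =
      ∫ y, (∑ s, (1 - σ s y) * bval (y s)) * (φ (trueCount y) - φ (trueCount y - 1)) ∂μ := by
  classical
  have hsum (y : I → Bool) : (trueCount y - ∑ s, σ s y) * φ (trueCount y) =
      ∑ s, 1 * (bval (y s) - σ s y) * φ (trueCount y) := by
    simp only [one_mul, ← sum_mul, trueCount, sum_sub_distrib]
  simp only [hsum, sum_mul]
  rw [integral_finsetSum _ fun _ _ => .of_finite, integral_finsetSum _ fun _ _ => .of_finite]
  refine sum_congr rfl fun s _ => ?_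
  rw [M.integral_mul_eq_integral_mul_sub s (w := fun _ => 1) (fun _ _ _ => rfl)]
  refine integral_congr_ae (.of_forall fun y => ?_)
  rcases (y s).eq_false_or_eq_true with hys | hys
  · have hcount := trueCount_update_sub y s
    rw [← hys, Function.update_eq_self] at hcount
    have hprev : trueCount (Function.update y s false) = trueCount y - 1 := by linarith
    simp [bval, hys, hprev]
  · have hupd : Function.update y s false = y := by rw [← hys, Function.update_eq_self]
    simp [bval, hys, hupd]

lemma integral_sum_cond_sub_mul_trueCount (M : IsCondProb μ σ) (ρ : ℝ) :
    ∫ y, (∑ t, σ t y - ρ * trueCount y) ∂μ = (1 - ρ) * ∫ y, trueCount y ∂μ := by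
  have hzero := M.integral_trueCount_sub_mul fun _ => 1
  simp only [mul_one, sub_self, mul_zero, integral_zero] at hzero
  rw [integral_sub .of_finite .of_finite] at hzero
  rw [integral_sub .of_finite .of_finite, integral_const_mul]
  linear_combination -hzero

/- The linear part `ρ * trueCount` of `∑ t, σ t` is what turns `s * W` into `(1 - ρ) * s * W`. -/
lemma mul_integral_standardize_mul (M : IsCondProb μ σ) {ρ s : ℝ} (hs : s ≠ 0) (g : ℝ → ℝ) :
    (1 - ρ) * s * ∫ y, standardize μ s trueCount y * g (standardize μ s trueCount y) ∂μ =
      ∫ y, (∑ t, σ t y - ρ * trueCount y - ∫ z, (∑ t, σ t z - ρ * trueCount z) ∂μ) *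
          g (standardize μ s trueCount y) ∂μ +
        ∫ y, (∑ t, (1 - σ t y) * bval (y t)) *
          (g (standardize μ s trueCount y) - g (standardize μ s trueCount y - s⁻¹)) ∂μ := by
  rw [M.integral_sum_cond_sub_mul_trueCount]
  set m := ∫ y, trueCount y ∂μ
  have hW (y : I → Bool) : standardize μ s trueCount y = (trueCount y - m) / s := rfl
  have hstep (y : I → Bool) : (trueCount y - m) / s - s⁻¹ = (trueCount y - 1 - m) / s := by ring
  simp only [hW, hstep]
  rw [← M.integral_trueCount_sub_mul fun x => g ((x - m) / s),
    ← integral_add .of_finite .of_finite, ← integral_const_mul]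
  refine integral_congr_ae (.of_forall fun y => ?_)
  have hcentre : s * ((trueCount y - m) / s) = trueCount y - m := mul_div_cancel₀ _ hs
  linear_combination (1 - ρ) * g ((trueCount y - m) / s) * hcentre

lemma mul_integral_sub_standardize_mul (M : IsCondProb μ σ) {ρ s v : ℝ} (hs : s ≠ 0)
    (hv : (1 - ρ) * s ^ 2 = v) (g g' : ℝ → ℝ) :
    (1 - ρ) * s * ∫ y, (g' (standardize μ s trueCount y) -
        standardize μ s trueCount y * g (standardize μ s trueCount y)) ∂μ =
      -(∫ y, (∑ t, σ t y - ρ * trueCount y - ∫ z, (∑ t, σ t z - ρ * trueCount z) ∂μ) *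
          g (standardize μ s trueCount y) ∂μ +
        ∫ y, (∑ t, (1 - σ t y) * bval (y t)) * (g (standardize μ s trueCount y) -
          g (standardize μ s trueCount y - s⁻¹) - s⁻¹ * g' (standardize μ s trueCount y)) ∂μ +
        s⁻¹ * ∫ y, (∑ t, (1 - σ t y) * bval (y t) - v) *
          g' (standardize μ s trueCount y) ∂μ) := by
  set W := standardize μ s trueCount
  have hsplit : ∫ y, (∑ t, (1 - σ t y) * bval (y t)) * (g (W y) - g (W y - s⁻¹)) ∂μ =
      ∫ y, (∑ t, (1 - σ t y) * bval (y t)) * (g (W y) - g (W y - s⁻¹) - s⁻¹ * g' (W y)) ∂μ +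
        (s⁻¹ * ∫ y, (∑ t, (1 - σ t y) * bval (y t) - v) * g' (W y) ∂μ +
          (1 - ρ) * s * ∫ y, g' (W y) ∂μ) := by
    rw [← integral_const_mul, ← integral_const_mul, ← integral_add .of_finite .of_finite,
      ← integral_add .of_finite .of_finite]
    refine integral_congr_ae (.of_forall fun y => ?_)
    linear_combination (1 - ρ) * s * g' (W y) * inv_mul_cancel₀ hs - s⁻¹ * g' (W y) * hv
  rw [integral_sub .of_finite .of_finite, mul_sub, M.mul_integral_standardize_mul hs, hsplit]
  ring

end IsCondProb

end Exchange

section SteinError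

variable {I : Type*} [Fintype I] [DecidableEq I] {p ρ κ C l c s : ℝ} {n : ℕ}
  {μ : Measure (I → Bool)} {σ : I → (I → Bool) → ℝ} {Γ : Set (I → Bool)} {F : (I → Bool) → ℝ}

/-- The constant in the bound for the second moment of `1 + |W| + s⁻¹`, where `W` is the edge
count standardized by `s` and `c * n ≤ s`. -/
def momentConst (ρ C c : ℝ) : ℝ :=
  2 * (1 + 1 / c) ^ 2 + 2 * (varConst ρ C / c ^ 2)

/-- The constant in the bound for the standard deviation of an observable bounded by `b * n ^ 2`
whose increments in the good set are at most `C * l`. -/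
def residualConst (ρ C b : ℝ) : ℝ :=
  √(C ^ 2 * varConst ρ C + 3 * (2 * b + C) ^ 2 * C)

/-- The constant in the bound for the error in Stein's equation for the edge count. -/
def steinErrorConst (K ρ C c : ℝ) : ℝ :=
  K * (residualConst ρ C (1 + |ρ|) + momentConst ρ C c / c ^ 2 +
    (6 * (C ^ 2 + C) + 4 * (1 + C) + momentConst ρ C c) / c) / ((1 - ρ) * c)

namespace IsApproxAffine

variable (A : IsApproxAffine p ρ κ C l n μ σ Γ F)
include A

lemma abs_sum_one_sub_cond_mul_le (y : I → Bool) :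
    |∑ t, (1 - σ t y) * bval (y t)| ≤ (n : ℝ) ^ 2 := by
  have hterm (t : I) : (1 - σ t y) * bval (y t) ∈ Set.Icc (0 : ℝ) 1 := by
    obtain ⟨h0, h1⟩ := A.isCondProb.mem_Icc t y
    exact ⟨mul_nonneg (sub_nonneg.2 h1) (bval_nonneg _),
      mul_le_one₀ (sub_le_self _ h0) (bval_nonneg _) (bval_le_one _)⟩
  rw [abs_of_nonneg (sum_nonneg fun t _ => (hterm t).1)]
  calc _ ≤ ∑ _t : I, (1 : ℝ) := sum_le_sum fun t _ => (hterm t).2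
    _ = Fintype.card I := by simp
    _ ≤ _ := A.card_le

lemma cast_mul_inv_le (hc : 0 < c) (hcs : c * n ≤ s) : n * s⁻¹ ≤ 1 / c := by
  have hs : 0 < s := (mul_pos hc A.n_pos).trans_le hcs
  rw [← div_eq_mul_inv, div_le_div_iff₀ hs hc, one_mul, mul_comm]
  exact hcs

lemma sqrt_mul_le_sqrt_card_mul {a : ℝ} (ha : 0 ≤ a) :
    √(a / 4) * n ≤ √(Fintype.card I * a) := by
  rw [← sqrt_sq A.n_pos.le, ← sqrt_mul (by positivity)]
  refine sqrt_le_sqrt ?_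
  linarith [mul_le_mul_of_nonneg_right A.le_card ha]

variable [IsProbabilityMeasure μ]

lemma varConst_nonneg (hρ : ρ < 1) : 0 ≤ varConst ρ C :=
  nonneg_of_mul_nonneg_left ((variance_nonneg _ _).trans (A.variance_trueCount_le hρ))
    (pow_pos A.n_pos 2)

lemma le_sq_residualConst (hρ : ρ < 1) (b : ℝ) :
    C ^ 2 * l ^ 2 * Var[trueCount; μ] + 3 * (2 * b + C) ^ 2 * C * l ^ 2 ≤
      (residualConst ρ C b * (l * n)) ^ 2 := by
  have hC := A.C_nonneg
  have hvar := A.varConst_nonneg hρ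
  have hn : (1 : ℝ) ≤ n := by exact_mod_cast one_le_two.trans A.two_le
  calc C ^ 2 * l ^ 2 * Var[trueCount; μ] + 3 * (2 * b + C) ^ 2 * C * l ^ 2
      ≤ C ^ 2 * l ^ 2 * (varConst ρ C * (n : ℝ) ^ 2) +
          3 * (2 * b + C) ^ 2 * C * l ^ 2 * (n : ℝ) ^ 2 :=
        add_le_add (mul_le_mul_of_nonneg_left (A.variance_trueCount_le hρ) (by positivity))
          (le_mul_of_one_le_right (by positivity) (one_le_pow₀ hn))
    _ = _ := by
        rw [mul_pow, residualConst, sq_sqrt (by positivity)]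
        ring

lemma integral_abs_sum_cond_sub_le (hρ : ρ < 1) :
    ∫ y, |∑ t, σ t y - ρ * trueCount y - ∫ z, (∑ t, σ t z - ρ * trueCount z) ∂μ| ∂μ ≤
      residualConst ρ C (1 + |ρ|) * (l * n) :=
  integral_abs_sub_integral_le
    (mul_nonneg (sqrt_nonneg _) (mul_nonneg A.scale_pos.le A.n_pos.le))
    (A.variance_sum_cond_sub_le.trans (A.le_sq_residualConst hρ _))

lemma integral_abs_sub_mul_trueCount_le (hρ : ρ < 1) :
    ∫ y, |F y - κ * trueCount y - ∫ z, (F z - κ * trueCount z) ∂μ| ∂μ ≤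
      residualConst ρ C (C + |κ|) * (l * n) :=
  integral_abs_sub_integral_le
    (mul_nonneg (sqrt_nonneg _) (mul_nonneg A.scale_pos.le A.n_pos.le))
    (A.variance_sub_mul_trueCount_le.trans (A.le_sq_residualConst hρ _))

lemma integral_one_add_abs_trueCount_sq_le (hρ : ρ < 1) (hc : 0 < c) (hcs : c * n ≤ s) :
    ∫ y, (1 + |standardize μ s trueCount y| + s⁻¹) ^ 2 ∂μ ≤ momentConst ρ C c := by
  have hn := A.n_pos
  have hn1 : (1 : ℝ) ≤ n := by exact_mod_cast one_le_two.trans A.two_le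
  have hs : 0 < s := (mul_pos hc hn).trans_le hcs
  have hvar := A.varConst_nonneg hρ
  have hinv := A.cast_mul_inv_le hc hcs
  have hstep : s⁻¹ ≤ 1 / c := (le_mul_of_one_le_left (inv_nonneg.2 hs.le) hn1).trans hinv
  have hratio : Var[trueCount; μ] / s ^ 2 ≤ varConst ρ C / c ^ 2 :=
    calc Var[trueCount; μ] / s ^ 2 ≤ varConst ρ C * (n : ℝ) ^ 2 / s ^ 2 := by
          gcongr
          exact A.variance_trueCount_le hρ
      _ = varConst ρ C * (n * s⁻¹) ^ 2 := by ring
      _ ≤ varConst ρ C * (1 / c) ^ 2 := by gcongr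
      _ = _ := by ring
  refine (integral_one_add_abs_standardize_sq_le s trueCount s⁻¹).trans ?_
  rw [momentConst]
  gcongr ?_ + ?_
  · gcongr
  · exact mul_le_mul_of_nonneg_left hratio zero_le_two

variable {K : ℝ} {g g' : ℝ → ℝ}

lemma abs_integral_taylor_le (hg : IsSteinBounded K g g') (hρ : ρ < 1) (hc : 0 < c)
    (hcs : c * n ≤ s) :
    |∫ y, (∑ t, (1 - σ t y) * bval (y t)) * (g (standardize μ s trueCount y) -
        g (standardize μ s trueCount y - s⁻¹) - s⁻¹ * g' (standardize μ s trueCount y)) ∂μ| ≤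
      K * (momentConst ρ C c / c ^ 2) * (l * n) := by
  have hn := A.n_pos
  have hs : 0 < s := (mul_pos hc hn).trans_le hcs
  have hKU : 0 ≤ K * momentConst ρ C c := by
    have hvar := A.varConst_nonneg hρ
    have hK := hg.nonneg
    unfold momentConst
    positivity
  calc _ ≤ (n : ℝ) ^ 2 * s⁻¹ ^ 2 * (K * momentConst ρ C c) :=
        hg.abs_integral_mul_sub_sub_le (by positivity) A.abs_sum_one_sub_cond_mul_le
          (inv_nonneg.2 hs.le) (A.integral_one_add_abs_trueCount_sq_le hρ hc hcs)
    _ ≤ (1 / c) ^ 2 * (K * momentConst ρ C c) := by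
        rw [← mul_pow]
        gcongr
        exact A.cast_mul_inv_le hc hcs
    _ ≤ (1 / c) ^ 2 * (K * momentConst ρ C c) * (l * n) :=
        le_mul_of_one_le_right (by positivity) A.one_le_scale_mul
    _ = _ := by ring

lemma abs_inv_mul_integral_sub_mul_deriv_le (hg : IsSteinBounded K g g')
    (hp : p ∈ Set.Icc (0 : ℝ) 1) (hρ : ρ < 1) (hc : 0 < c) (hcs : c * n ≤ s) :
    |s⁻¹ * ∫ y, (∑ t, (1 - σ t y) * bval (y t) - p * (1 - p) * Fintype.card I) *
        g' (standardize μ s trueCount y) ∂μ| ≤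
      K * ((6 * (C ^ 2 + C) + 4 * (1 + C) + momentConst ρ C c) / c) * (l * n) := by
  have hn := A.n_pos
  have hl := A.scale_pos
  have hC := A.C_nonneg
  have hs : 0 < s := (mul_pos hc hn).trans_le hcs
  have hvar := A.varConst_nonneg hρ
  have hK := hg.nonneg
  set V := 6 * (C ^ 2 + C) + 4 * (1 + C)
  have hKU : 0 ≤ K * (V + momentConst ρ C c) := by unfold momentConst; positivity
  rw [abs_mul, abs_of_pos (inv_pos.2 hs)]
  calc _ ≤ s⁻¹ * (l * (n : ℝ) ^ 2 * (K * (V + momentConst ρ C c))) := by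
        gcongr
        exact hg.abs_integral_mul_deriv_le (by positivity) (inv_nonneg.2 hs.le)
          (A.integral_sq_sum_one_sub_cond_mul_le hp)
          (A.integral_one_add_abs_trueCount_sq_le hρ hc hcs)
    _ = n * s⁻¹ * (K * (V + momentConst ρ C c)) * (l * n) := by ring
    _ ≤ 1 / c * (K * (V + momentConst ρ C c)) * (l * n) := by
        gcongr
        exact A.cast_mul_inv_le hc hcs
    _ = _ := by ring

lemma abs_integral_stein_le (hg : IsSteinBounded K g g') (hp : p ∈ Set.Icc (0 : ℝ) 1) (hρ : ρ < 1)
    (hc : 0 < c) (hcs : c * n ≤ s) (hv : (1 - ρ) * s ^ 2 = p * (1 - p) * Fintype.card I) :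
    |∫ y, (g' (standardize μ s trueCount y) -
        standardize μ s trueCount y * g (standardize μ s trueCount y)) ∂μ| ≤
      steinErrorConst K ρ C c * l := by
  have hρ' := sub_pos.2 hρ
  have hs : 0 < s := (mul_pos hc A.n_pos).trans_le hcs
  have hlin : |∫ y, (∑ t, σ t y - ρ * trueCount y - ∫ z, (∑ t, σ t z - ρ * trueCount z) ∂μ) *
      g (standardize μ s trueCount y) ∂μ| ≤ K * residualConst ρ C (1 + |ρ|) * (l * n) := by
    rw [mul_assoc]
    exact (abs_integral_mul_le fun y => hg.abs_le _).trans
      (mul_le_mul_of_nonneg_left (A.integral_abs_sum_cond_sub_le hρ) hg.nonneg)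
  have htaylor := A.abs_integral_taylor_le hg hρ hc hcs
  have hderiv := A.abs_inv_mul_integral_sub_mul_deriv_le hg hp hρ hc hcs
  have hexch := congrArg abs (A.isCondProb.mul_integral_sub_standardize_mul hs.ne' hv g g')
  rw [abs_mul, abs_of_pos (mul_pos hρ' hs), abs_neg] at hexch
  have htotal := hexch.trans_le ((abs_add_three _ _ _).trans
    (add_le_add (add_le_add hlin htaylor) hderiv))
  have hscale := mul_le_mul_of_nonneg_right (mul_le_mul_of_nonneg_left hcs hρ'.le)
    (abs_nonneg (∫ y, (g' (standardize μ s trueCount y) -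
      standardize μ s trueCount y * g (standardize μ s trueCount y)) ∂μ))
  refine le_of_mul_le_mul_left ((hscale.trans htotal).trans_eq ?_)
    (mul_pos hρ' (mul_pos hc A.n_pos))
  rw [steinErrorConst]
  field_simp

lemma abs_integral_comp_sub_integral_comp_le {ψ : ℝ → ℝ} (hψ : LipschitzWith 1 ψ) (hρ : ρ < 1)
    (hκ : 0 < κ) (hc : 0 < c) (hcs : c * n ≤ s) :
    |∫ y, ψ (standardize μ (κ * s) F y) ∂μ - ∫ y, ψ (standardize μ s trueCount y) ∂μ| ≤
      residualConst ρ C (C + |κ|) / (κ * c) * l := by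
  have hn := A.n_pos
  have hl := A.scale_pos
  have hs : 0 < s := (mul_pos hc hn).trans_le hcs
  have hres : 0 ≤ residualConst ρ C (C + |κ|) := sqrt_nonneg _
  calc _ ≤ residualConst ρ C (C + |κ|) * (l * n) / (κ * s) := by
        refine (abs_integral_comp_standardize_sub_le hψ hκ hs F trueCount).trans ?_
        gcongr
        exact A.integral_abs_sub_mul_trueCount_le hρ
    _ ≤ residualConst ρ C (C + |κ|) * (l * n) / (κ * (c * n)) := by gcongr
    _ = _ := by field_simp

end IsApproxAffine

theorem exists_wasserstein_bound (hp : p ∈ Set.Ioo (0 : ℝ) 1) (hρ : ρ < 1) (hκ : 0 < κ) (C : ℝ) :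
    ∃ K, 0 ≤ K ∧ ∀ {I : Type*} [Fintype I] [DecidableEq I] {l : ℝ} {n : ℕ}
      {μ : Measure (I → Bool)} [IsProbabilityMeasure μ] {σ : I → (I → Bool) → ℝ}
      {Γ : Set (I → Bool)} {F : (I → Bool) → ℝ}, IsApproxAffine p ρ κ C l n μ σ Γ F →
      ∀ ψ : ℝ → ℝ, LipschitzWith 1 ψ →
        |∫ y, ψ (standardize μ (κ * √(Fintype.card I * (p * (1 - p) / (1 - ρ)))) F y) ∂μ -
          ∫ z, ψ z ∂gaussianReal 0 1| ≤ K * l := by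
  obtain ⟨K, -, hK⟩ := exists_stein_bound
  have hρ' := sub_pos.2 hρ
  have ha : 0 < p * (1 - p) / (1 - ρ) := div_pos (mul_pos hp.1 (sub_pos.2 hp.2)) hρ'
  set a := p * (1 - p) / (1 - ρ) with ha_def
  refine ⟨|residualConst ρ C (C + |κ|) / (κ * √(a / 4)) + steinErrorConst K ρ C √(a / 4)|,
    abs_nonneg _, fun {I} _ _ {l n μ} _ {σ Γ F} A ψ hψ => ?_⟩
  obtain ⟨g, g', hg, hstein⟩ := hK ψ hψ
  have hc : 0 < √(a / 4) := by positivity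
  have hcs := A.sqrt_mul_le_sqrt_card_mul ha.le
  have hv : (1 - ρ) * √(Fintype.card I * a) ^ 2 = p * (1 - p) * Fintype.card I := by
    rw [sq_sqrt (by positivity), ha_def]
    field_simp
  have hcount := A.abs_integral_stein_le hg ⟨hp.1.le, hp.2.le⟩ hρ hc hcs hv
  simp only [hstein] at hcount
  rw [integral_sub .of_finite (integrable_const _), integral_const, probReal_univ,
    one_smul] at hcount
  refine (abs_sub_le _ _ _).trans ((add_le_add
    (A.abs_integral_comp_sub_integral_comp_le hψ hρ hκ hc hcs) hcount).trans ?_)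
  rw [← add_mul]
  exact mul_le_mul_of_nonneg_right (le_abs_self _) A.scale_pos.le

end SteinError

/-! ### Subgraph counts of the ERGM -/

section SubgraphCount

variable {k : ℕ} {β : Fin (k + 1) → ℝ} {v : Fin (k + 1) → ℕ}
  {H : ∀ j : Fin (k + 1), SimpleGraph (Fin (v j))} {p : ℝ}

lemma sigmaSq_eq_of_phiFn_eq (hfix : phiFn β v H p = p) (n : ℕ) :
    sigmaSq β v H p n =
      Fintype.card (EdgeIdx n) * (p * (1 - p) / (1 - deriv (phiFn β v H) p)) := by
  rw [sigmaSq, EdgeIdx.cast_card, deriv_phiFn β v H hfix]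
  ring

lemma standardize_homScale_mul {m n : ℕ} (κ s : ℝ) (f : (EdgeIdx n → Bool) → ℝ)
    (y : EdgeIdx n → Bool) :
    standardize (ergmMeasure β v H n) (κ * s) (fun y => homScale m n * f y) y =
      (f y - ergmExp β v H n f) / ((n : ℝ) ^ ((m : ℤ) - 2) * (κ * s)) := by
  have hscale : homScale m n = ((n : ℝ) ^ ((m : ℤ) - 2))⁻¹ := by
    rw [homScale, ← zpow_neg, neg_sub]
  rw [standardize, integral_const_mul, integral_ergmMeasure, ← mul_sub, hscale, inv_mul_eq_div,
    div_div]

lemma rpow_neg_one_div_four_pow_four {x : ℝ} (hx : 0 ≤ x) : (x ^ (-(1 / 4 : ℝ))) ^ 4 = 1 / x := by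
  rw [← rpow_natCast, ← rpow_mul hx]
  norm_num [rpow_neg_one]

theorem ergm_subgraph_count_clt_general (hβ : ∀ j, 2 ≤ eCount (H j) → 0 ≤ β j)
    (hp : p ∈ Set.Ioo (0 : ℝ) 1) (hfix : phiFn β v H p = p)
    (huniq : ∀ q ∈ Set.Ioo (0 : ℝ) 1, phiFn β v H q = q → q = p)
    (hsub : deriv (phiFn β v H) p < 1)
    {vH : ℕ} (Hg : SimpleGraph (Fin vH)) (hHe : 1 ≤ eCount Hg) :
    ∃ C : ℝ, 0 < C ∧ ∀ n : ℕ, 2 ≤ n → ∀ ψ : ℝ → ℝ, LipschitzWith 1 ψ →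
      |(∑ y : EdgeIdx n → Bool, ergmProb β v H n y *
            ψ (((homCount Hg y : ℝ) -
                  ergmExp β v H n (fun y' => (homCount Hg y' : ℝ))) /
                (2 * (n : ℝ) ^ ((vH : ℤ) - 2) * (eCount Hg : ℝ) *
                  p ^ (eCount Hg - 1) * Real.sqrt (sigmaSq β v H p n)))) -
          ∫ z, ψ z ∂(gaussianReal 0 1)| ≤ C * (n : ℝ) ^ (-(1 / 4 : ℝ)) := by
  have hκ : 0 < 2 * (eCount Hg : ℝ) * p ^ (eCount Hg - 1) :=
    mul_pos (mul_pos two_pos (Nat.cast_pos.2 hHe)) (pow_pos hp.1 _)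
  obtain ⟨C, hC⟩ := exists_isApproxAffine Hg hβ hp hfix huniq hsub
  obtain ⟨K, hK, hbound⟩ := exists_wasserstein_bound hp hsub hκ C
  refine ⟨K + 1, by positivity, fun n hn ψ hψ => ?_⟩
  have hn0 : (0 : ℝ) < n := by exact_mod_cast zero_lt_two.trans_le hn
  obtain ⟨Γ, A⟩ := hC n hn _ (rpow_pos_of_pos hn0 _) (rpow_neg_one_div_four_pow_four hn0.le)
  have hclt := hbound A ψ hψ
  simp only [integral_ergmMeasure, ← sigmaSq_eq_of_phiFn_eq hfix, standardize_homScale_mul] at hclt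
  have hden (x y z s : ℝ) : 2 * x * y * z * s = x * (2 * y * z * s) := by ring
  simp only [hden]
  exact hclt.trans (mul_le_mul_of_nonneg_right (by linarith) (by positivity))

end SubgraphCount

/-- **Corollary 3.4**: CLT with rate `n^{-1/4}`, in the Wasserstein distance, for general
standardized subgraph counts of an ERGM in the subcritical region. -/
theorem ergm_subgraph_count_clt {k : ℕ} (β : Fin (k + 1) → ℝ) (v : Fin (k + 1) → ℕ)
    (H : ∀ j : Fin (k + 1), SimpleGraph (Fin (v j)))
    -- `β₂, …, β_k > 0`
    (hβ : ∀ j : Fin (k + 1), j ≠ 0 → 0 < β j)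
    -- `H₁` is a single edge
    (hv0 : v 0 = 2) (he0 : eCount (H 0) = 1)
    -- the graphs have no isolated vertices
    (hnoiso : ∀ (j : Fin (k + 1)) (a : Fin (v j)), ∃ b, (H j).Adj a b)
    -- `H₂, …, H_k` have at least two edges
    (hedges : ∀ j : Fin (k + 1), j ≠ 0 → 2 ≤ eCount (H j))
    -- the subcritical region: unique fixed point `p ∈ (0,1)` with `φ_β'(p) < 1`
    (p : ℝ) (hp : p ∈ Set.Ioo (0 : ℝ) 1)
    (hfix : phiFn β v H p = p)
    (huniq : ∀ q ∈ Set.Ioo (0 : ℝ) 1, phiFn β v H q = q → q = p)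
    (hsub : deriv (phiFn β v H) p < 1)
    -- the fixed subgraph `H` with `v` vertices and `e ≥ 1` edges
    (vH : ℕ) (Hg : SimpleGraph (Fin vH)) (hHe : 1 ≤ eCount Hg) :
    ∃ C : ℝ, 0 < C ∧ ∀ n : ℕ, 2 ≤ n → ∀ ψ : ℝ → ℝ, LipschitzWith 1 ψ →
      |(∑ y : EdgeIdx n → Bool, ergmProb β v H n y *
            ψ (((homCount Hg y : ℝ) -
                  ergmExp β v H n (fun y' => (homCount Hg y' : ℝ))) /
                (2 * (n : ℝ) ^ ((vH : ℤ) - 2) * (eCount Hg : ℝ) *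
                  p ^ (eCount Hg - 1) * Real.sqrt (sigmaSq β v H p n)))) -
          ∫ z, ψ z ∂(gaussianReal 0 1)| ≤ C * (n : ℝ) ^ (-(1 / 4 : ℝ)) := by
  refine ergm_subgraph_count_clt_general (fun j hj => (hβ j ?_).le) hp hfix huniq hsub Hg hHe
  rintro rfl
  omega
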